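/- For every integer a ≥ 4 and general lines L_1,…,L_6 in P^3 (i.e., there exists a nonzero polynomial P in the 48 coordinates of spanning vectors a_1,b_1,…,a_6,b_6 ∈ ℂ^4 such that whenever P does not vanish, each pair a_i,b_i is linearly independent, the subspaces L_i = span{a_i,b_i} pairwise intersect only in 0, and the following holds): the ℂ-vector space of homogeneous polynomials F of degree 19a − 72 in ℂ[x_0,x_1,x_2,x_3] with F ∈ I(L_i)^{5a−19} for all i = 1,…,6 has dimension at least binom(a+3,3) − 6(a+1). (This is obtained by applying the Todd transformation to the nonspecial system of surfaces of degree a through the six lines, and for a large enough it produces infinitely many unexpected systems.) -/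

import Mathlib

open MvPolynomial

noncomputable section

abbrev C4 : Type := Fin 4 → ℂ
abbrev R3 : Type := MvPolynomial (Fin 4) ℂ

/-- The homogeneous ideal of the line in `P^3` corresponding to a linear subspace
`L ⊆ ℂ^4`: all polynomials vanishing identically on `L`. -/
def lineIdeal (L : Submodule ℂ C4) : Ideal R3 where
  carrier := {F | ∀ v ∈ L, eval v F = 0}
  add_mem' := by
    intro a b ha hb v hv
    simp [ha v hv, hb v hv]
  zero_mem' := by
    intro v hv
    simp
  smul_mem' := by
    intro c F hF v hv
    simp [smul_eq_mul, hF v hv]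

/-- The linear system `𝓛_d(m_1, …, m_s)`: homogeneous forms of degree `d`
vanishing to order `m i` along the line `L i`, as a `ℂ`-subspace. -/
def linSys (d : ℕ) {s : ℕ} (L : Fin s → Submodule ℂ C4) (m : Fin s → ℕ) :
    Submodule ℂ R3 :=
  homogeneousSubmodule (Fin 4) ℂ d ⊓
    ⨅ i, Submodule.restrictScalars ℂ ((lineIdeal (L i)) ^ (m i))

/-- A property `Q` holds for `s` *general* lines in `P^3`: there is a nonzero
polynomial `P` in the `8s` coordinates of spanning vectors such that whenever
`P` does not vanish, each pair of vectors is linearly independent, the spanned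
planes are pairwise disjoint, and `Q` holds for these lines. -/
def GeneralLines (s : ℕ) (Q : (Fin s → Submodule ℂ C4) → Prop) : Prop :=
  ∃ P : MvPolynomial (Fin s × Fin 2 × Fin 4) ℂ, P ≠ 0 ∧
    ∀ v : Fin s → Fin 2 → C4,
      MvPolynomial.eval (fun p => v p.1 p.2.1 p.2.2) P ≠ 0 →
      (∀ i, LinearIndependent ℂ ![v i 0, v i 1]) ∧
      (∀ i j, i ≠ j →
        Submodule.span ℂ {v i 0, v i 1} ⊓ Submodule.span ℂ {v j 0, v j 1} = ⊥) ∧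
      Q (fun i => Submodule.span ℂ {v i 0, v i 1})

/-!
Six general lines of `P³` with joining planes `pᵢ` to the generic point carry points `sᵢ`, with
coordinates of degree `7`, such that `∑ sᵢ ⊗ pᵢ = 0`. The four-term relations between the `sᵢ` show
that `sᵢ ∧ sⱼ ∧ sₖ`, up to sign, is the product of the equation `Q` of the quadric containing the
three other lines and of a vector `T` of forms independent of `i`, `j`, `k`. This vector is the Todd
transformation to the dual `P³`, of degree `19`.

The equations of the dual line of `v j` are the values at `v j 0` and `v j 1`. Evaluated at `T`,
they are divisible by a form `E j`, and the product of the `E j` has degree `72`. So a form `F` of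
degree `a` containing the six dual lines pulls back to a multiple of that product, and the quotient
has degree `19a - 72` and multiplicity `5a - 19` along each line. The forms `F` are cut out by
`6(a + 1)` linear conditions.

Pulling back is injective for general lines: this is an open condition on the lines, since it is the
linear independence of the monomials of degree `a` in the coordinates of `T`, and it holds for
special lines for which `Q T` is proportional to an explicit quadratic Cremona transformation.
-/

namespace ToddTransformation

open Matrix

section Bracket

variable {B B' : Type*} [CommRing B] [CommRing B']

/-- The bracket `[a b c d]` of four points of `P³`; over a field it vanishes iff they are
coplanar. -/
def bracket (a b c d : Fin 4 → B) : B := (Matrix.of ![a, b, c, d]).det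

theorem bracket_eq (a b c d : Fin 4 → B) :
    bracket a b c d =
      (a 0 * b 1 - a 1 * b 0) * (c 2 * d 3 - c 3 * d 2)
      - (a 0 * b 2 - a 2 * b 0) * (c 1 * d 3 - c 3 * d 1)
      + (a 0 * b 3 - a 3 * b 0) * (c 1 * d 2 - c 2 * d 1)
      + (a 1 * b 2 - a 2 * b 1) * (c 0 * d 3 - c 3 * d 0)
      - (a 1 * b 3 - a 3 * b 1) * (c 0 * d 2 - c 2 * d 0)
      + (a 2 * b 3 - a 3 * b 2) * (c 0 * d 1 - c 1 * d 0) := by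
  simp [bracket, det_succ_row_zero, Fin.sum_univ_succ, Fin.succAbove]
  ring

theorem map_bracket (f : B →+* B') (a b c d : Fin 4 → B) :
    f (bracket a b c d) = bracket (f ∘ a) (f ∘ b) (f ∘ c) (f ∘ d) := by
  simp [bracket_eq]

theorem bracket_mul_dotProduct (a b c d x y : Fin 4 → B) :
    bracket a b c d * (y ⬝ᵥ x) =
      bracket x b c d * (y ⬝ᵥ a) + bracket a x c d * (y ⬝ᵥ b)
        + bracket a b x d * (y ⬝ᵥ c) + bracket a b c x * (y ⬝ᵥ d) := by
  simp only [bracket_eq, dotProduct, Fin.sum_univ_four]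
  ring

/-- The coordinates of the plane through three points, normalised by
`cross3 a b c ⬝ᵥ d = bracket a b c d`. -/
def cross3 (a b c : Fin 4 → B) : Fin 4 → B := fun k => bracket a b c (Pi.single k 1)

theorem cross3_dotProduct (a b c d : Fin 4 → B) : cross3 a b c ⬝ᵥ d = bracket a b c d := by
  simp [cross3, bracket_eq, dotProduct, Fin.sum_univ_four, Pi.single_apply]
  ring

theorem map_cross3 (f : B →+* B') (a b c : Fin 4 → B) :
    f ∘ cross3 a b c = cross3 (f ∘ a) (f ∘ b) (f ∘ c) := by
  funext k
  simp [cross3, bracket_eq, Pi.single_apply, apply_ite f]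

theorem cross3_swap_left (a b c : Fin 4 → B) : cross3 b a c = -cross3 a b c := by
  funext k
  simp only [cross3, bracket_eq, Pi.neg_apply]
  ring

theorem cross3_swap_right (a b c : Fin 4 → B) : cross3 a c b = -cross3 a b c := by
  funext k
  simp only [cross3, bracket_eq, Pi.neg_apply]
  ring

theorem cross3_smul (x y z : B) (a b c : Fin 4 → B) :
    cross3 (x • a) (y • b) (z • c) = (x * y * z) • cross3 a b c := by
  funext k
  simp only [cross3, bracket_eq, Pi.smul_apply, smul_eq_mul]
  ring

theorem cross3_mul_comm_of_dotProduct_eq_zero {a b c t : Fin 4 → B}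
    (ha : t ⬝ᵥ a = 0) (hb : t ⬝ᵥ b = 0) (hc : t ⬝ᵥ c = 0) (k l : Fin 4) :
    cross3 a b c k * t l = cross3 a b c l * t k := by
  simpa [cross3, ha, hb, hc] using
    bracket_mul_dotProduct a b c (Pi.single k 1) (Pi.single l 1) t

theorem smul_cross3_of_relation {x y z w : B} {a b c d : Fin 4 → B}
    (h : x • a + y • b + z • c + w • d = 0) :
    x • cross3 a b c = -(w • cross3 d b c) := by
  funext k
  have hlin : cross3 (x • a + y • b + z • c + w • d) b c k =
      x * cross3 a b c k + w * cross3 d b c k := by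
    simp only [cross3, bracket_eq, Pi.add_apply, Pi.smul_apply, smul_eq_mul]
    ring
  have hzero : cross3 0 b c k = 0 := by simp [cross3, bracket_eq]
  rw [h, hzero] at hlin
  simp only [Pi.smul_apply, Pi.neg_apply, smul_eq_mul]
  linear_combination -hlin

end Bracket

section Lines

variable {B B' : Type*} [CommRing B] [CommRing B']

/-- The point with coordinates `t` on the line spanned by `w 0` and `w 1`. -/
def linePt (w : Fin 2 → Fin 4 → B) (t : Fin 2 → B) : Fin 4 → B := t 0 • w 0 + t 1 • w 1

theorem linePt_smul (w : Fin 2 → Fin 4 → B) (c : B) (t : Fin 2 → B) :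
    linePt w (c • t) = c • linePt w t := by
  simp [linePt, mul_smul]

theorem linePt_zero (w : Fin 2 → Fin 4 → B) : linePt w 0 = 0 := by simp [linePt]

theorem map_linePt (f : B →+* B') (w : Fin 2 → Fin 4 → B) (t : Fin 2 → B) :
    f ∘ linePt w t = linePt (fun c => f ∘ w c) (f ∘ t) := by
  funext k
  simp [linePt]

/-- The bracket of the line `w` with two points. In particular `lineBracket w (w' 0) (w' 1)`
vanishes iff the lines `w` and `w'` meet. -/
def lineBracket (w : Fin 2 → Fin 4 → B) (x y : Fin 4 → B) : B := bracket (w 0) (w 1) x y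

theorem map_lineBracket (f : B →+* B') (w : Fin 2 → Fin 4 → B) (x y : Fin 4 → B) :
    f (lineBracket w x y) = lineBracket (fun c => f ∘ w c) (f ∘ x) (f ∘ y) :=
  map_bracket f _ _ _ _

/-- The bilinear incidence condition of the line `w` with a point of `w₁` and a point of `w₂`,
as the vector of its four coefficients. -/
def incidence (w w₁ w₂ : Fin 2 → Fin 4 → B) : Fin 4 → B :=
  ![lineBracket w (w₁ 0) (w₂ 0), lineBracket w (w₁ 0) (w₂ 1),
    lineBracket w (w₁ 1) (w₂ 0), lineBracket w (w₁ 1) (w₂ 1)]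

theorem map_incidence (f : B →+* B') (w w₁ w₂ : Fin 2 → Fin 4 → B) :
    f ∘ incidence w w₁ w₂ =
      incidence (fun c => f ∘ w c) (fun c => f ∘ w₁ c) (fun c => f ∘ w₂ c) := by
  funext k
  fin_cases k <;> simp [incidence, map_lineBracket]

theorem lineBracket_linePt_linePt (w w₁ w₂ : Fin 2 → Fin 4 → B) (s t : Fin 2 → B) :
    lineBracket w (linePt w₁ s) (linePt w₂ t) =
      ![s 0 * t 0, s 0 * t 1, s 1 * t 0, s 1 * t 1] ⬝ᵥ incidence w w₁ w₂ := by
  simp [lineBracket, linePt, incidence, bracket_eq, dotProduct, Fin.sum_univ_four]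
  ring

/-- Over a field, if this form does not vanish then no line meets all five lines
`w₁, w₂, u₁, u₂, u₃`: the only candidate for the pair of points on `w₁` and `w₂` is the common
zero of three bilinear incidence conditions, and the form tests whether it is decomposable. -/
def transversalForm (w₁ w₂ u₁ u₂ u₃ : Fin 2 → Fin 4 → B) : B :=
  let n := cross3 (incidence u₁ w₁ w₂) (incidence u₂ w₁ w₂) (incidence u₃ w₁ w₂)
  n 0 * n 3 - n 1 * n 2

theorem map_transversalForm (f : B →+* B') (w₁ w₂ u₁ u₂ u₃ : Fin 2 → Fin 4 → B) :
    f (transversalForm w₁ w₂ u₁ u₂ u₃) =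
      transversalForm (fun c => f ∘ w₁ c) (fun c => f ∘ w₂ c) (fun c => f ∘ u₁ c)
        (fun c => f ∘ u₂ c) (fun c => f ∘ u₃ c) := by
  simp only [transversalForm, ← map_incidence, ← map_cross3, map_sub, map_mul,
    Function.comp_apply]

theorem eq_zero_or_eq_zero_of_transversalForm_ne_zero [IsDomain B]
    {w₁ w₂ u₁ u₂ u₃ : Fin 2 → Fin 4 → B} (h : transversalForm w₁ w₂ u₁ u₂ u₃ ≠ 0)
    {s t : Fin 2 → B} (h₁ : lineBracket u₁ (linePt w₁ s) (linePt w₂ t) = 0)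
    (h₂ : lineBracket u₂ (linePt w₁ s) (linePt w₂ t) = 0)
    (h₃ : lineBracket u₃ (linePt w₁ s) (linePt w₂ t) = 0) : s = 0 ∨ t = 0 := by
  rw [lineBracket_linePt_linePt] at h₁ h₂ h₃
  set z : Fin 4 → B := ![s 0 * t 0, s 0 * t 1, s 1 * t 0, s 1 * t 1] with hz
  have hdecomp : z 0 * z 3 = z 1 * z 2 := by simp [hz]; ring
  have hzero (k : Fin 4) : z k = 0 := by
    have hprop := cross3_mul_comm_of_dotProduct_eq_zero h₁ h₂ h₃
    unfold transversalForm at h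
    set n := cross3 (incidence u₁ w₁ w₂) (incidence u₂ w₁ w₂) (incidence u₃ w₁ w₂)
    have : (n 0 * n 3 - n 1 * n 2) * (z k * z k) = 0 := by
      linear_combination n 3 * z k * hprop 0 k + n k * z 0 * hprop 3 k
        - n 2 * z k * hprop 1 k - n k * z 1 * hprop 2 k + n k ^ 2 * hdecomp
    simpa [h] using this
  by_contra! hne
  obtain ⟨c, hc⟩ := Function.ne_iff.1 hne.1
  obtain ⟨d, hd⟩ := Function.ne_iff.1 hne.2
  have hcd : s c * t d ≠ 0 := mul_ne_zero hc hd
  fin_cases c <;> fin_cases d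
  exacts [hcd (hzero 0), hcd (hzero 1), hcd (hzero 2), hcd (hzero 3)]

theorem eq_zero_of_linePt_add_linePt_eq_zero [IsDomain B] {w w' : Fin 2 → Fin 4 → B}
    (h : lineBracket w (w' 0) (w' 1) ≠ 0) {s t : Fin 2 → B}
    (hst : linePt w s + linePt w' t = 0) : s = 0 ∧ t = 0 := by
  have hvec : ![s 0, s 1, t 0, t 1] ᵥ* Matrix.of ![w 0, w 1, w' 0, w' 1] = 0 := by
    rw [← hst]
    funext k
    simp [linePt, vecMul, dotProduct, Fin.sum_univ_four]
    ring
  have hzero := congrFun (eq_zero_of_vecMul_eq_zero h hvec)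
  constructor <;> funext c <;> fin_cases c
  exacts [hzero 0, hzero 1, hzero 2, hzero 3]

theorem cross3_linePt_dotProduct_zero (w : Fin 2 → Fin 4 → B) (t : Fin 2 → B) (x y : Fin 4 → B) :
    cross3 (linePt w t) x y ⬝ᵥ w 0 = -(t 1 * lineBracket w x y) := by
  simp only [cross3_dotProduct, lineBracket, bracket_eq, linePt, Pi.add_apply, Pi.smul_apply,
    smul_eq_mul]
  ring

theorem cross3_linePt_dotProduct_one (w : Fin 2 → Fin 4 → B) (t : Fin 2 → B) (x y : Fin 4 → B) :
    cross3 (linePt w t) x y ⬝ᵥ w 1 = t 0 * lineBracket w x y := by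
  simp only [cross3_dotProduct, lineBracket, bracket_eq, linePt, Pi.add_apply, Pi.smul_apply,
    smul_eq_mul]
  ring

theorem dvd_mul_of_dvd_dotProduct {w w' : Fin 2 → Fin 4 → B} {d : B} {x : Fin 4 → B}
    (hw : ∀ c, d ∣ x ⬝ᵥ w c) (hw' : ∀ c, d ∣ x ⬝ᵥ w' c) (k : Fin 4) :
    d ∣ lineBracket w (w' 0) (w' 1) * x k := by
  have h := bracket_mul_dotProduct (w 0) (w 1) (w' 0) (w' 1) (Pi.single k 1) x
  rw [dotProduct_single_one] at h
  rw [lineBracket, h]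
  exact dvd_add (dvd_add (dvd_add ((hw 0).mul_left _) ((hw 1).mul_left _)) ((hw' 0).mul_left _))
    ((hw' 1).mul_left _)

end Lines

section Planes

variable {B B' : Type*} [CommRing B] [CommRing B']

/-- For planes `p`, `q` and a line `w`, this vanishes over a field iff `w` meets the line
`p ∩ q`. -/
def meetBracket (p q : Fin 4 → B) (w : Fin 2 → Fin 4 → B) : B :=
  (q ⬝ᵥ w 0) * (p ⬝ᵥ w 1) - (q ⬝ᵥ w 1) * (p ⬝ᵥ w 0)

theorem map_meetBracket (f : B →+* B') (p q : Fin 4 → B) (w : Fin 2 → Fin 4 → B) :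
    f (meetBracket p q w) = meetBracket (f ∘ p) (f ∘ q) (fun c => f ∘ w c) := by
  simp only [meetBracket, map_sub, map_mul, RingHom.map_dotProduct]

theorem meetBracket_self (p : Fin 4 → B) (w : Fin 2 → Fin 4 → B) : meetBracket p p w = 0 := by
  simp only [meetBracket]
  ring

theorem meetBracket_swap (p q : Fin 4 → B) (w : Fin 2 → Fin 4 → B) :
    meetBracket q p w = -meetBracket p q w := by
  simp only [meetBracket]
  ring

theorem meetBracket_eq_zero_of_mem {p : Fin 4 → B} {w : Fin 2 → Fin 4 → B}
    (hp : ∀ c, p ⬝ᵥ w c = 0) (q : Fin 4 → B) : meetBracket p q w = 0 := by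
  simp [meetBracket, hp]

theorem sum_meetBracket_smul_eq_zero {ι : Type*} [Fintype ι] {s p : ι → Fin 4 → B}
    (h : ∑ i, vecMulVec (s i) (p i) = 0) (q : Fin 4 → B) (w : Fin 2 → Fin 4 → B) :
    ∑ i, meetBracket (p i) q w • s i = 0 := by
  have hx (x : Fin 4 → B) : ∑ i, (p i ⬝ᵥ x) • s i = 0 := by
    simpa [sum_mulVec, vecMulVec_mulVec] using congrArg (· *ᵥ x) h
  simp only [meetBracket, sub_smul, mul_smul, Finset.sum_sub_distrib, ← Finset.smul_sum, hx,
    smul_zero, sub_zero]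

/-- The plane joining the line `w` to the point `x`. -/
def joinPlane (w : Fin 2 → Fin 4 → B) (x : Fin 4 → B) : Fin 4 → B := cross3 (w 0) (w 1) x

theorem joinPlane_dotProduct (w : Fin 2 → Fin 4 → B) (x y : Fin 4 → B) :
    joinPlane w x ⬝ᵥ y = lineBracket w x y := cross3_dotProduct _ _ _ _

theorem joinPlane_dotProduct_line (w : Fin 2 → Fin 4 → B) (x : Fin 4 → B) (c : Fin 2) :
    joinPlane w x ⬝ᵥ w c = 0 := by
  fin_cases c <;> simp [joinPlane_dotProduct, lineBracket, bracket_eq] <;> ring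

theorem map_joinPlane (f : B →+* B') (w : Fin 2 → Fin 4 → B) (x : Fin 4 → B) :
    f ∘ joinPlane w x = joinPlane (fun c => f ∘ w c) (f ∘ x) :=
  map_cross3 f _ _ _

/-- The equation, at the point `x`, of the quadric containing the lines `w₁`, `w₂` and `w₃`. -/
def quadric (w₁ w₂ w₃ : Fin 2 → Fin 4 → B) (x : Fin 4 → B) : B :=
  meetBracket (joinPlane w₁ x) (joinPlane w₂ x) w₃

theorem map_quadric (f : B →+* B') (w₁ w₂ w₃ : Fin 2 → Fin 4 → B) (x : Fin 4 → B) :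
    f (quadric w₁ w₂ w₃ x) =
      quadric (fun c => f ∘ w₁ c) (fun c => f ∘ w₂ c) (fun c => f ∘ w₃ c) (f ∘ x) := by
  simp only [quadric, map_meetBracket, map_joinPlane]

theorem quadric_swap_right (w₁ w₂ w₃ : Fin 2 → Fin 4 → B) (x : Fin 4 → B) :
    quadric w₁ w₃ w₂ x = -quadric w₁ w₂ w₃ x := by
  have hcramer := bracket_mul_dotProduct (w₂ 0) (w₂ 1) (w₃ 0) (w₃ 1) x (joinPlane w₁ x)
  have hx : joinPlane w₁ x ⬝ᵥ x = 0 := by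
    simp only [joinPlane_dotProduct, lineBracket, bracket_eq]
    ring
  have h₂ : bracket (w₂ 0) (w₂ 1) (w₃ 0) x = -lineBracket w₂ x (w₃ 0) := by
    simp only [lineBracket, bracket_eq]
    ring
  have h₃ : bracket x (w₂ 1) (w₃ 0) (w₃ 1) = lineBracket w₃ x (w₂ 1) := by
    simp only [lineBracket, bracket_eq]
    ring
  have h₃' : bracket (w₂ 0) x (w₃ 0) (w₃ 1) = -lineBracket w₃ x (w₂ 0) := by
    simp only [lineBracket, bracket_eq]
    ring
  have h₂' : bracket (w₂ 0) (w₂ 1) x (w₃ 1) = lineBracket w₂ x (w₃ 1) := rfl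
  rw [hx, h₂, h₂', h₃, h₃'] at hcramer
  rw [quadric, quadric, meetBracket, meetBracket, joinPlane_dotProduct w₂, joinPlane_dotProduct w₂,
    joinPlane_dotProduct w₃, joinPlane_dotProduct w₃]
  linear_combination hcramer

end Planes

section Arrangements

theorem exists_perm_eq_of_injective {m n : ℕ} (h : m ≤ n) (f : Fin m → Fin n)
    (hf : Function.Injective f) :
    ∃ σ : Equiv.Perm (Fin n), ∀ i, σ (Fin.castLE h i) = f i := by
  obtain ⟨σ, hσ⟩ := Equiv.Perm.exists_extending_pair _ f (Fin.castLE_injective h) hf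
  exact ⟨σ, hσ⟩

theorem exists_arrangement_of_two_le_card (s : Finset (Fin 6)) (o : Fin 6) (h₂ : 2 ≤ s.card)
    (h₄ : s.card ≤ 4) :
    ∃ σ : Equiv.Perm (Fin 6), σ 0 ∈ s ∧ σ 1 ∈ s ∧ σ 2 ∉ s ∧ σ 3 ∉ s ∧ σ 4 ≠ o ∧ σ 5 ≠ o := by
  have hlist : ∀ (s : Finset (Fin 6)) (o : Fin 6), 2 ≤ s.card → s.card ≤ 4 →
      ∃ i ∈ s, ∃ j ∈ s, ∃ k ∉ s, ∃ l ∉ s, i ≠ j ∧ k ≠ l ∧ (o = i ∨ o = k) := by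
    decide +kernel
  obtain ⟨i, hi, j, hj, k, hk, l, hl, hij, hkl, ho⟩ := hlist s o h₂ h₄
  have hdisj {a b : Fin 6} (ha : a ∈ s) (hb : b ∉ s) : a ≠ b := fun hab => hb (hab ▸ ha)
  have hinj : Function.Injective ![i, j, k, l] := by
    rw [← List.nodup_ofFn]
    simp [hij, hkl, hdisj hi hk, hdisj hi hl, hdisj hj hk, hdisj hj hl]
  obtain ⟨σ, hσ⟩ := exists_perm_eq_of_injective (by decide : 4 ≤ 6) _ hinj
  obtain rfl : σ 0 = i := hσ 0
  obtain rfl : σ 1 = j := hσ 1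
  obtain rfl : σ 2 = k := hσ 2
  obtain rfl : σ 3 = l := hσ 3
  exact ⟨σ, hi, hj, hk, hl, by rcases ho with rfl | rfl <;> simp,
    by rcases ho with rfl | rfl <;> simp⟩

theorem exists_perm_forall_mem_of_five_le_card {s : Finset (Fin 6)} (h : 5 ≤ s.card) :
    ∃ σ : Equiv.Perm (Fin 6), ∀ i ≠ 5, σ i ∈ s := by
  have hcompl : sᶜ.card ≤ 1 := by
    rw [Finset.card_compl, Fintype.card_fin]
    omega
  obtain ⟨x, hx⟩ : ∃ x, sᶜ ⊆ {x} := Finset.card_le_one_iff_subset_singleton.1 hcompl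
  refine ⟨Equiv.swap x 5, fun i hi => ?_⟩
  by_contra hmem
  have hix : Equiv.swap x 5 i = x := by simpa using hx (Finset.mem_compl.2 hmem)
  exact hi (by simpa using (Equiv.swap x 5).injective (hix.trans (Equiv.swap_apply_right x 5).symm))

theorem exists_arrangement_of_distinct (o : Fin 6) {i j k : Fin 6} (hij : i ≠ j) (hik : i ≠ k)
    (hjk : j ≠ k) :
    ∃ σ : Equiv.Perm (Fin 6), σ 0 = i ∧ σ 1 = j ∧ σ 2 = k ∧ σ 4 ≠ o ∧ σ 5 ≠ o := by
  have hlist : ∀ o i j k : Fin 6, ∃ l, l ≠ i ∧ l ≠ j ∧ l ≠ k ∧ (o = i ∨ o = j ∨ o = k ∨ o = l) := by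
    decide +kernel
  obtain ⟨l, hli, hlj, hlk, ho⟩ := hlist o i j k
  have hinj : Function.Injective ![i, j, k, l] := by
    rw [← List.nodup_ofFn]
    simp [hij, hik, hjk, hli.symm, hlj.symm, hlk.symm]
  obtain ⟨σ, hσ⟩ := exists_perm_eq_of_injective (by decide : 4 ≤ 6) _ hinj
  obtain rfl : σ 0 = i := hσ 0
  obtain rfl : σ 1 = j := hσ 1
  obtain rfl : σ 2 = k := hσ 2
  obtain rfl : σ 3 = l := hσ 3
  exact ⟨σ, rfl, rfl, rfl, by rcases ho with rfl | rfl | rfl | rfl <;> simp,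
    by rcases ho with rfl | rfl | rfl | rfl <;> simp⟩

end Arrangements

section Relation

variable {B : Type*} [CommRing B] {v : Fin 6 → Fin 2 → Fin 4 → B} {p : Fin 6 → Fin 4 → B}

theorem four_term_relation {s : Fin 6 → Fin 4 → B} (hp : ∀ i c, p i ⬝ᵥ v i c = 0)
    (h : ∑ i, vecMulVec (s i) (p i) = 0) (σ : Equiv.Perm (Fin 6)) :
    meetBracket (p (σ 0)) (p (σ 4)) (v (σ 5)) • s (σ 0)
      + meetBracket (p (σ 1)) (p (σ 4)) (v (σ 5)) • s (σ 1)
      + meetBracket (p (σ 2)) (p (σ 4)) (v (σ 5)) • s (σ 2)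
      + meetBracket (p (σ 3)) (p (σ 4)) (v (σ 5)) • s (σ 3) = 0 := by
  have hsum := sum_meetBracket_smul_eq_zero h (p (σ 4)) (v (σ 5))
  rw [← Equiv.sum_comp σ, Fin.sum_univ_six, meetBracket_self,
    meetBracket_eq_zero_of_mem (hp (σ 5))] at hsum
  simpa using hsum

/-- The nondegeneracy conditions, over a domain, on six lines `v i` and planes `p i` under which a
nontrivial relation `∑ sᵢ ⊗ pᵢ = 0` with `sᵢ` on `v i` has three independent points `sᵢ`. The
quadric condition is imposed only on arrangements keeping the line `o` away from the last two
places. -/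
structure Nondegenerate (v : Fin 6 → Fin 2 → Fin 4 → B) (p : Fin 6 → Fin 4 → B) (o : Fin 6) :
    Prop where
  lineBracket_ne_zero : ∀ i j, i ≠ j → lineBracket (v i) (v j 0) (v j 1) ≠ 0
  transversalForm_ne_zero : ∀ σ : Equiv.Perm (Fin 6),
    transversalForm (v (σ 0)) (v (σ 1)) (v (σ 2)) (v (σ 3)) (v (σ 4)) ≠ 0
  plane_ne_zero : ∀ i, p i ≠ 0
  meetBracket_ne_zero : ∀ σ : Equiv.Perm (Fin 6), σ 4 ≠ o → σ 5 ≠ o →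
    meetBracket (p (σ 0)) (p (σ 4)) (v (σ 5)) ≠ 0 ∨
      meetBracket (p (σ 1)) (p (σ 4)) (v (σ 5)) ≠ 0

namespace Nondegenerate

variable [IsDomain B] {o : Fin 6} {t : Fin 6 → Fin 2 → B}

theorem eq_zero_of_support_subsingleton (hN : Nondegenerate v p o)
    (h : ∑ i, vecMulVec (linePt (v i) (t i)) (p i) = 0) {i : Fin 6} (hi : ∀ j ≠ i, t j = 0) :
    t i = 0 := by
  obtain ⟨l, hl⟩ := Function.ne_iff.1 (hN.plane_ne_zero i)
  have hpt : linePt (v i) (t i) = 0 := by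
    rw [Finset.sum_eq_single i (fun j _ hj => by ext; simp [hi j hj, linePt_zero, vecMulVec])
      (by simp)] at h
    funext k
    have hkl : linePt (v i) (t i) k * p i l = 0 := congrFun₂ h k l
    exact (mul_eq_zero.1 hkl).resolve_right hl
  obtain ⟨j, hj⟩ := exists_ne i
  exact (eq_zero_of_linePt_add_linePt_eq_zero (t := 0) (hN.lineBracket_ne_zero i j hj.symm)
    (by rw [hpt, linePt_zero, add_zero])).1

theorem not_support_subset (hN : Nondegenerate v p o) (hp : ∀ i c, p i ⬝ᵥ v i c = 0)
    (h : ∑ i, vecMulVec (linePt (v i) (t i)) (p i) = 0) (σ : Equiv.Perm (Fin 6))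
    (h₀ : t (σ 0) ≠ 0) (h₁ : t (σ 1) ≠ 0) (h₂ : t (σ 2) = 0) (h₃ : t (σ 3) = 0)
    (h₄ : σ 4 ≠ o) (h₅ : σ 5 ≠ o) : False := by
  have hrel := four_term_relation hp h σ
  simp only [h₂, h₃, linePt_zero, smul_zero, add_zero, ← linePt_smul] at hrel
  have hskew := hN.lineBracket_ne_zero (σ 0) (σ 1) (by simp)
  obtain ⟨h₀', h₁'⟩ := eq_zero_of_linePt_add_linePt_eq_zero hskew hrel
  rcases hN.meetBracket_ne_zero σ h₄ h₅ with hq | hq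
  · exact (smul_ne_zero hq h₀) h₀'
  · exact (smul_ne_zero hq h₁) h₁'

theorem exists_cross3_ne_zero_of_five (hN : Nondegenerate v p o) (σ : Equiv.Perm (Fin 6))
    (h : ∀ i ≠ 5, t (σ i) ≠ 0) :
    ∃ i ∈ ({2, 3, 4} : Finset (Fin 6)),
      cross3 (linePt (v (σ i)) (t (σ i))) (linePt (v (σ 0)) (t (σ 0)))
        (linePt (v (σ 1)) (t (σ 1))) ≠ 0 := by
  by_contra! hcross
  have hmeet (i : Fin 6) (hi : i ∈ ({2, 3, 4} : Finset (Fin 6))) :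
      lineBracket (v (σ i)) (linePt (v (σ 0)) (t (σ 0))) (linePt (v (σ 1)) (t (σ 1))) = 0 := by
    have hzero := cross3_linePt_dotProduct_zero (v (σ i)) (t (σ i))
      (linePt (v (σ 0)) (t (σ 0))) (linePt (v (σ 1)) (t (σ 1)))
    have hone := cross3_linePt_dotProduct_one (v (σ i)) (t (σ i))
      (linePt (v (σ 0)) (t (σ 0))) (linePt (v (σ 1)) (t (σ 1)))
    rw [hcross i hi, zero_dotProduct] at hzero hone
    obtain ⟨c, hc⟩ := Function.ne_iff.1 (h i (by rintro rfl; simp at hi))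
    fin_cases c
    · exact (mul_eq_zero.1 hone.symm).resolve_left hc
    · exact (mul_eq_zero.1 (neg_eq_zero.1 hzero.symm)).resolve_left hc
  rcases eq_zero_or_eq_zero_of_transversalForm_ne_zero (hN.transversalForm_ne_zero σ)
    (hmeet 2 (by simp)) (hmeet 3 (by simp)) (hmeet 4 (by simp)) with h₀ | h₁
  · exact h 0 (by decide) h₀
  · exact h 1 (by decide) h₁

theorem exists_cross3_ne_zero (hN : Nondegenerate v p o) (hp : ∀ i c, p i ⬝ᵥ v i c = 0)
    (h : ∑ i, vecMulVec (linePt (v i) (t i)) (p i) = 0) (ht : t ≠ 0) :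
    ∃ σ : Equiv.Perm (Fin 6), σ 4 ≠ o ∧ σ 5 ≠ o ∧
      cross3 (linePt (v (σ 0)) (t (σ 0))) (linePt (v (σ 1)) (t (σ 1)))
        (linePt (v (σ 2)) (t (σ 2))) ≠ 0 := by
  classical
  let s : Finset (Fin 6) := {i | t i ≠ 0}
  have hs (i : Fin 6) : i ∈ s ↔ t i ≠ 0 := by simp [s]
  have h₂ : 2 ≤ s.card := by
    by_contra! hcard
    obtain ⟨i, hi⟩ := Function.ne_iff.1 ht
    refine hi (hN.eq_zero_of_support_subsingleton h fun j hj => ?_)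
    by_contra hj0
    exact hj (Finset.card_le_one.1 (by omega : s.card ≤ 1) j ((hs j).2 hj0) i ((hs i).2 hi))
  have h₅ : 5 ≤ s.card := by
    by_contra! hcard
    obtain ⟨σ, h₀, h₁, h₂, h₃, h₄, h₅⟩ :=
      exists_arrangement_of_two_le_card s o h₂ (by omega)
    rw [hs] at h₀ h₁ h₂ h₃
    exact hN.not_support_subset hp h σ h₀ h₁ (not_not.1 h₂) (not_not.1 h₃) h₄ h₅
  obtain ⟨σ, hσ⟩ := exists_perm_forall_mem_of_five_le_card h₅
  obtain ⟨i, hi, hcross⟩ := hN.exists_cross3_ne_zero_of_five σ fun i hi => (hs _).1 (hσ i hi)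
  have hi₀ : i ≠ 0 := by rintro rfl; simp at hi
  have hi₁ : i ≠ 1 := by rintro rfl; simp at hi
  obtain ⟨τ, h₀, h₁, h₂, h₄, h₅⟩ := exists_arrangement_of_distinct o
    (σ.injective.ne hi₀) (σ.injective.ne hi₁) (σ.injective.ne (by decide : (0 : Fin 6) ≠ 1))
  exact ⟨τ, h₄, h₅, by rwa [h₀, h₁, h₂]⟩

end Nondegenerate

end Relation

section PrimeValuations

variable {B : Type*} [CommRing B] {ϖ : B}

theorem exists_eq_pow_smul_of_ne_zero [IsDomain B] [WfDvdMonoid B] (hϖ : Prime ϖ) {ι : Type*}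
    {f : ι → B}
    (hf : f ≠ 0) : ∃ (r : ℕ) (g : ι → B), f = ϖ ^ r • g ∧ ∃ i, ¬ ϖ ∣ g i := by
  classical
  have hfin : ∃ r i, ¬ ϖ ^ (r + 1) ∣ f i := by
    obtain ⟨i, hi⟩ := Function.ne_iff.1 hf
    obtain ⟨r, hr⟩ := FiniteMultiplicity.of_not_isUnit hϖ.not_isUnit hi
    exact ⟨r, i, hr⟩
  have hdvd (i : ι) : ϖ ^ Nat.find hfin ∣ f i := by
    cases hr : Nat.find hfin with
    | zero => simp
    | succ r => simpa using not_exists.1 (Nat.find_min hfin (m := r) (by omega)) i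
  choose g hg using hdvd
  refine ⟨Nat.find hfin, g, funext hg, ?_⟩
  obtain ⟨i, hi⟩ := Nat.find_spec hfin
  refine ⟨i, fun hdiv => hi ?_⟩
  rw [hg i, pow_succ]
  exact mul_dvd_mul_left _ hdiv

theorem exists_pow_dvd_of_pow_dvd_prod [IsDomain B] (hϖ : Prime ϖ) {ι : Type*} (s : Finset ι)
    (E : ι → B)
    {n : ℕ} (h : ϖ ^ n ∣ ∏ i ∈ s, E i) :
    ∃ κ : ι → ℕ, ∑ i ∈ s, κ i = n ∧ ∀ i ∈ s, ϖ ^ κ i ∣ E i := by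
  classical
  induction s using Finset.induction_on generalizing n with
  | empty =>
    rcases n.eq_zero_or_pos with rfl | hn
    · exact ⟨0, by simp, by simp⟩
    · exact absurd (isUnit_of_dvd_one ((dvd_pow_self ϖ hn.ne').trans (by simpa using h)))
        hϖ.not_isUnit
  | insert j s hj ih =>
    obtain ⟨c, hc⟩ := h
    rw [Finset.prod_insert hj, mul_comm (ϖ ^ n)] at hc
    obtain ⟨k, l, b, d, rfl, -, hb, hd⟩ := mul_eq_mul_prime_pow hϖ hc
    obtain ⟨κ, hsum, hκ⟩ := ih (Dvd.intro_left d hd.symm)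
    have hupdate : ∀ i ∈ s, Function.update κ j k i = κ i := fun i hi =>
      Function.update_of_ne (by rintro rfl; exact hj hi) _ _
    refine ⟨Function.update κ j k, ?_, ?_⟩
    · rw [Finset.sum_insert hj, Function.update_self, Finset.sum_congr rfl hupdate, hsum]
    · intro i hi
      rcases Finset.mem_insert.1 hi with rfl | hi
      · rw [Function.update_self]
        exact Dvd.intro_left b hb.symm
      · rw [hupdate i hi]
        exact hκ i hi

theorem pow_sum_dvd_of_forall_pow_dvd_dotProduct {ι : Type*} [Fintype ι] (hϖ : Prime ϖ)
    {v : ι → Fin 2 → Fin 4 → B}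
    (hv : ∀ i j, i ≠ j → ¬ ϖ ∣ lineBracket (v i) (v j 0) (v j 1))
    {F : (Fin 4 → B) → B} (hF : ∀ j d Y, (∀ c, d ∣ Y ⬝ᵥ v j c) → d ∣ F Y)
    {Y : Fin 4 → B} (hY : ∃ k, ¬ ϖ ∣ Y k) {e : ι → ℕ} (he : ∀ j c, ϖ ^ e j ∣ Y ⬝ᵥ v j c) :
    ϖ ^ ∑ j, e j ∣ F Y := by
  classical
  by_cases hzero : e = 0
  · simp [hzero]
  obtain ⟨j, hj⟩ := Function.ne_iff.1 hzero
  have hsingle : ∀ k ≠ j, e k = 0 := by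
    intro k hkj
    by_contra hk
    obtain ⟨x, hx⟩ := hY
    have hdvd := dvd_mul_of_dvd_dotProduct (fun c => (dvd_pow_self ϖ hj).trans (he j c))
      (fun c => (dvd_pow_self ϖ hk).trans (he k c)) x
    exact (hϖ.dvd_or_dvd hdvd).elim (hv j k hkj.symm) hx
  rw [Finset.sum_eq_single j (fun k _ hk => hsingle k hk) (by simp)]
  exact hF j _ Y (he j)

end PrimeValuations

section ToddMap

/-- A Todd map for the six lines `v i`: a relation `∑ sᵢ ⊗ pᵢ = 0` between points
`sᵢ = linePt (v i) (t i)` of the lines and planes `p i` through them, together with the plane `T`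
which is proportional to `sᵢ ∧ sⱼ ∧ sₖ` for all `i`, `j`, `k`. The factor `E j` records that `T`
passes through the line `v j` where `E j` vanishes. -/
structure IsToddMap {B : Type*} [CommRing B] (v : Fin 6 → Fin 2 → Fin 4 → B)
    (p : Fin 6 → Fin 4 → B) (t : Fin 6 → Fin 2 → B) (T : Fin 4 → B) (E : Fin 6 → B) : Prop where
  plane_dotProduct : ∀ i c, p i ⬝ᵥ v i c = 0
  relation : ∑ i, vecMulVec (linePt (v i) (t i)) (p i) = 0
  meetBracket_smul : ∀ σ : Equiv.Perm (Fin 6),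
    meetBracket (p (σ 3)) (p (σ 4)) (v (σ 5)) • T =
      Equiv.Perm.sign σ • cross3 (linePt (v (σ 0)) (t (σ 0))) (linePt (v (σ 1)) (t (σ 1)))
        (linePt (v (σ 2)) (t (σ 2)))
  dotProduct_zero : ∀ j, T ⬝ᵥ v j 0 = E j * t j 1
  dotProduct_one : ∀ j, T ⬝ᵥ v j 1 = -(E j * t j 0)

variable {B : Type*} [CommRing B] {v : Fin 6 → Fin 2 → Fin 4 → B} {p : Fin 6 → Fin 4 → B}
  {t : Fin 6 → Fin 2 → B} {T : Fin 4 → B} {E : Fin 6 → B}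

theorem map_vecMulVec_linePt {B' : Type*} [CommRing B'] (f : B →+* B')
    (w : Fin 2 → Fin 4 → B) (s : Fin 2 → B) (q : Fin 4 → B) :
    (vecMulVec (linePt w s) q).map f =
      vecMulVec (linePt (fun c => f ∘ w c) (f ∘ s)) (f ∘ q) := by
  rw [← map_linePt]
  ext
  simp [vecMulVec]

theorem map_sum_vecMulVec_linePt {B' : Type*} [CommRing B'] (f : B →+* B')
    (h : ∑ i, vecMulVec (linePt (v i) (t i)) (p i) = 0) :
    ∑ i, vecMulVec (linePt (fun c => f ∘ v i c) (f ∘ t i)) (f ∘ p i) = 0 := by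
  simp only [← map_vecMulVec_linePt]
  simpa using congrArg f.mapMatrix h

theorem IsToddMap.map {B' : Type*} [CommRing B'] (f : B →+* B') (h : IsToddMap v p t T E) :
    IsToddMap (fun i c => f ∘ v i c) (fun i => f ∘ p i) (fun i => f ∘ t i) (f ∘ T) (f ∘ E) where
  plane_dotProduct i c := by rw [← RingHom.map_dotProduct, h.plane_dotProduct, map_zero]
  relation := map_sum_vecMulVec_linePt f h.relation
  meetBracket_smul σ := by
    have hsmul := congrArg (fun y => f ∘ y) (h.meetBracket_smul σ)
    simp only [← map_linePt, ← map_cross3, ← map_meetBracket]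
    funext k
    simpa [Units.smul_def] using congrFun hsmul k
  dotProduct_zero j := by
    rw [← RingHom.map_dotProduct, h.dotProduct_zero, map_mul]; rfl
  dotProduct_one j := by
    rw [← RingHom.map_dotProduct, h.dotProduct_one, map_neg, map_mul]; rfl

variable [IsDomain B]

theorem Nondegenerate.exists_eq_pow_smul {K : Type*} [CommRing K] [IsDomain K] {ϖ : B}
    (hϖ : Prime ϖ) {f : B →+* K} (hf : ∀ b, f b = 0 ↔ ϖ ∣ b) {o : Fin 6}
    (hN : Nondegenerate (fun i c => f ∘ v i c) (fun i => f ∘ p i) o)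
    (hp : ∀ i c, p i ⬝ᵥ v i c = 0) (hrel : ∑ i, vecMulVec (linePt (v i) (t i)) (p i) = 0)
    (ht : ∃ i c, ¬ ϖ ∣ t i c) {N : ℕ}
    (hT : ∀ σ : Equiv.Perm (Fin 6), σ 4 ≠ o → σ 5 ≠ o →
      meetBracket (p (σ 3)) (p (σ 4)) (v (σ 5)) • T =
        ϖ ^ N • Equiv.Perm.sign σ • cross3 (linePt (v (σ 0)) (t (σ 0)))
          (linePt (v (σ 1)) (t (σ 1))) (linePt (v (σ 2)) (t (σ 2)))) :
    ∃ T' : Fin 4 → B, T = ϖ ^ N • T' ∧ ∃ k, ¬ ϖ ∣ T' k := by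
  have ht' : (fun i => f ∘ t i) ≠ 0 := by
    obtain ⟨i, c, hic⟩ := ht
    exact fun h => hic ((hf _).1 (congrFun₂ h i c))
  obtain ⟨σ, h₄, h₅, hcross⟩ := hN.exists_cross3_ne_zero
    (fun i c => by rw [← RingHom.map_dotProduct, hp, map_zero])
    (map_sum_vecMulVec_linePt f hrel) ht'
  have hdvd (k : Fin 4) : ϖ ^ N ∣ T k := by
    obtain ⟨τ, hτ₄, hτ₅, hτ⟩ : ∃ τ : Equiv.Perm (Fin 6), τ 4 ≠ o ∧ τ 5 ≠ o ∧
        ¬ ϖ ∣ meetBracket (p (τ 3)) (p (τ 4)) (v (τ 5)) := by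
      rcases hN.meetBracket_ne_zero σ h₄ h₅ with h | h <;> rw [← map_meetBracket, Ne, hf] at h
      · exact ⟨σ * Equiv.swap 0 3, by simpa [Equiv.swap_apply_def] using ⟨h₄, h₅, h⟩⟩
      · exact ⟨σ * Equiv.swap 1 3, by simpa [Equiv.swap_apply_def] using ⟨h₄, h₅, h⟩⟩
    exact hϖ.pow_dvd_of_dvd_mul_left N hτ ⟨_, congrFun (hT τ hτ₄ hτ₅) k⟩
  choose T' hT' using hdvd
  refine ⟨T', funext hT', ?_⟩
  obtain ⟨k, hk⟩ := Function.ne_iff.1 hcross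
  simp only [← map_linePt, ← map_cross3] at hk
  refine ⟨k, fun hdiv => hk ((hf _).2 ?_)⟩
  have hTk : meetBracket (p (σ 3)) (p (σ 4)) (v (σ 5)) * T' k =
      (Equiv.Perm.sign σ • cross3 (linePt (v (σ 0)) (t (σ 0))) (linePt (v (σ 1)) (t (σ 1)))
        (linePt (v (σ 2)) (t (σ 2)))) k := by
    refine mul_left_cancel₀ (pow_ne_zero N hϖ.ne_zero) ?_
    rw [mul_left_comm, ← hT']
    exact congrFun (hT σ h₄ h₅) k
  rcases Int.units_eq_one_or (Equiv.Perm.sign σ) with hs | hs <;>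
    simp only [hs, one_smul, Units.neg_smul, Pi.neg_apply] at hTk
  · exact hTk ▸ hdiv.mul_left _
  · exact dvd_neg.1 (hTk ▸ hdiv.mul_left _)

end ToddMap

section Multiplicity

variable {B : Type*} [CommRing B] {v : Fin 6 → Fin 2 → Fin 4 → B} {p : Fin 6 → Fin 4 → B}
  {t : Fin 6 → Fin 2 → B} {T : Fin 4 → B} {E : Fin 6 → B}

theorem meetBracket_smul_smul (a b : B) (q q' : Fin 4 → B) (w : Fin 2 → Fin 4 → B) :
    meetBracket (a • q) (b • q') w = a * b * meetBracket q q' w := by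
  simp only [meetBracket, smul_dotProduct, smul_eq_mul]
  ring

theorem sum_first_three_weights (σ : Equiv.Perm (Fin 6)) {o : Fin 6} (h₄ : σ 4 ≠ o) (h₅ : σ 5 ≠ o)
    (u : ℕ) {w : Fin 6 → ℕ} (hw : ∀ i, w i + (Pi.single o u : Fin 6 → ℕ) i = 2 * u) :
    w (σ 0) + w (σ 1) + w (σ 2) = 5 * u + (Pi.single o u : Fin 6 → ℕ) (σ 3) := by
  have hsum : ∑ i, (Pi.single o u : Fin 6 → ℕ) (σ i) = u := by
    rw [Equiv.sum_comp σ, Finset.sum_pi_single']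
    simp
  rw [Fin.sum_univ_six, Pi.single_eq_of_ne h₄, Pi.single_eq_of_ne h₅] at hsum
  have h₀ := hw (σ 0)
  have h₁ := hw (σ 1)
  have h₂ := hw (σ 2)
  omega

theorem IsToddMap.pow_dvd_dotProduct {ϖ : B} (h : IsToddMap v p t T E) (j : Fin 6) {m n : ℕ}
    (ht : ∀ c, ϖ ^ m ∣ t j c) (hE : ϖ ^ n ∣ E j) (c : Fin 2) : ϖ ^ (n + m) ∣ T ⬝ᵥ v j c := by
  have hdvd (c : Fin 2) : ϖ ^ (n + m) ∣ E j * t j c := by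
    rw [pow_add]
    exact mul_dvd_mul hE (ht c)
  fin_cases c
  · exact h.dotProduct_zero j ▸ hdvd 1
  · exact h.dotProduct_one j ▸ (dvd_neg.2 (hdvd 0))

theorem multiplicity_exponent_le {u r a : ℕ} (ha : 4 ≤ a) {o : Fin 6} {κ e w : Fin 6 → ℕ}
    (hw : ∀ i, w i + (Pi.single o u : Fin 6 → ℕ) i = 2 * u)
    (he : ∀ j, κ j + (w j + r) ≤ (5 * u + 3 * r) + e j) :
    u * (5 * a - 19) + ∑ j, κ j ≤ (5 * u + 3 * r) * a + ∑ j, e j := by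
  have hsum_w : ∑ i, w i + u = 12 * u := by
    have := Finset.sum_congr rfl fun i (_ : i ∈ Finset.univ) => hw i
    rw [Finset.sum_add_distrib, Finset.sum_pi_single'] at this
    simpa [← mul_assoc] using this
  have hsum_e := Finset.sum_le_sum fun j (_ : j ∈ Finset.univ) => he j
  simp only [Finset.sum_add_distrib, Finset.sum_const, Finset.card_univ, Fintype.card_fin,
    smul_eq_mul] at hsum_e
  obtain ⟨b, rfl⟩ := Nat.exists_eq_add_of_le ha
  rw [show 5 * (4 + b) - 19 = 1 + 5 * b by omega]
  nlinarith [Nat.zero_le (r * b)]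

variable [IsDomain B] {ϖ : B} {o : Fin 6} {u : ℕ} {w : Fin 6 → ℕ}

theorem IsToddMap.meetBracket_smul_of_pow_smul (hϖ : ϖ ≠ 0) {s : Fin 6 → Fin 2 → B} {r : ℕ}
    (h : IsToddMap v (fun i => ϖ ^ (Pi.single o u : Fin 6 → ℕ) i • p i)
      (fun i => ϖ ^ (w i + r) • s i) T E)
    (hw : ∀ i, w i + (Pi.single o u : Fin 6 → ℕ) i = 2 * u) (σ : Equiv.Perm (Fin 6))
    (h₄ : σ 4 ≠ o) (h₅ : σ 5 ≠ o) :
    meetBracket (p (σ 3)) (p (σ 4)) (v (σ 5)) • T =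
      ϖ ^ (5 * u + 3 * r) • Equiv.Perm.sign σ • cross3 (linePt (v (σ 0)) (s (σ 0)))
        (linePt (v (σ 1)) (s (σ 1))) (linePt (v (σ 2)) (s (σ 2))) := by
  have hσ := h.meetBracket_smul σ
  have hexp : (w (σ 0) + r) + (w (σ 1) + r) + (w (σ 2) + r) =
      (Pi.single o u : Fin 6 → ℕ) (σ 3) + (5 * u + 3 * r) := by
    linarith [sum_first_three_weights σ h₄ h₅ u hw]
  rw [meetBracket_smul_smul, Pi.single_eq_of_ne h₄, pow_zero, mul_one] at hσ
  simp only [linePt_smul, cross3_smul, ← pow_add, hexp] at hσ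
  rw [pow_add, mul_smul, smul_comm (Equiv.Perm.sign σ), mul_smul] at hσ
  rw [smul_right_injective _ (pow_ne_zero _ hϖ) hσ, smul_comm]

theorem IsToddMap.exists_eq_pow_smul [WfDvdMonoid B] {K : Type*} [CommRing K] [IsDomain K]
    (hϖ : Prime ϖ) {f : B →+* K} (hf : ∀ b, f b = 0 ↔ ϖ ∣ b)
    (hN : Nondegenerate (fun i c => f ∘ v i c) (fun i => f ∘ p i) o)
    (h : IsToddMap v (fun i => ϖ ^ (Pi.single o u : Fin 6 → ℕ) i • p i) t T E)
    (hw : ∀ i, w i + (Pi.single o u : Fin 6 → ℕ) i = 2 * u)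
    (ht : ∀ i c, ϖ ^ w i ∣ t i c) (ht₀ : t ≠ 0) :
    ∃ (r : ℕ) (T' : Fin 4 → B), (∀ i c, ϖ ^ (w i + r) ∣ t i c) ∧ T = ϖ ^ (5 * u + 3 * r) • T' ∧
      ∃ k, ¬ ϖ ∣ T' k := by
  choose g hg using ht
  have hg₀ : Function.uncurry g ≠ 0 := by
    obtain ⟨i, hi⟩ := Function.ne_iff.1 ht₀
    obtain ⟨c, hc⟩ := Function.ne_iff.1 hi
    refine fun hzero => hc ?_
    rw [hg, show g i c = 0 from congrFun hzero (i, c), mul_zero]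
    rfl
  obtain ⟨r, s, hgs, ⟨i, c⟩, hs⟩ := exists_eq_pow_smul_of_ne_zero hϖ hg₀
  obtain rfl : t = fun i => ϖ ^ (w i + r) • fun c => s (i, c) := by
    funext i c
    rw [hg, show g i c = ϖ ^ r * s (i, c) from congrFun hgs (i, c), ← mul_assoc, ← pow_add]
    rfl
  have hpow (n : ℕ) : ϖ ^ n ≠ 0 := pow_ne_zero n hϖ.ne_zero
  have hp (i : Fin 6) (c : Fin 2) : p i ⬝ᵥ v i c = 0 := by
    have := h.plane_dotProduct i c
    rw [smul_dotProduct] at this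
    exact (smul_eq_zero.1 this).resolve_left (hpow _)
  have hrel : ∑ i, vecMulVec (linePt (v i) fun c => s (i, c)) (p i) = 0 := by
    refine smul_right_injective _ (hpow (2 * u + r)) ?_
    dsimp only
    rw [smul_zero, ← h.relation, Finset.smul_sum]
    refine Finset.sum_congr rfl fun i _ => ?_
    rw [linePt_smul, smul_vecMulVec, vecMulVec_smul, smul_smul, ← pow_add, ← hw i]
    congr 2
    ring
  obtain ⟨T', hT', hk⟩ := hN.exists_eq_pow_smul hϖ hf hp hrel ⟨i, c, hs⟩
    (h.meetBracket_smul_of_pow_smul hϖ.ne_zero hw)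
  exact ⟨r, T', fun i c => dvd_mul_right _ _, hT', hk⟩

/-- The multiplicity estimate behind the Todd map: `ϖ ^ u` cuts out, to order `u`, a parameter
along which the plane `o` acquires a factor, as happens on the exceptional divisor of the blow-up
of the line `v o`. With `u = 0` this says that the prime factors of `∏ E j` can be divided out
of `F T`. -/
theorem IsToddMap.pow_dvd [WfDvdMonoid B] {K : Type*} [CommRing K] [IsDomain K]
    (hϖ : Prime ϖ) {f : B →+* K} (hf : ∀ b, f b = 0 ↔ ϖ ∣ b)
    (hN : Nondegenerate (fun i c => f ∘ v i c) (fun i => f ∘ p i) o)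
    (h : IsToddMap v (fun i => ϖ ^ (Pi.single o u : Fin 6 → ℕ) i • p i) t T E)
    (ht : ∀ i c, ϖ ^ (2 * u - (Pi.single o u : Fin 6 → ℕ) i) ∣ t i c) (ht₀ : t ≠ 0)
    {a : ℕ} (ha : 4 ≤ a) {F : (Fin 4 → B) → B} (hF : ∀ c Y, F (c • Y) = c ^ a * F Y)
    (hF' : ∀ j d Y, (∀ c, d ∣ Y ⬝ᵥ v j c) → d ∣ F Y) {n : ℕ} (hE : ϖ ^ n ∣ ∏ j, E j) :
    ϖ ^ (u * (5 * a - 19) + n) ∣ F T := by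
  set w : Fin 6 → ℕ := fun i => 2 * u - (Pi.single o u : Fin 6 → ℕ) i with hw_def
  have hw (i : Fin 6) : w i + (Pi.single o u : Fin 6 → ℕ) i = 2 * u := by
    have : (Pi.single o u : Fin 6 → ℕ) i ≤ u := by
      rw [Pi.single_apply]
      split_ifs <;> omega
    simp only [hw_def]
    omega
  obtain ⟨κ, rfl, hκ⟩ := exists_pow_dvd_of_pow_dvd_prod hϖ _ _ hE
  obtain ⟨r, T', htr, hT, hT'⟩ := h.exists_eq_pow_smul hϖ hf hN hw ht ht₀
  set e : Fin 6 → ℕ := fun j => κ j + (w j + r) - (5 * u + 3 * r) with he_def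
  have he (j : Fin 6) (c : Fin 2) : ϖ ^ e j ∣ T' ⬝ᵥ v j c := by
    rcases le_total (5 * u + 3 * r) (κ j + (w j + r)) with hle | hle
    · have hdvd := h.pow_dvd_dotProduct j (htr j) (hκ j (Finset.mem_univ j)) c
      rw [hT, smul_dotProduct, ← Nat.add_sub_cancel' hle, pow_add] at hdvd
      exact (mul_dvd_mul_iff_left (pow_ne_zero _ hϖ.ne_zero)).1 hdvd
    · simp [he_def, Nat.sub_eq_zero_of_le hle]
  have hskew (i j : Fin 6) (hij : i ≠ j) : ¬ ϖ ∣ lineBracket (v i) (v j 0) (v j 1) := by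
    rw [← hf, map_lineBracket]
    exact hN.lineBracket_ne_zero i j hij
  rw [hT, hF, ← pow_mul]
  refine dvd_trans ?_ (mul_dvd_mul_left _
    (pow_sum_dvd_of_forall_pow_dvd_dotProduct hϖ hskew hF' hT' he))
  rw [← pow_add]
  exact pow_dvd_pow ϖ (multiplicity_exponent_le ha hw fun j => by simp only [he_def]; omega)

end Multiplicity

section Existence

variable {B : Type*} [CommRing B] {v : Fin 6 → Fin 2 → Fin 4 → B} {p : Fin 6 → Fin 4 → B}

theorem meetBracket_smul_cross3 {s : Fin 6 → Fin 4 → B} (hp : ∀ i c, p i ⬝ᵥ v i c = 0)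
    (h : ∑ i, vecMulVec (s i) (p i) = 0) (σ : Equiv.Perm (Fin 6)) :
    meetBracket (p (σ 2)) (p (σ 4)) (v (σ 5)) • cross3 (s (σ 0)) (s (σ 1)) (s (σ 2)) =
      -(meetBracket (p (σ 3)) (p (σ 4)) (v (σ 5)) •
        cross3 (s (σ 0)) (s (σ 1)) (s (σ 3))) := by
  have hrotate (a b c : Fin 4 → B) : cross3 a b c = cross3 c a b := by
    rw [cross3_swap_right, cross3_swap_left, neg_neg]
  rw [hrotate, hrotate _ _ (s (σ 3))]
  refine smul_cross3_of_relation ?_ (y := meetBracket (p (σ 0)) (p (σ 4)) (v (σ 5)))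
    (z := meetBracket (p (σ 1)) (p (σ 4)) (v (σ 5)))
  rw [← four_term_relation hp h σ]
  abel

theorem meetBracket_mul_lineBracket {t : Fin 6 → Fin 2 → B} (hp : ∀ i c, p i ⬝ᵥ v i c = 0)
    (h : ∑ i, vecMulVec (linePt (v i) (t i)) (p i) = 0) (σ : Equiv.Perm (Fin 6)) :
    meetBracket (p (σ 2)) (p (σ 4)) (v (σ 5)) * lineBracket (v (σ 0))
        (linePt (v (σ 1)) (t (σ 1))) (linePt (v (σ 2)) (t (σ 2))) =
      -(meetBracket (p (σ 3)) (p (σ 4)) (v (σ 5)) * lineBracket (v (σ 0))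
        (linePt (v (σ 1)) (t (σ 1))) (linePt (v (σ 3)) (t (σ 3)))) := by
  have hrel := congrArg (joinPlane (v (σ 0)) (linePt (v (σ 1)) (t (σ 1))) ⬝ᵥ ·)
    (four_term_relation hp h σ)
  have hfirst : joinPlane (v (σ 0)) (linePt (v (σ 1)) (t (σ 1))) ⬝ᵥ
      linePt (v (σ 0)) (t (σ 0)) = 0 := by
    simp [linePt, dotProduct_add, dotProduct_smul, joinPlane_dotProduct_line]
  have hsecond : joinPlane (v (σ 0)) (linePt (v (σ 1)) (t (σ 1))) ⬝ᵥ
      linePt (v (σ 1)) (t (σ 1)) = 0 := by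
    rw [joinPlane_dotProduct, lineBracket, bracket_eq]
    ring
  simp only [dotProduct_add, dotProduct_smul, hfirst, hsecond, dotProduct_zero,
    joinPlane_dotProduct, smul_eq_mul] at hrel
  linear_combination hrel

theorem meetBracket_dvd_lineBracket {t : Fin 6 → Fin 2 → B} (hp : ∀ i c, p i ⬝ᵥ v i c = 0)
    (h : ∑ i, vecMulVec (linePt (v i) (t i)) (p i) = 0) [DecompositionMonoid B]
    (hcop : ∀ σ : Equiv.Perm (Fin 6), IsRelPrime (meetBracket (p (σ 3)) (p (σ 4)) (v (σ 5)))
      (meetBracket (p (σ 2)) (p (σ 4)) (v (σ 5)))) (σ : Equiv.Perm (Fin 6)) :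
    meetBracket (p (σ 3)) (p (σ 4)) (v (σ 5)) ∣ lineBracket (v (σ 0))
      (linePt (v (σ 1)) (t (σ 1))) (linePt (v (σ 2)) (t (σ 2))) :=
  (hcop σ).dvd_of_dvd_mul_left
    (meetBracket_mul_lineBracket hp h σ ▸ dvd_neg.2 (dvd_mul_right _ _))

variable [IsDomain B]

theorem meetBracket_smul_eq_sign_smul_cross3 {s : Fin 6 → Fin 4 → B} {T : Fin 4 → B}
    (hp : ∀ i c, p i ⬝ᵥ v i c = 0) (h : ∑ i, vecMulVec (s i) (p i) = 0)
    (hswap : ∀ i m n, meetBracket (p i) (p n) (v m) = -meetBracket (p i) (p m) (v n))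
    (hne : ∀ σ : Equiv.Perm (Fin 6), meetBracket (p (σ 3)) (p (σ 4)) (v (σ 5)) ≠ 0)
    (hT : meetBracket (p 3) (p 4) (v 5) • T = cross3 (s 0) (s 1) (s 2))
    (σ : Equiv.Perm (Fin 6)) :
    meetBracket (p (σ 3)) (p (σ 4)) (v (σ 5)) • T =
      Equiv.Perm.sign σ • cross3 (s (σ 0)) (s (σ 1)) (s (σ 2)) := by
  have hσ : σ ∈ Submonoid.closure
      (Set.range fun i : Fin 5 => Equiv.swap i.castSucc i.succ) := by
    rw [Equiv.Perm.mclosure_swap_castSucc_succ]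
    trivial
  induction hσ using Submonoid.closure_induction_right with
  | one => simpa using hT
  | mul_right σ _ τ hτ ih =>
    obtain ⟨i, rfl⟩ := hτ
    rw [Equiv.Perm.sign_mul, Equiv.Perm.sign_swap i.castSucc_lt_succ.ne, mul_neg_one,
      Units.neg_smul]
    fin_cases i <;>
      simp only [Nat.reduceAdd, Fin.zero_eta, Fin.mk_one, Fin.isValue, Fin.reduceFinMk,
        Fin.castSucc_zero, Fin.castSucc_one, Fin.succ_zero_eq_one, Fin.succ_one_eq_two,
        Fin.reduceCastSucc, Fin.reduceSucc, Equiv.Perm.coe_mul, Function.comp_apply,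
        Equiv.swap_apply_def, Fin.reduceEq, ↓reduceIte, zero_ne_one]
    · rw [ih, cross3_swap_left (s (σ 1)), smul_neg]
    · rw [ih, cross3_swap_right _ (s (σ 2)), smul_neg]
    · have := meetBracket_smul_cross3 hp h σ
      refine smul_right_injective _ (hne σ) ?_
      dsimp only
      rw [smul_comm, ih, smul_comm, this, smul_neg, smul_neg,
        smul_comm (Equiv.Perm.sign σ)]
    · rw [meetBracket_swap, neg_smul, ih]
    · rw [hswap, neg_smul, ih]

/-- The four-term relations show that `sᵢ ∧ sⱼ ∧ sₖ` divided by a suitable `meetBracket` is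
independent of the choice of `i`, `j`, `k`; coprimality makes the quotient polynomial. -/
theorem exists_isToddMap [DecompositionMonoid B] {t : Fin 6 → Fin 2 → B}
    (hp : ∀ i c, p i ⬝ᵥ v i c = 0) (h : ∑ i, vecMulVec (linePt (v i) (t i)) (p i) = 0)
    (hswap : ∀ i m n, meetBracket (p i) (p n) (v m) = -meetBracket (p i) (p m) (v n))
    (hne : ∀ σ : Equiv.Perm (Fin 6), meetBracket (p (σ 3)) (p (σ 4)) (v (σ 5)) ≠ 0)
    (hcop : ∀ σ : Equiv.Perm (Fin 6), IsRelPrime (meetBracket (p (σ 3)) (p (σ 4)) (v (σ 5)))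
      (meetBracket (p (σ 2)) (p (σ 4)) (v (σ 5)))) :
    ∃ T E, IsToddMap v p t T E := by
  have hdvd (k : Fin 4) : meetBracket (p 3) (p 4) (v 5) ∣
      cross3 (linePt (v 0) (t 0)) (linePt (v 1) (t 1)) (linePt (v 2) (t 2)) k :=
    (hcop 1).dvd_of_dvd_mul_left
      ⟨-cross3 (linePt (v 0) (t 0)) (linePt (v 1) (t 1)) (linePt (v 3) (t 3)) k, by
        simpa using congrFun (meetBracket_smul_cross3 hp h 1) k⟩
  choose T hT using hdvd
  have hsign := meetBracket_smul_eq_sign_smul_cross3 hp h hswap hne (funext fun k => (hT k).symm)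
  let τ (j : Fin 6) : Equiv.Perm (Fin 6) := Equiv.swap 0 j
  let ε (j : Fin 6) : B := ((Equiv.Perm.sign (τ j) : ℤ) : B)
  choose e he using fun j => meetBracket_dvd_lineBracket hp h hcop (τ j)
  have hdot (j : Fin 6) (x : Fin 4 → B) :
      meetBracket (p (τ j 3)) (p (τ j 4)) (v (τ j 5)) * (T ⬝ᵥ x) = ε j *
        (cross3 (linePt (v j) (t j)) (linePt (v (τ j 1)) (t (τ j 1)))
          (linePt (v (τ j 2)) (t (τ j 2))) ⬝ᵥ x) := by
    have := congrArg (· ⬝ᵥ x) (hsign (τ j))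
    rw [Units.smul_def] at this
    rwa [smul_dotProduct, smul_dotProduct, smul_eq_mul, zsmul_eq_mul,
      Equiv.swap_apply_left] at this
  refine ⟨T, fun j => -(ε j * e j), hp, h, hsign, fun j => ?_, fun j => ?_⟩
  · refine mul_left_cancel₀ (hne (τ j)) ?_
    have hej := he j
    rw [Equiv.swap_apply_left] at hej
    rw [hdot, cross3_linePt_dotProduct_zero, hej]
    ring
  · refine mul_left_cancel₀ (hne (τ j)) ?_
    have hej := he j
    rw [Equiv.swap_apply_left] at hej
    rw [hdot, cross3_linePt_dotProduct_one, hej]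
    ring

end Existence

section Quadrics

variable {B K : Type*} [CommRing B] [Field K]

theorem quadric_linePt_add_linePt (w₁ w₂ w₃ : Fin 2 → Fin 4 → B) (s t : Fin 2 → B) :
    quadric w₁ w₂ w₃ (linePt w₂ s + linePt w₃ t) =
      -(lineBracket w₂ (w₃ 0) (w₃ 1) * lineBracket w₁ (linePt w₂ s) (linePt w₃ t)) := by
  have hzero : joinPlane w₂ (linePt w₂ s + linePt w₃ t) ⬝ᵥ w₃ 0 =
      -(t 1 * lineBracket w₂ (w₃ 0) (w₃ 1)) := by
    simp only [joinPlane_dotProduct, lineBracket, bracket_eq, linePt, Pi.add_apply, Pi.smul_apply,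
      smul_eq_mul]
    ring
  have hone : joinPlane w₂ (linePt w₂ s + linePt w₃ t) ⬝ᵥ w₃ 1 =
      t 0 * lineBracket w₂ (w₃ 0) (w₃ 1) := by
    simp only [joinPlane_dotProduct, lineBracket, bracket_eq, linePt, Pi.add_apply, Pi.smul_apply,
      smul_eq_mul]
    ring
  rw [quadric, meetBracket, hzero, hone]
  simp only [joinPlane_dotProduct, lineBracket, bracket_eq, linePt, Pi.add_apply, Pi.smul_apply,
    smul_eq_mul]
  ring

theorem quadric_eq_zero_of_left (w₁ w₂ w₃ : Fin 2 → Fin 4 → B) (c : Fin 2) :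
    quadric w₁ w₂ w₃ (w₁ c) = 0 := by
  have hplane (x : Fin 4 → B) : joinPlane w₁ (w₁ c) ⬝ᵥ x = 0 := by
    rw [joinPlane_dotProduct]
    fin_cases c <;> simp [lineBracket, bracket_eq] <;> ring
  simp [quadric, meetBracket, hplane]

theorem incidence_det (w w₁ w₂ : Fin 2 → Fin 4 → B) :
    incidence w w₁ w₂ 0 * incidence w w₁ w₂ 3 - incidence w w₁ w₂ 1 * incidence w w₁ w₂ 2 =
      lineBracket w (w₁ 0) (w₁ 1) * lineBracket w (w₂ 0) (w₂ 1) := by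
  simp [incidence, lineBracket, bracket_eq]
  ring

theorem irreducible_of_irreducible_aeval_mulVec {n : Type*} [Fintype n] [DecidableEq n]
    {A : Matrix n n K} (hA : A.det ≠ 0) {F : MvPolynomial n K}
    (hF : Irreducible (aeval (A.map C *ᵥ (X : n → MvPolynomial n K)) F)) : Irreducible F := by
  let φ : MvPolynomial n K →ₐ[K] MvPolynomial n K := aeval (A.map C *ᵥ X)
  let ψ : MvPolynomial n K →ₐ[K] MvPolynomial n K := aeval (A⁻¹.map C *ᵥ X)
  have hinv : ψ.comp φ = AlgHom.id K _ := by
    have hmul : A.map C * A⁻¹.map C = (1 : Matrix n n (MvPolynomial n K)) := by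
      rw [← Matrix.map_mul, mul_nonsing_inv _ hA.isUnit, Matrix.map_one _ C_0 C_1]
    refine algHom_ext fun k => ?_
    have hψ : ψ (φ (X k)) = (A.map C *ᵥ (A⁻¹.map C *ᵥ X)) k := by
      simp [φ, ψ, mulVec, dotProduct]
    rw [AlgHom.comp_apply, hψ, mulVec_mulVec, hmul, one_mulVec, AlgHom.id_apply]
  have : IsLocalHom φ := ⟨fun G hG => by
    simpa [← AlgHom.comp_apply, hinv] using hG.map ψ⟩
  exact hF.of_map (f := φ)

theorem irreducible_X_mul_X_add_X_mul_X :
    Irreducible (X 0 * X 2 + X 1 * X 3 : MvPolynomial (Fin 4) K) := by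
  let c : Fin 2 →₀ K := Finsupp.equivFunOnFinite.symm fun _ => 1
  have hc (i : Fin 2) : c i = 1 := rfl
  have h : Irreducible (sumSMulXSMulY c) :=
    irreducible_sumSMulXSMulY (c := c) ⟨0, by simp [hc], 1, by simp [hc], by decide⟩
      fun r hr => isUnit_of_dvd_one (by simpa [hc] using hr 0)
  rw [← MulEquiv.irreducible_iff (renameEquiv K (finSumFinEquiv : Fin 2 ⊕ Fin 2 ≃ Fin 4))] at h
  convert h using 1
  rw [sumSMulXSMulY, Finsupp.linearCombination_apply, Finsupp.sum_fintype _ _ (by simp)]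
  simp only [Fin.sum_univ_two, hc, one_smul, map_add, map_mul, renameEquiv_apply, rename_X]
  rfl

theorem aeval_quadric_X (w₁ w₂ w₃ : Fin 2 → Fin 4 → K) (Y : Fin 4 → MvPolynomial (Fin 4) K) :
    aeval Y (quadric (fun c => C ∘ w₁ c) (fun c => C ∘ w₂ c) (fun c => C ∘ w₃ c) X) =
      quadric (fun c => C ∘ w₁ c) (fun c => C ∘ w₂ c) (fun c => C ∘ w₃ c) Y := by
  have hC (x : Fin 4 → K) : (aeval Y : MvPolynomial (Fin 4) K →ₐ[K] _).toRingHom ∘ C ∘ x =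
      C ∘ x := by
    funext k
    simp
  have hX : (aeval Y : MvPolynomial (Fin 4) K →ₐ[K] _).toRingHom ∘ X = Y := by
    funext k
    simp
  have hmap := map_quadric (aeval Y : MvPolynomial (Fin 4) K →ₐ[K] _).toRingHom
    (fun c => C ∘ w₁ c) (fun c => C ∘ w₂ c) (fun c => C ∘ w₃ c) X
  simp only [hC, hX] at hmap
  exact hmap

/-- In coordinates adapted to `w₂` and `w₃` the quadric is `x₀x₂ + x₁x₃` up to a factor. -/
theorem irreducible_quadric {w₁ w₂ w₃ : Fin 2 → Fin 4 → K}
    (h₁₂ : lineBracket w₁ (w₂ 0) (w₂ 1) ≠ 0) (h₁₃ : lineBracket w₁ (w₃ 0) (w₃ 1) ≠ 0)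
    (h₂₃ : lineBracket w₂ (w₃ 0) (w₃ 1) ≠ 0) :
    Irreducible (quadric (fun c => C ∘ w₁ c) (fun c => C ∘ w₂ c) (fun c => C ∘ w₃ c)
      (X : Fin 4 → MvPolynomial (Fin 4) K)) := by
  set N := incidence w₁ w₂ w₃ with hN
  let A : Matrix (Fin 4) (Fin 4) K :=
    (Matrix.of ![w₂ 0, w₂ 1, linePt w₃ ![N 3, -N 2], linePt w₃ ![-N 1, N 0]])ᵀ
  have hdet : N 0 * N 3 - N 1 * N 2 ≠ 0 := incidence_det w₁ w₂ w₃ ▸ mul_ne_zero h₁₂ h₁₃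
  have hA : A.det = (N 0 * N 3 - N 1 * N 2) * lineBracket w₂ (w₃ 0) (w₃ 1) := by
    rw [det_transpose, ← bracket, lineBracket]
    simp only [bracket_eq, linePt, Pi.add_apply, Pi.smul_apply, smul_eq_mul, cons_val_zero,
      cons_val_one]
    ring
  refine irreducible_of_irreducible_aeval_mulVec (A := A) (hA ▸ mul_ne_zero hdet h₂₃) ?_
  have hsubst : A.map C *ᵥ (X : Fin 4 → MvPolynomial (Fin 4) K) =
      linePt (fun c => C ∘ w₂ c) ![X 0, X 1]
        + linePt (fun c => C ∘ w₃ c) ![C (N 3) * X 2 - C (N 1) * X 3,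
          C (N 0) * X 3 - C (N 2) * X 2] := by
    funext k
    simp [A, mulVec, dotProduct, linePt, Fin.sum_univ_four]
    ring
  have hquadric : aeval (A.map C *ᵥ (X : Fin 4 → MvPolynomial (Fin 4) K))
      (quadric (fun c => C ∘ w₁ c) (fun c => C ∘ w₂ c) (fun c => C ∘ w₃ c)
        (X : Fin 4 → MvPolynomial (Fin 4) K)) =
      C (-(lineBracket w₂ (w₃ 0) (w₃ 1) * (N 0 * N 3 - N 1 * N 2))) *
        (X 0 * X 2 + X 1 * X 3) := by
    rw [aeval_quadric_X, hsubst, quadric_linePt_add_linePt, lineBracket_linePt_linePt,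
      ← map_incidence, show lineBracket (fun c => C ∘ w₂ c) (C ∘ w₃ 0) (C ∘ w₃ 1) =
        C (lineBracket w₂ (w₃ 0) (w₃ 1)) from (map_lineBracket C _ _ _).symm, ← hN]
    simp [dotProduct, Fin.sum_univ_four]
    ring
  rw [hquadric, irreducible_isUnit_mul (((mul_ne_zero h₂₃ hdet).isUnit.neg).map C)]
  exact irreducible_X_mul_X_add_X_mul_X

end Quadrics

section GeneralPosition

variable {K : Type*} [Field K] {v : Fin 6 → Fin 2 → Fin 4 → K}

/-- General position of six lines: they are pairwise skew, the quadric containing three of them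
avoids a chosen point on each of the other ones, and no line meets five of them. -/
structure GeneralPosition (v : Fin 6 → Fin 2 → Fin 4 → K) : Prop where
  lineBracket_ne_zero : ∀ i j, i ≠ j → lineBracket (v i) (v j 0) (v j 1) ≠ 0
  quadric_ne_zero : ∀ σ : Equiv.Perm (Fin 6),
    quadric (v (σ 0)) (v (σ 1)) (v (σ 2)) (v (σ 3) 0) ≠ 0
  transversalForm_ne_zero : ∀ σ : Equiv.Perm (Fin 6),
    transversalForm (v (σ 0)) (v (σ 1)) (v (σ 2)) (v (σ 3)) (v (σ 4)) ≠ 0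

/-- The lines `v i`, regarded as lines over the coordinate ring of `P³`. -/
def constLine (v : Fin 6 → Fin 2 → Fin 4 → K) :
    Fin 6 → Fin 2 → Fin 4 → MvPolynomial (Fin 4) K :=
  fun i c => C ∘ v i c

/-- The plane joining the line `v i` to the generic point of `P³`. -/
def genericPlane (v : Fin 6 → Fin 2 → Fin 4 → K) (i : Fin 6) : Fin 4 → MvPolynomial (Fin 4) K :=
  joinPlane (constLine v i) X

theorem genericPlane_dotProduct (i : Fin 6) (c : Fin 2) :
    genericPlane v i ⬝ᵥ constLine v i c = 0 :=
  joinPlane_dotProduct_line _ _ _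

theorem meetBracket_genericPlane_swap_right (i m n : Fin 6) :
    meetBracket (genericPlane v i) (genericPlane v n) (constLine v m) =
      -meetBracket (genericPlane v i) (genericPlane v m) (constLine v n) :=
  quadric_swap_right _ _ _ _

theorem eval_meetBracket_genericPlane (x : Fin 4 → K) (i m n : Fin 6) :
    eval x (meetBracket (genericPlane v i) (genericPlane v m) (constLine v n)) =
      quadric (v i) (v m) (v n) x := by
  have hC (y : Fin 4 → K) : eval x ∘ C ∘ y = y := by
    funext k
    simp
  have hX : eval x ∘ (X : Fin 4 → MvPolynomial (Fin 4) K) = x := by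
    funext k
    simp
  refine (map_quadric (eval x) (constLine v i) (constLine v m) (constLine v n) X).trans ?_
  simp only [constLine, hC, hX]

namespace GeneralPosition

theorem irreducible_meetBracket (hv : GeneralPosition v) {i m n : Fin 6} (him : i ≠ m)
    (hin : i ≠ n) (hmn : m ≠ n) :
    Irreducible (meetBracket (genericPlane v i) (genericPlane v m) (constLine v n)) :=
  irreducible_quadric (hv.lineBracket_ne_zero i m him) (hv.lineBracket_ne_zero i n hin)
    (hv.lineBracket_ne_zero m n hmn)

theorem isRelPrime_meetBracket (hv : GeneralPosition v) {i l m n : Fin 6}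
    (h : [i, m, n, l].Nodup) :
    IsRelPrime (meetBracket (genericPlane v i) (genericPlane v m) (constLine v n))
      (meetBracket (genericPlane v l) (genericPlane v m) (constLine v n)) := by
  obtain ⟨σ, hσ⟩ := exists_perm_eq_of_injective (by decide : 4 ≤ 6) ![i, m, n, l]
    (by rw [← List.nodup_ofFn]; simpa using h)
  obtain rfl : σ 0 = i := hσ 0
  obtain rfl : σ 1 = m := hσ 1
  obtain rfl : σ 2 = n := hσ 2
  obtain rfl : σ 3 = l := hσ 3
  have hirr (i : Fin 6) (h₁ : i ≠ 1) (h₂ : i ≠ 2) : Irreducible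
      (meetBracket (genericPlane v (σ i)) (genericPlane v (σ 1)) (constLine v (σ 2))) :=
    hv.irreducible_meetBracket (σ.injective.ne h₁) (σ.injective.ne h₂) (by simp)
  rw [(hirr 0 (by decide) (by decide)).isRelPrime_iff_not_dvd]
  intro hdvd
  obtain ⟨u, hu⟩ := (hirr 0 (by decide) (by decide)).dvd_symm (hirr 3 (by decide) (by decide)) hdvd
  refine hv.quadric_ne_zero σ ?_
  rw [← eval_meetBracket_genericPlane, hu, map_mul, eval_meetBracket_genericPlane,
    quadric_eq_zero_of_left, zero_mul]

theorem exists_isToddMap (hv : GeneralPosition v) {t : Fin 6 → Fin 2 → MvPolynomial (Fin 4) K}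
    (h : ∑ i, vecMulVec (linePt (constLine v i) (t i)) (genericPlane v i) = 0) :
    ∃ T E, IsToddMap (constLine v) (genericPlane v) t T E :=
  ToddTransformation.exists_isToddMap genericPlane_dotProduct h meetBracket_genericPlane_swap_right
    (fun _ => (hv.irreducible_meetBracket (by simp) (by simp) (by simp)).ne_zero)
    fun _ => hv.isRelPrime_meetBracket (by simp)

theorem nondegenerate {S : Type*} [CommRing S] [Nontrivial S] (hv : GeneralPosition v)
    (g : K →+* S) {p : Fin 6 → Fin 4 → S} {o : Fin 6} (hp : ∀ i, p i ≠ 0)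
    (hmeet : ∀ σ : Equiv.Perm (Fin 6), σ 4 ≠ o → σ 5 ≠ o →
      meetBracket (p (σ 0)) (p (σ 4)) (g ∘ v (σ 5) ·) ≠ 0 ∨
        meetBracket (p (σ 1)) (p (σ 4)) (g ∘ v (σ 5) ·) ≠ 0) :
    Nondegenerate (fun i c => g ∘ v i c) p o where
  lineBracket_ne_zero i j hij := by
    rw [← map_lineBracket]
    exact (map_ne_zero g).2 (hv.lineBracket_ne_zero i j hij)
  transversalForm_ne_zero σ := by
    rw [← map_transversalForm]
    exact (map_ne_zero g).2 (hv.transversalForm_ne_zero σ)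
  plane_ne_zero := hp
  meetBracket_ne_zero := hmeet

theorem nondegenerate_quotient (hv : GeneralPosition v) {ϖ : MvPolynomial (Fin 4) K}
    (hϖ : Prime ϖ) (o : Fin 6) :
    Nondegenerate (fun i c => Ideal.Quotient.mk (Ideal.span {ϖ}) ∘ constLine v i c)
      (fun i => Ideal.Quotient.mk (Ideal.span {ϖ}) ∘ genericPlane v i) o := by
  set f := Ideal.Quotient.mk (Ideal.span {ϖ})
  have hf (b) : f b = 0 ↔ ϖ ∣ b := by
    rw [Ideal.Quotient.eq_zero_iff_mem, Ideal.mem_span_singleton]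
  have hprime : (Ideal.span {ϖ}).IsPrime := (Ideal.span_singleton_prime hϖ.ne_zero).2 hϖ
  have hmeet {i l m n : Fin 6} (h : [i, m, n, l].Nodup) :
      f (meetBracket (genericPlane v i) (genericPlane v m) (constLine v n)) ≠ 0 ∨
        f (meetBracket (genericPlane v l) (genericPlane v m) (constLine v n)) ≠ 0 := by
    by_contra! hzero
    rw [hf, hf] at hzero
    exact hϖ.not_isUnit (hv.isRelPrime_meetBracket h hzero.1 hzero.2)
  refine hv.nondegenerate (f.comp C) (fun i hi => ?_) fun σ _ _ => ?_
  · have hzero (m : Fin 6) :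
        f (meetBracket (genericPlane v m) (genericPlane v i) (constLine v (Equiv.swap 0 i 3))) =
          0 := by
      rw [map_meetBracket, hi]
      simp [meetBracket]
    have hnodup : ∀ i : Fin 6,
        [Equiv.swap 0 i 1, i, Equiv.swap 0 i 3, Equiv.swap 0 i 2].Nodup := by decide
    exact (hmeet (hnodup i)).elim (· (hzero _)) (· (hzero _))
  · rcases hmeet (i := σ 0) (m := σ 4) (n := σ 5) (l := σ 1) (by simp) with h | h <;>
      rw [map_meetBracket] at h
    exacts [Or.inl h, Or.inr h]

end GeneralPosition

end GeneralPosition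

section DualSystem

variable {K : Type*} [Field K]

theorem finrank_homogeneousSubmodule (N a : ℕ) :
    Module.finrank K (homogeneousSubmodule (Fin N) K a) = (N + a - 1).choose a := by
  have hset : {d : Fin N →₀ ℕ | d.degree = a} =
      ((Finset.univ : Finset (Fin N)).finsuppAntidiag a : Set (Fin N →₀ ℕ)) := by
    ext d
    simp [Finsupp.degree_eq_sum]
  have hrank := Module.finrank_eq_nat_card_basis
    (basisRestrictSupport K {d : Fin N →₀ ℕ | d.degree = a})
  rw [restrictSupport] at hrank
  rw [homogeneousSubmodule_eq_finsupp_supported, hrank, hset, Nat.card_coe_set_eq,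
    Set.ncard_coe_finset, Finset.card_finsuppAntidiag_nat_eq_choose, Finset.card_univ,
    Fintype.card_fin]

/-- The ideal of the dual line: the planes containing the line `w` form a line in the dual space,
cut out by the two linear forms `Y ↦ Y ⬝ᵥ w c`. -/
def dualLineIdeal (w : Fin 2 → Fin 4 → K) : Ideal (MvPolynomial (Fin 4) K) :=
  Ideal.span (Set.range fun c => (C ∘ w c) ⬝ᵥ (X : Fin 4 → MvPolynomial (Fin 4) K))

theorem aeval_dotProduct_X {B : Type*} [CommRing B] [Algebra K B] (y : Fin 4 → K) (Y : Fin 4 → B) :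
    aeval Y ((C ∘ y) ⬝ᵥ (X : Fin 4 → MvPolynomial (Fin 4) K)) = Y ⬝ᵥ (algebraMap K B ∘ y) := by
  simp only [dotProduct, Function.comp_apply, map_sum, map_mul, aeval_C, aeval_X, mul_comm]

theorem dvd_aeval_of_mem_dualLineIdeal {w : Fin 2 → Fin 4 → K} {F : MvPolynomial (Fin 4) K}
    (hF : F ∈ dualLineIdeal w) {B : Type*} [CommRing B] [Algebra K B] {d : B} {Y : Fin 4 → B}
    (h : ∀ c, d ∣ Y ⬝ᵥ (algebraMap K B ∘ w c)) : d ∣ aeval Y F := by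
  rw [← Ideal.mem_span_singleton]
  suffices dualLineIdeal w ≤ (Ideal.span {d}).comap (aeval Y) from this hF
  rw [dualLineIdeal, Ideal.span_le]
  rintro _ ⟨c, rfl⟩
  rw [SetLike.mem_coe, Ideal.mem_comap, aeval_dotProduct_X, Ideal.mem_span_singleton]
  exact h c

theorem mem_dualLineIdeal_of_aeval_eq_zero {N M : Matrix (Fin 4) (Fin 4) K} (hNM : N * M = 1)
    {F : MvPolynomial (Fin 4) K}
    (hF : aeval (fun k => C (N k 2) * X 0 + C (N k 3) * X 1 : Fin 4 → MvPolynomial (Fin 2) K) F =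
      0) :
    F ∈ dualLineIdeal ![M 0, M 1] := by
  set q := Ideal.Quotient.mkₐ K (dualLineIdeal ![M 0, M 1])
  set ℓ : Fin 4 → MvPolynomial (Fin 4) K := M.map C *ᵥ X
  have hℓ (c : Fin 2) : q ((C ∘ ![M 0, M 1] c) ⬝ᵥ X) = 0 :=
    Ideal.Quotient.eq_zero_iff_mem.2 (Ideal.subset_span ⟨c, rfl⟩)
  have hX : N.map C *ᵥ ℓ = X := by
    rw [mulVec_mulVec, ← Matrix.map_mul, hNM, Matrix.map_one _ (map_zero C) (map_one C),
      one_mulVec]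
  have hcomp : q = (aeval ![q (ℓ 2), q (ℓ 3)]).comp
      (aeval fun k => C (N k 2) * X 0 + C (N k 3) * X 1) := by
    refine algHom_ext fun k => ?_
    have hq : q (X k) = ∑ r, algebraMap K _ (N k r) * q (ℓ r) := by
      rw [← congrFun hX k]
      simp only [mulVec, dotProduct, map_apply, map_sum, map_mul, ← algebraMap_eq,
        AlgHom.commutes]
    rw [hq, Fin.sum_univ_four, show q (ℓ 0) = 0 from hℓ 0, show q (ℓ 1) = 0 from hℓ 1]
    simp
  refine Ideal.Quotient.eq_zero_iff_mem.1 ?_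
  change q F = 0
  rw [hcomp, AlgHom.comp_apply, hF, map_zero]

/-- The linear system of surfaces of degree `a` in the dual space which contain the dual lines
of the lines `v j`. -/
def dualSystem {ι : Type*} (v : ι → Fin 2 → Fin 4 → K) (a : ℕ) :
    Submodule K (MvPolynomial (Fin 4) K) :=
  homogeneousSubmodule (Fin 4) K a ⊓ ⨅ j, (dualLineIdeal (v j)).restrictScalars K

theorem choose_le_finrank_dualSystem {ι : Type*} [Fintype ι] {v v' : ι → Fin 2 → Fin 4 → K}
    (hv : ∀ j, lineBracket (v j) (v' j 0) (v' j 1) ≠ 0) (a : ℕ) :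
    (a + 3).choose 3 ≤ Module.finrank K (dualSystem v a) + Fintype.card ι * (a + 1) := by
  have hfin (n : ℕ) : FiniteDimensional K (homogeneousSubmodule (Fin n) K a) :=
    Module.Finite.iff_fg.2 (homogeneousSubmodule_fg _ _ a)
  let M (j : ι) : Matrix (Fin 4) (Fin 4) K := Matrix.of ![v j 0, v j 1, v' j 0, v' j 1]
  have hM (j : ι) : (M j)⁻¹ * M j = 1 := Matrix.nonsing_inv_mul _ (isUnit_iff_ne_zero.2 (hv j))
  let restrict (j : ι) : MvPolynomial (Fin 4) K →ₐ[K] MvPolynomial (Fin 2) K :=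
    aeval fun k => C ((M j)⁻¹ k 2) * X 0 + C ((M j)⁻¹ k 3) * X 1
  have hrestrict (j : ι) (F) (hF : F ∈ homogeneousSubmodule (Fin 4) K a) :
      restrict j F ∈ homogeneousSubmodule (Fin 2) K a := by
    have := IsHomogeneous.aeval (τ := Fin 2) hF
      (fun k => C ((M j)⁻¹ k 2) * X 0 + C ((M j)⁻¹ k 3) * X 1)
      fun k => (isHomogeneous_C_mul_X _ _).add (isHomogeneous_C_mul_X _ _)
    rwa [one_mul] at this
  let Λ : homogeneousSubmodule (Fin 4) K a →ₗ[K] ι → homogeneousSubmodule (Fin 2) K a :=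
    LinearMap.pi fun j => (restrict j).toLinearMap.restrict (hrestrict j)
  have hker : (LinearMap.ker Λ).map (Submodule.subtype _) ≤ dualSystem v a := by
    rintro _ ⟨F, hF, rfl⟩
    refine ⟨F.2, (Submodule.mem_iInf _).2 fun j => ?_⟩
    have hj : restrict j F = 0 := congrArg Subtype.val (congrFun (LinearMap.mem_ker.1 hF) j)
    have := mem_dualLineIdeal_of_aeval_eq_zero (hM j) hj
    rwa [show ![M j 0, M j 1] = v j from List.ofFn_inj.1 rfl] at this
  have hfin' : FiniteDimensional K (dualSystem v a) := Submodule.finiteDimensional_of_le inf_le_left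
  have hdim := Λ.finrank_range_add_finrank_ker
  have hrange : Module.finrank K (LinearMap.range Λ) ≤ Fintype.card ι * (a + 1) := by
    refine (Submodule.finrank_le _).trans ?_
    rw [Module.finrank_pi_fintype, Finset.sum_const, Finset.card_univ, smul_eq_mul,
      finrank_homogeneousSubmodule, show 2 + a - 1 = a + 1 by omega, Nat.choose_succ_self_right]
  have hle := Submodule.finrank_mono hker
  rw [Submodule.finrank_map_subtype_eq] at hle
  rw [finrank_homogeneousSubmodule, show 4 + a - 1 = a + 3 by omega,
    Nat.choose_symm_add] at hdim
  omega

end DualSystem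

section Blowup

variable {K : Type*} [Field K]

/-- The projection of the generic point of `P³` to the line `w`, where the functionals `e` are dual
to the two points spanning `w`. -/
def linePart (w e : Fin 2 → Fin 4 → K) : Fin 4 → MvPolynomial (Fin 4) K :=
  linePt (fun c => C ∘ w c) fun c => (C ∘ e c) ⬝ᵥ X

/-- The ring homomorphism which scales by the new variable the directions transverse to the
line `w`, as in the extended Rees algebra of its ideal. -/
def blowup (w e : Fin 2 → Fin 4 → K) :
    MvPolynomial (Fin 4) K →ₐ[K] Polynomial (MvPolynomial (Fin 4) K) :=
  aeval fun k => Polynomial.C (linePart w e k) + Polynomial.X * Polynomial.C (X k - linePart w e k)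

variable {w e : Fin 2 → Fin 4 → K}

theorem blowup_C (c : K) : blowup w e (C c) = Polynomial.C (C c) :=
  (blowup w e).commutes c

theorem eval_one_blowup (G : MvPolynomial (Fin 4) K) : Polynomial.eval 1 (blowup w e G) = G := by
  have hid : ((Polynomial.evalRingHom 1).comp (blowup w e).toRingHom) =
      RingHom.id (MvPolynomial (Fin 4) K) := by
    refine ringHom_ext (fun c => ?_) fun k => ?_
    · simp
    · simp [blowup]
  exact RingHom.congr_fun hid G

theorem blowup_injective : Function.Injective (blowup w e) :=
  (Function.LeftInverse.injective (g := Polynomial.eval 1) eval_one_blowup)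

theorem eval_linePart_linePt (he : ∀ c c', e c ⬝ᵥ w c' = if c = c' then 1 else 0) (s : Fin 2 → K)
    (k : Fin 4) : eval (linePt w s) (linePart w e k) = linePt w s k := by
  have hcoord (c : Fin 2) : ∑ l, e c l * linePt w s l = s c := by
    change e c ⬝ᵥ linePt w s = s c
    rw [linePt, dotProduct_add, dotProduct_smul, dotProduct_smul, he, he]
    fin_cases c <;> simp
  simp only [linePart, linePt, dotProduct, Function.comp_apply, Pi.add_apply, Pi.smul_apply,
    smul_eq_mul, map_add, map_mul, map_sum, eval_C, eval_X] at hcoord ⊢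
  rw [hcoord, hcoord]

theorem eval_coeff_zero_blowup (he : ∀ c c', e c ⬝ᵥ w c' = if c = c' then 1 else 0)
    (G : MvPolynomial (Fin 4) K) :
    eval (w 0) ((blowup w e G).coeff 0) = eval (w 0) G := by
  have hcomp : ((eval (w 0)).comp Polynomial.constantCoeff).comp (blowup w e).toRingHom =
      eval (w 0) := by
    refine ringHom_ext (fun c => ?_) fun k => ?_
    · simp
    · have hw : linePt w ![1, 0] = w 0 := by simp [linePt]
      simpa [blowup, hw] using eval_linePart_linePt he ![1, 0] k
  exact RingHom.congr_fun hcomp G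

theorem blowup_mem_reesAlgebra {w e : Fin 2 → Fin 4 → ℂ}
    (he : ∀ c c', e c ⬝ᵥ w c' = if c = c' then 1 else 0) (G : R3) :
    blowup w e G ∈ reesAlgebra (lineIdeal (Submodule.span ℂ {w 0, w 1})) := by
  have htrans (k : Fin 4) :
      X k - linePart w e k ∈ lineIdeal (Submodule.span ℂ {w 0, w 1}) := by
    intro x hx
    obtain ⟨s₀, s₁, rfl⟩ := Submodule.mem_span_pair.1 hx
    rw [map_sub, eval_X]
    exact sub_eq_zero.2 (eval_linePart_linePt he ![s₀, s₁] k).symm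
  induction G using MvPolynomial.induction_on with
  | C c => exact blowup_C (w := w) (e := e) c ▸ Subalgebra.algebraMap_mem _ (C c : R3)
  | add p q hp hq => exact map_add (blowup w e) p q ▸ add_mem hp hq
  | mul_X p k hp =>
    rw [map_mul, blowup, aeval_X]
    refine mul_mem hp (add_mem (Subalgebra.algebraMap_mem _ (linePart w e k)) ?_)
    rw [Polynomial.X_mul_C, Polynomial.C_mul_X_eq_monomial]
    exact reesAlgebra.monomial_mem.2 ((pow_one (lineIdeal _)).symm ▸ htrans k)

theorem mem_lineIdeal_pow_of_X_pow_dvd_blowup {w e : Fin 2 → Fin 4 → ℂ}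
    (he : ∀ c c', e c ⬝ᵥ w c' = if c = c' then 1 else 0) {m : ℕ} {G : R3}
    (h : Polynomial.X ^ m ∣ blowup w e G) :
    G ∈ lineIdeal (Submodule.span ℂ {w 0, w 1}) ^ m := by
  rw [← eval_one_blowup (w := w) (e := e) G, Polynomial.eval_eq_sum_range]
  refine sum_mem fun i _ => ?_
  rw [one_pow, mul_one]
  rcases lt_or_ge i m with hi | hi
  · rw [Polynomial.X_pow_dvd_iff.1 h i hi]
    exact zero_mem _
  · exact Ideal.pow_le_pow_right hi ((mem_reesAlgebra_iff _ _).1 (blowup_mem_reesAlgebra he G) i)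

end Blowup

section BlowupPlanes

variable {K : Type*} [Field K] {v : Fin 6 → Fin 2 → Fin 4 → K} {e : Fin 2 → Fin 4 → K} {o : Fin 6}

/-- The strict transforms of the planes joining the lines `v i` to the generic point, under the
blow-up of the line `v o`. -/
def strictPlane (v : Fin 6 → Fin 2 → Fin 4 → K) (o : Fin 6) (e : Fin 2 → Fin 4 → K) (i : Fin 6) :
    Fin 4 → Polynomial (MvPolynomial (Fin 4) K) :=
  if i = o then Polynomial.C ∘ genericPlane v o else blowup (v o) e ∘ genericPlane v i

theorem joinPlane_linePt_add_smul {B : Type*} [CommRing B] (w : Fin 2 → Fin 4 → B)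
    (t : Fin 2 → B) (c : B) (x : Fin 4 → B) :
    joinPlane w (linePt w t + c • (x - linePt w t)) = c • joinPlane w x := by
  funext k
  simp only [joinPlane, cross3, bracket_eq, linePt, Pi.add_apply, Pi.smul_apply, Pi.sub_apply,
    smul_eq_mul]
  ring

theorem blowup_comp_genericPlane (i : Fin 6) :
    blowup (v o) e ∘ genericPlane v i =
      (Polynomial.X : Polynomial (MvPolynomial (Fin 4) K)) ^ (Pi.single o 1 : Fin 6 → ℕ) i •
        strictPlane v o e i := by
  by_cases hi : i = o
  · subst hi
    rw [strictPlane, if_pos rfl, Pi.single_eq_same, pow_one, genericPlane]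
    refine (map_joinPlane (blowup (v i) e).toRingHom _ _).trans ?_
    let w (c : Fin 2) : Fin 4 → Polynomial (MvPolynomial (Fin 4) K) :=
      Polynomial.C ∘ constLine v i c
    let s (c : Fin 2) : Polynomial (MvPolynomial (Fin 4) K) := Polynomial.C ((C ∘ e c) ⬝ᵥ X)
    have hX : (blowup (v i) e).toRingHom ∘ X =
        linePt w s + (Polynomial.X : Polynomial (MvPolynomial (Fin 4) K)) •
          (Polynomial.C ∘ X - linePt w s) := by
      funext k
      simp [blowup, linePart, linePt, constLine, w, s]
    have hv : (fun c => (blowup (v i) e).toRingHom ∘ constLine v i c) = w := by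
      funext c k
      exact blowup_C _
    rw [hX, hv, joinPlane_linePt_add_smul, ← map_joinPlane]
  · rw [strictPlane, if_neg hi, Pi.single_eq_of_ne hi, pow_zero, one_smul]

theorem blowup_comp_constLine (o : Fin 6) (e : Fin 2 → Fin 4 → K) (j : Fin 6) (c : Fin 2) :
    (blowup (v o) e).toRingHom ∘ constLine v j c =
      algebraMap K (Polynomial (MvPolynomial (Fin 4) K)) ∘ v j c := by
  funext k
  exact (blowup (v o) e).commutes (v j c k)

theorem eval_genericPlane_ne_zero (hv : GeneralPosition v) {i j : Fin 6} (hij : i ≠ j) :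
    eval (v j 0) ∘ genericPlane v i ≠ 0 := by
  intro h
  refine hv.lineBracket_ne_zero i j hij ?_
  have hplane : eval (v j 0) ∘ genericPlane v i = joinPlane (v i) (v j 0) := by
    refine (map_joinPlane (eval (v j 0)) (constLine v i) X).trans ?_
    congr 1 <;> simp [constLine, Function.comp_def]
  rw [← joinPlane_dotProduct, ← hplane, h, zero_dotProduct]

theorem GeneralPosition.nondegenerate_strictPlane (hv : GeneralPosition v)
    (he : ∀ c c', e c ⬝ᵥ v o c' = if c = c' then 1 else 0) :
    Nondegenerate
      (fun i c => Polynomial.constantCoeff ∘ (blowup (v o) e).toRingHom ∘ constLine v i c)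
      (fun i => Polynomial.constantCoeff ∘ strictPlane v o e i) o := by
  set f : Polynomial (MvPolynomial (Fin 4) K) →+* MvPolynomial (Fin 4) K :=
    Polynomial.constantCoeff
  set φ := (blowup (v o) e).toRingHom
  have heval (G : MvPolynomial (Fin 4) K) : eval (v o 0) (f (φ G)) = eval (v o 0) G :=
    eval_coeff_zero_blowup he G
  have hmeet {i m n : Fin 6} (h : [i, m, n, o].Nodup) :
      meetBracket (f ∘ strictPlane v o e i) (f ∘ strictPlane v o e m)
        ((f.comp (φ.comp C)) ∘ v n ·) ≠ 0 := by
    obtain ⟨σ, hσ⟩ := exists_perm_eq_of_injective (by decide : 4 ≤ 6) ![i, m, n, o]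
      (by rw [← List.nodup_ofFn]; simpa using h)
    have hquad := hv.quadric_ne_zero σ
    rw [show σ 0 = i from hσ 0, show σ 1 = m from hσ 1, show σ 2 = n from hσ 2,
      show σ 3 = o from hσ 3, ← eval_meetBracket_genericPlane, ← heval, map_meetBracket,
      map_meetBracket] at hquad
    simp only [List.nodup_cons, List.mem_cons, not_or] at h
    rw [strictPlane, strictPlane, if_neg h.1.2.2.1, if_neg h.2.1.2.1]
    exact fun h0 => hquad ((congrArg (eval (v o 0)) h0).trans (map_zero _))
  refine hv.nondegenerate (f.comp (φ.comp C)) (fun i h => ?_) fun σ h₄ h₅ => ?_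
  · by_cases hi : i = o
    · subst hi
      obtain ⟨j, hj⟩ := exists_ne i
      refine eval_genericPlane_ne_zero hv hj.symm ?_
      rw [strictPlane, if_pos rfl] at h
      funext k
      have := congrFun h k
      simp_all [f]
    · refine eval_genericPlane_ne_zero hv hi ?_
      rw [strictPlane, if_neg hi] at h
      funext k
      exact (heval _).symm.trans ((congrArg (eval (v o 0)) (congrFun h k)).trans (map_zero _))
  · by_cases h₀ : σ 0 = o
    · exact Or.inr (hmeet (by simp [← h₀]))
    · exact Or.inl (hmeet (by simp [h₀, h₄, h₅]))

end BlowupPlanes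

section Homogeneity

variable {σ R : Type*} [CommRing R]

theorem isHomogeneous_of_mul_left [IsDomain R] {A B : MvPolynomial σ R} {m n : ℕ}
    (hA : A.IsHomogeneous m) (hA₀ : A ≠ 0) (h : (A * B).IsHomogeneous (m + n)) :
    B.IsHomogeneous n := by
  let : GradedAlgebra (homogeneousSubmodule σ R) := gradedAlgebra
  have hcomp := DirectSum.coe_decompose_mul_add_of_left_mem (homogeneousSubmodule σ R)
    (i := m) (j := n) (b := B) hA
  rw [DirectSum.decompose_of_mem_same _ h] at hcomp
  rw [mul_left_cancel₀ hA₀ hcomp]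
  exact (DirectSum.decompose (homogeneousSubmodule σ R) B n).2

theorem aeval_smul_of_isHomogeneous {S : Type*} [CommRing S] [Algebra R S] {F : MvPolynomial σ R}
    {a : ℕ} (hF : F.IsHomogeneous a) (c : S) (Y : σ → S) :
    aeval (c • Y) F = c ^ a * aeval Y F := by
  rw [aeval_def, aeval_def, eval₂_eq, eval₂_eq, Finset.mul_sum]
  refine Finset.sum_congr rfl fun d hd => ?_
  rw [hF.degree_eq_sum_deg_support hd]
  simp only [Pi.smul_apply, smul_eq_mul, mul_pow, Finset.prod_mul_distrib,
    Finset.prod_pow_eq_pow_sum]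
  exact mul_left_comm _ _ _

theorem isHomogeneous_det {n : Type*} [Fintype n] [DecidableEq n]
    {M : Matrix n n (MvPolynomial σ R)} {d : n → ℕ} (h : ∀ i j, (M i j).IsHomogeneous (d i)) :
    M.det.IsHomogeneous (∑ i, d i) := by
  rw [det_apply]
  refine IsHomogeneous.sum _ _ _ fun τ _ => ?_
  rw [← Equiv.sum_comp τ d]
  exact (homogeneousSubmodule σ R _).smul_of_tower_mem _
    (IsHomogeneous.prod Finset.univ _ _ fun i _ => h (τ i) i)

theorem isHomogeneous_dotProduct {n : Type*} [Fintype n] {x y : n → MvPolynomial σ R} {d e : ℕ}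
    (hx : ∀ k, (x k).IsHomogeneous d) (hy : ∀ k, (y k).IsHomogeneous e) :
    (x ⬝ᵥ y).IsHomogeneous (d + e) :=
  IsHomogeneous.sum _ _ _ fun k _ => (hx k).mul (hy k)

theorem isHomogeneous_cross3 {a b c : Fin 4 → MvPolynomial σ R} {d₁ d₂ d₃ : ℕ}
    (ha : ∀ k, (a k).IsHomogeneous d₁) (hb : ∀ k, (b k).IsHomogeneous d₂)
    (hc : ∀ k, (c k).IsHomogeneous d₃) (k : Fin 4) :
    (cross3 a b c k).IsHomogeneous (d₁ + d₂ + d₃) := by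
  have hsingle (l : Fin 4) : ((Pi.single k 1 : Fin 4 → MvPolynomial σ R) l).IsHomogeneous 0 := by
    rw [Pi.single_apply]
    split_ifs
    exacts [isHomogeneous_one _ _, isHomogeneous_zero _ _ _]
  refine (Fin.sum_univ_four ![d₁, d₂, d₃, 0]) ▸ isHomogeneous_det fun i => ?_
  fin_cases i
  exacts [ha, hb, hc, hsingle]

end Homogeneity

section ToddCoordinates

variable {K : Type*} [Field K] {v : Fin 6 → Fin 2 → Fin 4 → K}

theorem isHomogeneous_linePt_constLine (i : Fin 6) {s : Fin 2 → MvPolynomial (Fin 4) K} {d : ℕ}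
    (hs : ∀ c, (s c).IsHomogeneous d) (k : Fin 4) :
    (linePt (constLine v i) s k).IsHomogeneous d :=
  ((hs 0).mul (isHomogeneous_C _ _)).add ((hs 1).mul (isHomogeneous_C _ _))

theorem isHomogeneous_genericPlane (i : Fin 6) (k : Fin 4) :
    (genericPlane v i k).IsHomogeneous 1 :=
  isHomogeneous_cross3 (d₁ := 0) (d₂ := 0) (d₃ := 1) (fun _ => isHomogeneous_C _ _)
    (fun _ => isHomogeneous_C _ _) (isHomogeneous_X _) k

theorem isHomogeneous_meetBracket_genericPlane (i m n : Fin 6) :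
    (meetBracket (genericPlane v i) (genericPlane v m) (constLine v n)).IsHomogeneous 2 :=
  have h (i : Fin 6) (c : Fin 2) : (genericPlane v i ⬝ᵥ constLine v n c).IsHomogeneous 1 :=
    isHomogeneous_dotProduct (isHomogeneous_genericPlane i) fun _ => isHomogeneous_C _ _
  ((h m 0).mul (h i 1)).sub ((h m 1).mul (h i 0))

/-- Coordinates `t i` on the line `v i` of forms of degree `7` with values `sᵢ` in that line, such
that `∑ sᵢ ⊗ pᵢ = 0` for the planes `pᵢ` joining the lines to the generic point. Along the line
`v o`, the form `s o` vanishes simply and the other ones doubly. -/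
structure ToddCoordinates (v : Fin 6 → Fin 2 → Fin 4 → K)
    (t : Fin 6 → Fin 2 → MvPolynomial (Fin 4) K) : Prop where
  relation : ∑ i, vecMulVec (linePt (constLine v i) (t i)) (genericPlane v i) = 0
  isHomogeneous : ∀ i c, (t i c).IsHomogeneous 7
  X_pow_dvd_blowup : ∀ o e, (∀ c c', e c ⬝ᵥ v o c' = if c = c' then 1 else 0) → ∀ i c,
    Polynomial.X ^ (2 - (Pi.single o 1 : Fin 6 → ℕ) i) ∣ blowup (v o) e (t i c)

variable {t : Fin 6 → Fin 2 → MvPolynomial (Fin 4) K} {T : Fin 4 → MvPolynomial (Fin 4) K}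
  {E : Fin 6 → MvPolynomial (Fin 4) K}

namespace ToddCoordinates

theorem isHomogeneous_plane (ht : ToddCoordinates v t) (hv : GeneralPosition v)
    (h : IsToddMap (constLine v) (genericPlane v) t T E) (k : Fin 4) : (T k).IsHomogeneous 19 := by
  refine isHomogeneous_of_mul_left (isHomogeneous_meetBracket_genericPlane 3 4 5)
    (hv.irreducible_meetBracket (by decide) (by decide) (by decide)).ne_zero ?_
  have hk := congrFun (h.meetBracket_smul 1) k
  simp only [Equiv.Perm.coe_one, id_eq, Equiv.Perm.sign_one, one_smul, Pi.smul_apply,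
    smul_eq_mul] at hk
  rw [hk]
  exact isHomogeneous_cross3 (d₁ := 7) (d₂ := 7) (d₃ := 7)
    (isHomogeneous_linePt_constLine 0 (ht.isHomogeneous 0))
    (isHomogeneous_linePt_constLine 1 (ht.isHomogeneous 1))
    (isHomogeneous_linePt_constLine 2 (ht.isHomogeneous 2)) k

theorem isHomogeneous_factor (ht : ToddCoordinates v t) (hv : GeneralPosition v)
    (h : IsToddMap (constLine v) (genericPlane v) t T E) {j : Fin 6} (hj : t j 1 ≠ 0) :
    (E j).IsHomogeneous 12 := by
  refine isHomogeneous_of_mul_left (ht.isHomogeneous j 1) hj ?_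
  rw [mul_comm, ← h.dotProduct_zero]
  exact isHomogeneous_dotProduct (e := 0) (ht.isHomogeneous_plane hv h)
    fun _ => isHomogeneous_C _ _

end ToddCoordinates

end ToddCoordinates

section Divisibility

theorem dvd_of_forall_prime_pow_dvd {B : Type*} [CommMonoidWithZero B] [UniqueFactorizationMonoid B]
    {a b : B} (ha : a ≠ 0) (h : ∀ ϖ n, Prime ϖ → ϖ ^ n ∣ a → ϖ ^ n ∣ b) : a ∣ b := by
  refine (UniqueFactorizationMonoid.dvd_iff_emultiplicity_le ha).2 fun ϖ hϖ => ?_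
  exact emultiplicity_le_emultiplicity_iff.2 fun n => h ϖ n hϖ

theorem pow_dvd_of_forall_pow_add_dvd_mul {B : Type*} [CommRing B] [IsDomain B] [WfDvdMonoid B]
    {ϖ b c : B} {m : ℕ} (hϖ : Prime ϖ) (hb : b ≠ 0)
    (h : ∀ n, ϖ ^ n ∣ b → ϖ ^ (m + n) ∣ b * c) : ϖ ^ m ∣ c := by
  obtain ⟨n, b', hb', rfl⟩ := WfDvdMonoid.max_power_factor hb hϖ.irreducible
  have hdvd := h n (dvd_mul_right _ _)
  rw [add_comm, pow_add, mul_assoc] at hdvd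
  exact hϖ.pow_dvd_of_dvd_mul_left m hb'
    ((mul_dvd_mul_iff_left (pow_ne_zero n hϖ.ne_zero)).1 hdvd)

theorem finrank_le_of_forall_exists_eq_mul {K A M : Type*} [Field K] [CommRing A] [IsDomain A]
    [Algebra K A] [AddCommGroup M] [Module K M] {V : Submodule K M} {W : Submodule K A}
    [FiniteDimensional K W] {φ : M →ₗ[K] A} {P : A}
    (hφ : ∀ F ∈ V, φ F = 0 → F = 0) (h : ∀ F ∈ V, ∃ G ∈ W, φ F = P * G) :
    Module.finrank K V ≤ Module.finrank K W := by
  have hle : V.map φ ≤ W.map (LinearMap.mulLeft K P) := by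
    rintro _ ⟨F, hF, rfl⟩
    obtain ⟨G, hG, hFG⟩ := h F hF
    exact ⟨G, hG, hFG.symm⟩
  calc Module.finrank K V = Module.finrank K (V.map φ) := by
        rw [← LinearMap.range_domRestrict]
        refine (LinearMap.finrank_range_of_inj fun x y hxy => ?_).symm
        exact Subtype.ext (sub_eq_zero.1 (hφ _ (V.sub_mem x.2 y.2)
          ((map_sub φ _ _).trans (sub_eq_zero.2 hxy))))
    _ ≤ Module.finrank K (W.map (LinearMap.mulLeft K P)) := Submodule.finrank_mono hle
    _ ≤ Module.finrank K W := Submodule.finrank_map_le _ _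

theorem exists_dual_of_lineBracket_ne_zero {K : Type*} [Field K] {w : Fin 2 → Fin 4 → K}
    {x y : Fin 4 → K} (h : lineBracket w x y ≠ 0) :
    ∃ e : Fin 2 → Fin 4 → K, ∀ c c', e c ⬝ᵥ w c' = if c = c' then 1 else 0 := by
  set M : Matrix (Fin 4) (Fin 4) K := Matrix.of ![w 0, w 1, x, y]
  have hM : M * M⁻¹ = 1 := Matrix.mul_nonsing_inv _ (isUnit_iff_ne_zero.2 h)
  refine ⟨fun c => M⁻¹.col (![0, 1] c), fun c c' => ?_⟩
  have hentry := congrFun₂ hM (![0, 1] c') (![0, 1] c)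
  rw [Matrix.mul_apply', Matrix.one_apply, dotProduct_comm] at hentry
  fin_cases c <;> fin_cases c' <;> exact hentry

end Divisibility

section DimensionBound

variable {K : Type*} [Field K] {v : Fin 6 → Fin 2 → Fin 4 → K}
  {t : Fin 6 → Fin 2 → MvPolynomial (Fin 4) K} {T : Fin 4 → MvPolynomial (Fin 4) K}
  {E : Fin 6 → MvPolynomial (Fin 4) K}

theorem IsToddMap.prod_dvd_aeval (h : IsToddMap (constLine v) (genericPlane v) t T E)
    (hv : GeneralPosition v) (ht : t ≠ 0) (hE : ∏ j, E j ≠ 0) {a : ℕ} (ha : 4 ≤ a)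
    {F : MvPolynomial (Fin 4) K} (hF : F ∈ dualSystem v a) : ∏ j, E j ∣ aeval T F := by
  refine dvd_of_forall_prime_pow_dvd hE fun ϖ n hϖ hn => ?_
  have : (Ideal.span {ϖ}).IsPrime := (Ideal.span_singleton_prime hϖ.ne_zero).2 hϖ
  have hdvd := IsToddMap.pow_dvd (u := 0) (v := constLine v) (p := genericPlane v) hϖ
    (f := Ideal.Quotient.mk (Ideal.span {ϖ}))
    (fun b => by rw [Ideal.Quotient.eq_zero_iff_mem, Ideal.mem_span_singleton])
    (hv.nondegenerate_quotient hϖ 0) (by simpa using h) (by simp) ht ha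
    (F := fun Y => aeval Y F) (aeval_smul_of_isHomogeneous hF.1)
    (fun j d Y hd => dvd_aeval_of_mem_dualLineIdeal (Submodule.mem_iInf _ |>.1 hF.2 j) hd) hn
  simpa using hdvd

theorem dotProduct_ne_zero_of_dominant {a : ℕ} (ha : a ≠ 0)
    (hT : ∀ F : MvPolynomial (Fin 4) K, F.IsHomogeneous a → aeval T F = 0 → F = 0)
    {y : Fin 4 → K} (hy : y ≠ 0) : T ⬝ᵥ (C ∘ y) ≠ 0 := by
  intro hzero
  have hlin : ((C ∘ y) ⬝ᵥ (X : Fin 4 → MvPolynomial (Fin 4) K)).IsHomogeneous (0 + 1) :=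
    isHomogeneous_dotProduct (fun _ => isHomogeneous_C _ _) (isHomogeneous_X _)
  have hform : (C ∘ y) ⬝ᵥ (X : Fin 4 → MvPolynomial (Fin 4) K) = 0 := by
    refine eq_zero_of_pow_eq_zero (hT _ (by simpa using hlin.pow a) ?_)
    rw [map_pow, aeval_dotProduct_X, algebraMap_eq, hzero, zero_pow ha]
  refine hy (dotProduct_eq_zero y fun x => (dotProduct_comm _ _).trans ?_)
  exact (aeval_dotProduct_X y x).symm.trans (by rw [hform, map_zero])

theorem IsToddMap.X_pow_dvd_blowup (h : IsToddMap (constLine v) (genericPlane v) t T E)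
    (hv : GeneralPosition v) (ht : ToddCoordinates v t) (ht₀ : t ≠ 0) (hE : ∏ j, E j ≠ 0) {a : ℕ}
    (ha : 4 ≤ a) {F G : MvPolynomial (Fin 4) K} (hF : F ∈ dualSystem v a)
    (hG : aeval T F = (∏ j, E j) * G) {o : Fin 6} {e : Fin 2 → Fin 4 → K}
    (he : ∀ c c', e c ⬝ᵥ v o c' = if c = c' then 1 else 0) :
    Polynomial.X ^ (5 * a - 19) ∣ blowup (v o) e G := by
  have hE' : blowup (v o) e (∏ j, E j) ≠ 0 := (map_ne_zero_iff _ blowup_injective).2 hE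
  refine pow_dvd_of_forall_pow_add_dvd_mul Polynomial.prime_X hE' fun n hn => ?_
  have ht₀' : (fun i => (blowup (v o) e).toRingHom ∘ t i) ≠ 0 := fun h₀ => ht₀ (funext₂ fun i c =>
    blowup_injective ((congrFun₂ h₀ i c).trans (map_zero (blowup (v o) e)).symm))
  have hplane : (fun i => (blowup (v o) e).toRingHom ∘ genericPlane v i) = fun i =>
      (Polynomial.X : Polynomial (MvPolynomial (Fin 4) K)) ^ (Pi.single o 1 : Fin 6 → ℕ) i •
        strictPlane v o e i := funext blowup_comp_genericPlane
  have hmap : IsToddMap _ _ _ _ _ := hplane ▸ h.map (blowup (v o) e).toRingHom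
  have hn' : Polynomial.X ^ n ∣ ∏ j, ((blowup (v o) e).toRingHom ∘ E) j :=
    map_prod (blowup (v o) e) E _ ▸ hn
  have hdvd := hmap.pow_dvd (u := 1) Polynomial.prime_X (f := Polynomial.constantCoeff)
    (fun _ => Polynomial.X_dvd_iff.symm) (hv.nondegenerate_strictPlane he)
    (ht.X_pow_dvd_blowup o e he) ht₀' ha
    (F := fun Y => aeval Y F) (aeval_smul_of_isHomogeneous hF.1)
    (fun j d Y hd => dvd_aeval_of_mem_dualLineIdeal (Submodule.mem_iInf _ |>.1 hF.2 j)
      fun c => blowup_comp_constLine o e j c ▸ hd c) hn'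
  rw [one_mul] at hdvd
  rw [← map_mul, ← hG]
  exact (comp_aeval_apply (f := T) (blowup (v o) e) F).symm ▸ hdvd

theorem ToddCoordinates.choose_le_finrank_linSys {v : Fin 6 → Fin 2 → C4}
    {t : Fin 6 → Fin 2 → R3} {T : Fin 4 → R3} {E : Fin 6 → R3} (ht : ToddCoordinates v t)
    (hv : GeneralPosition v) (h : IsToddMap (constLine v) (genericPlane v) t T E) {a : ℕ}
    (ha : 4 ≤ a) (hT : ∀ F : R3, F.IsHomogeneous a → aeval T F = 0 → F = 0) :
    (a + 3).choose 3 - 6 * (a + 1) ≤ Module.finrank ℂ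
      (linSys (19 * a - 72) (fun i : Fin 6 => Submodule.span ℂ {v i 0, v i 1})
        fun _ => 5 * a - 19) := by
  have hfactor (j : Fin 6) : E j * t j 1 ≠ 0 := by
    rw [← h.dotProduct_zero]
    refine dotProduct_ne_zero_of_dominant (by omega : a ≠ 0) hT fun hvj => ?_
    exact hv.lineBracket_ne_zero j (j + 1) (by simp) (by simp [lineBracket, bracket_eq, hvj])
  have hE : ∏ j, E j ≠ 0 :=
    Finset.prod_ne_zero_iff.2 fun j _ => left_ne_zero_of_mul (hfactor j)
  have ht₀ : t ≠ 0 := fun h₀ => hfactor 0 (by simp [h₀])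
  have hE_hom : (∏ j, E j).IsHomogeneous 72 :=
    IsHomogeneous.prod Finset.univ E (fun _ => 12) fun j _ =>
      ht.isHomogeneous_factor hv h (right_ne_zero_of_mul (hfactor j))
  have hfin : FiniteDimensional ℂ (linSys (19 * a - 72)
      (fun i : Fin 6 => Submodule.span ℂ {v i 0, v i 1}) fun _ => 5 * a - 19) :=
    have := Module.Finite.iff_fg.2 (homogeneousSubmodule_fg (Fin 4) ℂ (19 * a - 72))
    Submodule.finiteDimensional_of_le inf_le_left
  have hdual := choose_le_finrank_dualSystem (v := v) (v' := fun j => v (j + 1))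
    (fun j => hv.lineBracket_ne_zero _ _ (by simp)) a
  rw [Fintype.card_fin] at hdual
  refine (Nat.sub_le_of_le_add hdual).trans
    (finrank_le_of_forall_exists_eq_mul (φ := (aeval T).toLinearMap) (P := ∏ j, E j)
      (fun F hF => hT F hF.1) fun F hF => ?_)
  obtain ⟨G, hG⟩ := h.prod_dvd_aeval hv ht₀ hE ha hF
  refine ⟨G, ⟨?_, (Submodule.mem_iInf _).2 fun o => ?_⟩, hG⟩
  · refine isHomogeneous_of_mul_left hE_hom hE (n := 19 * a - 72) ?_
    rw [← hG, show 72 + (19 * a - 72) = 19 * a by omega]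
    exact IsHomogeneous.aeval hF.1 T (ht.isHomogeneous_plane hv h)
  · obtain ⟨e, he⟩ := exists_dual_of_lineBracket_ne_zero
      (hv.lineBracket_ne_zero o (o + 1) (by simp))
    exact mem_lineIdeal_pow_of_X_pow_dvd_blowup he
      (h.X_pow_dvd_blowup hv ht ht₀ hE ha hF hG he)

end DimensionBound

section Divisibility

variable {B : Type*} [CommRing B] {n : Type*} [Fintype n] [DecidableEq n] {ϖ : B}
  {M : Matrix n n B}

theorem pow_card_dvd_det_of_dvd_col (s : Finset n) (h : ∀ i, ∀ j ∈ s, ϖ ∣ M i j) :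
    ϖ ^ s.card ∣ M.det := by
  rw [det_apply]
  refine Finset.dvd_sum fun τ _ => dvd_smul_of_dvd _ ?_
  rw [← Finset.prod_const]
  exact (Finset.prod_dvd_prod_of_dvd _ _ fun j hj => h (τ j) j hj).trans
    (Finset.prod_dvd_prod_of_subset _ _ _ s.subset_univ)

theorem pow_card_dvd_adjugate_of_dvd_col {s : Finset n} {k : n} (hk : k ∉ s)
    (h : ∀ i, ∀ j ∈ s, ϖ ∣ M i j) (a : n) : ϖ ^ s.card ∣ M.adjugate k a := by
  rw [adjugate_apply]
  refine pow_card_dvd_det_of_dvd_col s fun i j hj => ?_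
  by_cases hi : i = a
  · rw [hi, updateRow_self, Pi.single_eq_of_ne (ne_of_mem_of_not_mem hj hk)]
    exact dvd_zero _
  · rw [updateRow_ne hi]
    exact h i j hj

theorem sq_dvd_det_of_dvd_vecMul [IsDomain B] (hϖ : Prime ϖ) {c d : n → B} {i j : n}
    (hc : ∀ k, ϖ ∣ (c ᵥ* M) k) (hd : ∀ k, ϖ ∣ (d ᵥ* M) k) (hci : ¬ϖ ∣ c i) (hdi : d i = 0)
    (hdj : ¬ϖ ∣ d j) : ϖ ^ 2 ∣ M.det := by
  have hij : i ≠ j := by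
    rintro rfl
    exact hdj (hdi ▸ dvd_zero ϖ)
  set M₁ := M.updateRow i (c ᵥ* M) with hM₁
  set M₂ := M₁.updateRow j (d ᵥ* M) with hM₂
  have hdet₁ : M₁.det = c i * M.det := by
    rw [hM₁, vecMul_eq_sum]
    exact det_updateRow_sum M i c
  have hdet₂ : M₂.det = d j * M₁.det := by
    have hsum : d ᵥ* M = ∑ l, d l • M₁ l := by
      rw [vecMul_eq_sum]
      refine Finset.sum_congr rfl fun l _ => ?_
      by_cases hl : l = i
      · rw [hl, hdi, zero_smul, zero_smul]
      · rw [hM₁, updateRow_ne hl]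
    exact (congrArg (fun r => (M₁.updateRow j r).det) hsum).trans (det_updateRow_sum M₁ j d)
  have hdvd : ϖ ^ 2 ∣ d j * (c i * M.det) := by
    rw [← hdet₁, ← hdet₂, ← Finset.card_pair hij, ← det_transpose]
    refine pow_card_dvd_det_of_dvd_col _ fun k l hl => ?_
    rw [transpose_apply]
    rcases eq_or_ne l j with rfl | hlj
    · rw [hM₂, updateRow_self]
      exact hd k
    · obtain rfl : l = i := by simpa [hlj] using hl
      rw [hM₂, updateRow_ne hlj, hM₁, updateRow_self]
      exact hc k
  exact hϖ.pow_dvd_of_dvd_mul_left 2 hci (hϖ.pow_dvd_of_dvd_mul_left 2 hdj hdvd)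

theorem sq_dvd_adjugate_of_dvd_vecMul [IsDomain B] (hϖ : Prime ϖ) {c d : n → B} {a i j : n}
    (hc : ∀ k, ϖ ∣ (c ᵥ* M) k) (hd : ∀ k, ϖ ∣ (d ᵥ* M) k) (hca : c a = 0) (hda : d a = 0)
    (hci : ¬ϖ ∣ c i) (hdi : d i = 0) (hdj : ¬ϖ ∣ d j) (k : n) : ϖ ^ 2 ∣ M.adjugate k a := by
  have hupdate {c : n → B} (hca : c a = 0) (r : n → B) : c ᵥ* M.updateRow a r = c ᵥ* M := by
    rw [vecMul_eq_sum, vecMul_eq_sum]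
    refine Finset.sum_congr rfl fun l _ => ?_
    by_cases hl : l = a
    · rw [hl, hca, zero_smul, zero_smul]
    · rw [updateRow_ne hl]
  rw [adjugate_apply]
  refine sq_dvd_det_of_dvd_vecMul hϖ ?_ ?_ hci hdi hdj
  · rwa [hupdate hca]
  · rwa [hupdate hda]

end Divisibility

section LineProj

variable {B B' : Type*} [CommRing B] [CommRing B']

/-- The projection onto the line `w` along the line `w'`, in the coordinates of `w`, multiplied by
the bracket of the two lines. -/
def lineProj (w w' : Fin 2 → Fin 4 → B) : Matrix (Fin 2) (Fin 4) B :=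
  of ![-cross3 (w 1) (w' 0) (w' 1), cross3 (w 0) (w' 0) (w' 1)]

theorem lineProj_mulVec (w w' : Fin 2 → Fin 4 → B) (x : Fin 4 → B) :
    lineProj w w' *ᵥ x = ![bracket x (w 1) (w' 0) (w' 1), bracket (w 0) x (w' 0) (w' 1)] := by
  funext r
  fin_cases r
  · exact (neg_dotProduct _ _).trans (by rw [cross3_dotProduct]; simp [bracket_eq]; ring)
  · exact (cross3_dotProduct _ _ _ _).trans (by simp [bracket_eq]; ring)

theorem map_lineProj_mulVec (f : B →+* B') (w w' : Fin 2 → Fin 4 → B) (x : Fin 4 → B) :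
    f ∘ (lineProj w w' *ᵥ x) =
      lineProj (fun c => f ∘ w c) (fun c => f ∘ w' c) *ᵥ (f ∘ x) := by
  simp only [lineProj_mulVec]
  funext r
  fin_cases r <;> exact map_bracket f _ _ _ _

theorem lineProj_mulVec_linePt_self (w w' : Fin 2 → Fin 4 → B) (t : Fin 2 → B) :
    lineProj w w' *ᵥ linePt w t = lineBracket w (w' 0) (w' 1) • t := by
  rw [lineProj_mulVec]
  funext r
  fin_cases r <;> simp [bracket_eq, linePt, lineBracket] <;> ring

theorem lineProj_mulVec_linePt (w w' : Fin 2 → Fin 4 → B) (t : Fin 2 → B) :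
    lineProj w w' *ᵥ linePt w' t = 0 := by
  rw [lineProj_mulVec]
  funext r
  fin_cases r <;> simp [bracket_eq, linePt] <;> ring

theorem lineProj_swap_mulVec (w w' : Fin 2 → Fin 4 → B) (x : Fin 4 → B) :
    lineProj w' w *ᵥ x = ![joinPlane w x ⬝ᵥ w' 1, -(joinPlane w x ⬝ᵥ w' 0)] := by
  rw [lineProj_mulVec]
  funext r
  fin_cases r <;> simp [joinPlane_dotProduct, bracket_eq, lineBracket] <;> ring

theorem lineBracket_mul_dotProduct (w w' : Fin 2 → Fin 4 → B) (q x : Fin 4 → B) :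
    lineBracket w (w' 0) (w' 1) * (q ⬝ᵥ x) =
      ∑ r, (lineProj w w' *ᵥ x) r * (q ⬝ᵥ w r) + ∑ r, (lineProj w' w *ᵥ x) r * (q ⬝ᵥ w' r) := by
  have hswap₀ : bracket x (w' 1) (w 0) (w 1) = bracket (w 0) (w 1) x (w' 1) := by
    simp only [bracket_eq]; ring
  have hswap₁ : bracket (w' 0) x (w 0) (w 1) = bracket (w 0) (w 1) (w' 0) x := by
    simp only [bracket_eq]; ring
  rw [lineBracket, bracket_mul_dotProduct, lineProj_mulVec, lineProj_mulVec, hswap₀, hswap₁]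
  simp only [Fin.sum_univ_two, cons_val_zero, cons_val_one]
  ring

theorem lineProj_mulVec_linePt_eq (w w' u : Fin 2 → Fin 4 → B) (t : Fin 2 → B) (r : Fin 2) :
    (lineProj w w' *ᵥ linePt u t) r = ∑ c, (lineProj w w' *ᵥ u c) r * t c := by
  rw [linePt, mulVec_add, mulVec_smul, mulVec_smul, Fin.sum_univ_two]
  simp only [Pi.add_apply, Pi.smul_apply, smul_eq_mul, mul_comm]

variable [IsDomain B] {w w' : Fin 2 → Fin 4 → B} (h : lineBracket w (w' 0) (w' 1) ≠ 0)
include h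

theorem eq_zero_of_lineProj_mulVec_eq_zero {x : Fin 4 → B} (hw : lineProj w w' *ᵥ x = 0)
    (hw' : lineProj w' w *ᵥ x = 0) : x = 0 := by
  funext k
  have hx := lineBracket_mul_dotProduct w w' (Pi.single k 1) x
  simpa [hw, hw', h] using hx

theorem eq_zero_of_dotProduct_lines_eq_zero {q : Fin 4 → B} (hw : ∀ c, q ⬝ᵥ w c = 0)
    (hw' : ∀ c, q ⬝ᵥ w' c = 0) : q = 0 := by
  funext k
  simpa [h] using dvd_mul_of_dvd_dotProduct (d := 0) (fun c => zero_dvd_iff.2 (hw c))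
    (fun c => zero_dvd_iff.2 (hw' c)) k

theorem sum_vecMulVec_eq_zero_of_lineProj {ι : Type*} [Fintype ι] {s p : ι → Fin 4 → B}
    (hw : ∀ u ∈ [w, w'], ∀ c, ∑ m, (p m ⬝ᵥ u c) • (lineProj w w' *ᵥ s m) = 0)
    (hw' : ∀ u ∈ [w, w'], ∀ c, ∑ m, (p m ⬝ᵥ u c) • (lineProj w' w *ᵥ s m) = 0) :
    ∑ m, vecMulVec (s m) (p m) = 0 := by
  have hs (u) (hu : u ∈ [w, w']) (c : Fin 2) : ∑ m, (p m ⬝ᵥ u c) • s m = 0 := by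
    refine eq_zero_of_lineProj_mulVec_eq_zero h ?_ ?_
    · simpa only [mulVec_sum, mulVec_smul] using hw u hu c
    · simpa only [mulVec_sum, mulVec_smul] using hw' u hu c
  have hrow (k : Fin 4) (u) (hu : u ∈ [w, w']) (c : Fin 2) :
      (∑ m, vecMulVec (s m) (p m)) k ⬝ᵥ u c = 0 := by
    change ((∑ m, vecMulVec (s m) (p m)) *ᵥ u c) k = 0
    simp only [sum_mulVec, vecMulVec_mulVec, op_smul_eq_smul, hs u hu c, Pi.zero_apply]
  funext k
  exact eq_zero_of_dotProduct_lines_eq_zero h (hrow k w (by simp)) (hrow k w' (by simp))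

end LineProj

section Kernel

/-- The lines `0` and `1`, whose spanning vectors serve as a basis of the ambient space. -/
def baseLine : Fin 2 → Fin 6 := Fin.castAdd 4

/-- The lines `2, 3, 4, 5`, indexed by pairs so as to match the coordinates on the base lines. -/
def otherLine (e : Fin 2 × Fin 2) : Fin 6 := Fin.natAdd 2 (finProdFinEquiv e)

theorem baseLine_ne_baseLine_add_one : ∀ i, baseLine i ≠ baseLine (i + 1) := by decide

theorem fin_two_add_one_add_one : ∀ i : Fin 2, i + 1 + 1 = i := by decide

theorem otherLine_ne_baseLine : ∀ e i, otherLine e ≠ baseLine i := by decide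

theorem otherLine_injective : Function.Injective otherLine := by decide

theorem eq_baseLine_or_eq_otherLine : ∀ o, (∃ i, o = baseLine i) ∨ ∃ e, o = otherLine e := by
  decide

theorem sum_eq_add_sum_otherLine {A : Type*} [AddCommMonoid A] (F : Fin 6 → A) (i : Fin 2) :
    ∑ m, F m = F (baseLine i) + F (baseLine (i + 1)) + ∑ e, F (otherLine e) := by
  have hbase : ∑ i, F (baseLine i) = F (baseLine i) + F (baseLine (i + 1)) := by
    rw [Fin.sum_univ_two]
    fin_cases i
    exacts [rfl, add_comm _ _]
  rw [← hbase]
  have hother : ∑ e, F (otherLine e) = ∑ k : Fin 4, F (Fin.natAdd 2 k) :=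
    Equiv.sum_comp (finProdFinEquiv (m := 2) (n := 2)) fun k : Fin 4 => F (Fin.natAdd 2 k)
  rw [hother]
  exact Fin.sum_univ_add (a := 2) (b := 4) F

variable {B B' : Type*} [CommRing B] [CommRing B'] (v : Fin 6 → Fin 2 → Fin 4 → B)
  (x : Fin 4 → B)

/-- The projection onto the base line `i` along the other base line. -/
def baseProj (i : Fin 2) : Matrix (Fin 2) (Fin 4) B :=
  lineProj (v (baseLine i)) (v (baseLine (i + 1)))

/-- The square matrix of the linear conditions on the points of the four lines `otherLine e`
expressing that `∑ sₘ ⊗ pₘ`, where `pₘ` joins the line `m` to `x`, has no component in the tensor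
square of a base line. The row `((i, r), f)` is the condition on the coefficient indexed by the
`r`-th and `f`-th spanning vectors of the base line `i`. -/
def relationMatrix : Matrix ((Fin 2 × Fin 2) × Fin 2) ((Fin 2 × Fin 2) × Fin 2) B :=
  of fun a b => (baseProj v a.1.1 *ᵥ v (otherLine b.1) b.2) a.1.2 *
    (joinPlane (v (otherLine b.1)) x ⬝ᵥ v (baseLine a.1.1) a.2)

/-- The linear dependency between the rows of `relationMatrix`. -/
def rowDependency (a : (Fin 2 × Fin 2) × Fin 2) : B := if a.1.2 = a.2 then 1 else 0

/-- A column of the adjugate of the singular matrix `relationMatrix`, which lies in its kernel. -/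
def kernelVector (b : (Fin 2 × Fin 2) × Fin 2) : B := (relationMatrix v x).adjugate b ((1, 1), 1)

theorem lineBracket_baseLine_mul_dotProduct (i : Fin 2) (q y : Fin 4 → B) :
    lineBracket (v (baseLine i)) (v (baseLine (i + 1)) 0) (v (baseLine (i + 1)) 1) * (q ⬝ᵥ y) =
      ∑ r, (baseProj v i *ᵥ y) r * (q ⬝ᵥ v (baseLine i) r) +
        ∑ r, (baseProj v (i + 1) *ᵥ y) r * (q ⬝ᵥ v (baseLine (i + 1)) r) := by
  rw [lineBracket_mul_dotProduct, baseProj, baseProj, fin_two_add_one_add_one]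

theorem rowDependency_vecMul_relationMatrix : rowDependency ᵥ* relationMatrix v x = 0 := by
  funext b
  have h := lineBracket_baseLine_mul_dotProduct v 0 (joinPlane (v (otherLine b.1)) x)
    (v (otherLine b.1) b.2)
  rw [joinPlane_dotProduct_line, mul_zero] at h
  simpa [vecMul, dotProduct, relationMatrix, rowDependency, Fintype.sum_prod_type,
    Fin.sum_univ_two, add_assoc] using h.symm

theorem relationMatrix_mulVec_kernelVector : relationMatrix v x *ᵥ kernelVector v x = 0 := by
  have hmul := mul_adjugate (relationMatrix v x)
  have hdet : (relationMatrix v x).det = 0 := by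
    have h := congrArg (fun N => (rowDependency ᵥ* N) ((0, 0), 0)) hmul
    simpa [← vecMul_vecMul, rowDependency_vecMul_relationMatrix, vecMul_smul, rowDependency]
      using h.symm
  rw [hdet, zero_smul] at hmul
  exact funext fun a => congrFun (congrFun hmul a) ((1, 1), 1)

variable {v x}

theorem map_kernelVector (f : B →+* B') (b : (Fin 2 × Fin 2) × Fin 2) :
    f (kernelVector v x b) = kernelVector (fun i c => f ∘ v i c) (f ∘ x) b := by
  have hmap : f.mapMatrix (relationMatrix v x) = relationMatrix (fun i c => f ∘ v i c) (f ∘ x) := by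
    ext a b
    have hproj := congrFun (map_lineProj_mulVec f (v (baseLine a.1.1)) (v (baseLine (a.1.1 + 1)))
      (v (otherLine b.1) b.2)) a.1.2
    have hplane := RingHom.map_dotProduct f (joinPlane (v (otherLine b.1)) x)
      (v (baseLine a.1.1) a.2)
    rw [map_joinPlane] at hplane
    exact (map_mul f _ _).trans (congrArg₂ _ hproj hplane)
  rw [kernelVector, kernelVector, ← hmap, ← RingHom.map_adjugate]
  rfl

theorem dvd_relationMatrix_col {ϖ : B} {e : Fin 2 × Fin 2}
    (h : ∀ k, ϖ ∣ joinPlane (v (otherLine e)) x k) (a : (Fin 2 × Fin 2) × Fin 2) (c : Fin 2) :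
    ϖ ∣ relationMatrix v x a (e, c) :=
  (Finset.dvd_sum fun k _ => (h k).mul_right _).mul_left _

/-- The combination of the rows `((i, r), f)` of `relationMatrix` whose coefficients are the
coordinates of `x` on the base line `i`. -/
def pointRow (v : Fin 6 → Fin 2 → Fin 4 → B) (x : Fin 4 → B) (i r : Fin 2)
    (a : (Fin 2 × Fin 2) × Fin 2) : B :=
  if a.1 = (i, r) then (baseProj v i *ᵥ x) a.2 else 0

theorem dvd_pointRow_vecMul {ϖ : B} {i : Fin 2} (h : ∀ k, ϖ ∣ joinPlane (v (baseLine i)) x k)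
    (r : Fin 2) (b : (Fin 2 × Fin 2) × Fin 2) : ϖ ∣ (pointRow v x i r ᵥ* relationMatrix v x) b := by
  have hrow : (pointRow v x i r ᵥ* relationMatrix v x) b =
      (baseProj v i *ᵥ v (otherLine b.1) b.2) r * ∑ f, (baseProj v i *ᵥ x) f *
        (joinPlane (v (otherLine b.1)) x ⬝ᵥ v (baseLine i) f) := by
    rw [vecMul, dotProduct, Fintype.sum_prod_type, Fintype.sum_eq_single (i, r), Finset.mul_sum]
    · refine Finset.sum_congr rfl fun f _ => ?_
      rw [pointRow, if_pos rfl]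
      exact mul_left_comm _ _ _
    · intro a ha
      simp only [pointRow, if_neg ha, zero_mul, Finset.sum_const_zero]
  have hx := lineBracket_baseLine_mul_dotProduct v i (joinPlane (v (otherLine b.1)) x) x
  have hzero : joinPlane (v (otherLine b.1)) x ⬝ᵥ x = 0 := by
    rw [joinPlane_dotProduct]
    simp only [lineBracket, bracket_eq]
    ring
  rw [hzero, mul_zero] at hx
  rw [hrow, eq_neg_of_add_eq_zero_left hx.symm]
  have hproj (f : Fin 2) : ϖ ∣ (baseProj v (i + 1) *ᵥ x) f := by
    rw [baseProj, fin_two_add_one_add_one, lineProj_swap_mulVec]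
    have hdvd (y : Fin 4 → B) : ϖ ∣ joinPlane (v (baseLine i)) x ⬝ᵥ y :=
      Finset.dvd_sum fun k _ => (h k).mul_right _
    fin_cases f
    exacts [hdvd _, (hdvd _).neg_right]
  exact ((Finset.dvd_sum fun f _ => (hproj f).mul_right _).neg_right).mul_left _

variable [IsDomain B]

theorem sq_dvd_kernelVector {ϖ : B} (hϖ : Prime ϖ) {i : Fin 2}
    (h : ∀ k, ϖ ∣ joinPlane (v (baseLine i)) x k) (hx : ¬ϖ ∣ (baseProj v i *ᵥ x) 0)
    (b : (Fin 2 × Fin 2) × Fin 2) : ϖ ^ 2 ∣ kernelVector v x b := by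
  have hrow := dvd_pointRow_vecMul h
  obtain rfl | rfl : i = 0 ∨ i = 1 := (by decide : ∀ i : Fin 2, i = 0 ∨ i = 1) i
  · exact sq_dvd_adjugate_of_dvd_vecMul hϖ (hrow 0) (hrow 1) (i := ((0, 0), 0)) (j := ((0, 1), 0))
      (by simp [pointRow]) (by simp [pointRow]) (by simpa [pointRow]) (by simp [pointRow])
      (by simpa [pointRow]) b
  · have hrow' : ∀ k, ϖ ∣ ((pointRow v x 1 1 - (baseProj v 1 *ᵥ x) 1 • rowDependency) ᵥ*
        relationMatrix v x) k := by
      rw [sub_vecMul, smul_vecMul, rowDependency_vecMul_relationMatrix, smul_zero, sub_zero]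
      exact hrow 1
    exact sq_dvd_adjugate_of_dvd_vecMul hϖ hrow' (hrow 0) (i := ((1, 1), 0)) (j := ((1, 0), 0))
      (by simp [pointRow, rowDependency]) (by simp [pointRow])
      (by simpa [pointRow, rowDependency]) (by simp [pointRow]) (by simpa [pointRow]) b

theorem pow_dvd_kernelVector {ϖ : B} (hϖ : Prime ϖ) {o : Fin 6}
    (h : ∀ k, ϖ ∣ joinPlane (v o) x k)
    (hx : ∀ i, baseLine i = o → ¬ϖ ∣ (baseProj v i *ᵥ x) 0) (e : Fin 2 × Fin 2) (c : Fin 2) :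
    ϖ ^ (2 - (Pi.single o 1 : Fin 6 → ℕ) (otherLine e)) ∣ kernelVector v x (e, c) := by
  rcases eq_baseLine_or_eq_otherLine o with ⟨i, rfl⟩ | ⟨e', rfl⟩
  · rw [Pi.single_eq_of_ne (otherLine_ne_baseLine e i)]
    exact sq_dvd_kernelVector hϖ h (hx i rfl) _
  · rcases eq_or_ne e e' with rfl | hne
    · rw [Pi.single_eq_same]
      refine pow_card_dvd_adjugate_of_dvd_col (s := {(e, c + 1)}) (by simp) (fun a j hj => ?_) _
      rw [Finset.mem_singleton.1 hj]
      exact dvd_relationMatrix_col h a _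
    · rw [Pi.single_eq_of_ne (otherLine_injective.ne hne)]
      have hcol (a j : (Fin 2 × Fin 2) × Fin 2)
          (hj : j ∈ {e'} ×ˢ (Finset.univ : Finset (Fin 2))) : ϖ ∣ relationMatrix v x a j := by
        obtain ⟨hj, -⟩ := Finset.mem_product.1 hj
        rw [← Prod.mk.eta (p := j), Finset.mem_singleton.1 hj]
        exact dvd_relationMatrix_col h a _
      simpa [kernelVector] using
        pow_card_dvd_adjugate_of_dvd_col (k := (e, c)) (by simp [hne.symm]) hcol ((1, 1), 1)

end Kernel

section BaseCoordinates

section Ring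

variable {B : Type*} [CommRing B] {v : Fin 6 → Fin 2 → Fin 4 → B} {x : Fin 4 → B}

/-- The point of the line `otherLine e` with coordinates given by `kernelVector`. -/
def otherPt (v : Fin 6 → Fin 2 → Fin 4 → B) (x : Fin 4 → B) (e : Fin 2 × Fin 2) : Fin 4 → B :=
  linePt (v (otherLine e)) fun c => kernelVector v x (e, c)

/-- The contribution of the lines `otherLine e` to the coefficients of `∑ sₘ ⊗ pₘ` mixing the base
line `i` with the `f`-th spanning vector of the other base line. -/
def mixedSum (v : Fin 6 → Fin 2 → Fin 4 → B) (x : Fin 4 → B) (i f : Fin 2) : Fin 2 → B :=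
  ∑ e, (joinPlane (v (otherLine e)) x ⬝ᵥ v (baseLine (i + 1)) f) • (baseProj v i *ᵥ otherPt v x e)

theorem sum_smul_baseProj_mulVec_otherPt (i f : Fin 2) :
    ∑ e, (joinPlane (v (otherLine e)) x ⬝ᵥ v (baseLine i) f) • (baseProj v i *ᵥ otherPt v x e) =
      0 := by
  funext r
  have h := congrFun (relationMatrix_mulVec_kernelVector v x) ((i, r), f)
  rw [mulVec, dotProduct, Fintype.sum_prod_type] at h
  rw [Finset.sum_apply]
  refine Eq.trans ?_ h
  refine Finset.sum_congr rfl fun e _ => ?_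
  rw [Pi.smul_apply, smul_eq_mul, otherPt, baseProj, lineProj_mulVec_linePt_eq, Finset.mul_sum]
  refine Finset.sum_congr rfl fun c _ => ?_
  simp only [relationMatrix, of_apply, baseProj]
  ring

theorem smul_mixedSum_comm (i : Fin 2) :
    (joinPlane (v (baseLine i)) x ⬝ᵥ v (baseLine (i + 1)) 1) • mixedSum v x i 0 =
      (joinPlane (v (baseLine i)) x ⬝ᵥ v (baseLine (i + 1)) 0) • mixedSum v x i 1 := by
  have hswap (m : Fin 6) := quadric_swap_right (v m) (v (baseLine i)) (v (baseLine (i + 1))) x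
  set q := joinPlane (v (baseLine i)) x
  set q' := joinPlane (v (baseLine (i + 1))) x
  have h₀ := sum_smul_baseProj_mulVec_otherPt (v := v) (x := x) i 0
  have h₁ := sum_smul_baseProj_mulVec_otherPt (v := v) (x := x) i 1
  rw [← sub_eq_zero]
  calc _ = (q' ⬝ᵥ v (baseLine i) 0) • ∑ e, (joinPlane (v (otherLine e)) x ⬝ᵥ v (baseLine i) 1) •
          (baseProj v i *ᵥ otherPt v x e) -
        (q' ⬝ᵥ v (baseLine i) 1) • ∑ e, (joinPlane (v (otherLine e)) x ⬝ᵥ v (baseLine i) 0) •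
          (baseProj v i *ᵥ otherPt v x e) := by
        simp only [mixedSum, Finset.smul_sum, ← Finset.sum_sub_distrib, smul_smul, ← sub_smul]
        refine Finset.sum_congr rfl fun e _ => congrArg (· • _) ?_
        have h := hswap (otherLine e)
        simp only [quadric, meetBracket] at h
        linear_combination -h
    _ = 0 := by rw [h₀, h₁, smul_zero, smul_zero, sub_zero]

theorem exists_not_dvd_dotProduct {ϖ : B} (hϖ : Prime ϖ) {w w' : Fin 2 → Fin 4 → B}
    (hw : ¬ϖ ∣ lineBracket w (w' 0) (w' 1)) {q : Fin 4 → B} (hq : ¬∀ k, ϖ ∣ q k)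
    (h : ∀ c, q ⬝ᵥ w c = 0) : ∃ f, ¬ϖ ∣ q ⬝ᵥ w' f := by
  by_contra! hdvd
  refine hq fun k => (hϖ.dvd_or_dvd (dvd_mul_of_dvd_dotProduct ?_ hdvd k)).resolve_left hw
  exact fun c => (h c).symm ▸ dvd_zero ϖ

theorem exists_smul_eq_of_isRelPrime [IsDomain B] [DecompositionMonoid B] {a : Fin 2 → B}
    (ha : IsRelPrime (a 0) (a 1)) (ha₀ : a 0 ≠ 0 ∨ a 1 ≠ 0) {n : Type*} {S : Fin 2 → n → B}
    (h : a 1 • S 0 = a 0 • S 1) : ∃ H : n → B, ∀ f, S f = a f • H := by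
  have hdvd₀ (r : n) : a 0 ∣ S 0 r :=
    ha.dvd_of_dvd_mul_left ⟨S 1 r, congrFun h r⟩
  have hdvd₁ (r : n) : a 1 ∣ S 1 r :=
    ha.symm.dvd_of_dvd_mul_left ⟨S 0 r, (congrFun h r).symm⟩
  rcases ha₀ with ha₀ | ha₁
  · choose H hH using hdvd₀
    refine ⟨H, Fin.forall_fin_two.2 ⟨funext hH, funext fun r => mul_left_cancel₀ ha₀ ?_⟩⟩
    have hr := congrFun h r
    simp only [Pi.smul_apply, smul_eq_mul, hH] at hr ⊢
    rw [← hr, mul_left_comm]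
  · choose H hH using hdvd₁
    refine ⟨H, Fin.forall_fin_two.2 ⟨funext fun r => mul_left_cancel₀ ha₁ ?_, funext hH⟩⟩
    have hr := congrFun h r
    simp only [Pi.smul_apply, smul_eq_mul, hH] at hr ⊢
    rw [hr, mul_left_comm]

theorem mixedSum_apply (i f r : Fin 2) :
    mixedSum v x i f r = ∑ e, (joinPlane (v (otherLine e)) x ⬝ᵥ v (baseLine (i + 1)) f) *
      ∑ c, (baseProj v i *ᵥ v (otherLine e) c) r * kernelVector v x (e, c) := by
  simp only [mixedSum, Finset.sum_apply, Pi.smul_apply, smul_eq_mul, otherPt, baseProj,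
    lineProj_mulVec_linePt_eq]

end Ring

section GenericPoint

variable {K : Type*} [Field K] {v : Fin 6 → Fin 2 → Fin 4 → K}

theorem GeneralPosition.exists_not_dvd_genericPlane_dotProduct (hv : GeneralPosition v)
    {ϖ : MvPolynomial (Fin 4) K} (hϖ : Prime ϖ) {i j : Fin 6} (hij : i ≠ j) :
    ∃ f, ¬ϖ ∣ genericPlane v i ⬝ᵥ constLine v j f := by
  have hnd := hv.nondegenerate_quotient hϖ 0
  have hdvd (b) : Ideal.Quotient.mk (Ideal.span {ϖ}) b = 0 ↔ ϖ ∣ b := by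
    rw [Ideal.Quotient.eq_zero_iff_mem, Ideal.mem_span_singleton]
  refine exists_not_dvd_dotProduct hϖ (w := constLine v i) ?_ (fun h => ?_)
    (genericPlane_dotProduct i)
  · rw [← hdvd, map_lineBracket]
    exact hnd.lineBracket_ne_zero i j hij
  · exact hnd.plane_ne_zero i (funext fun k => (hdvd _).2 (h k))

theorem GeneralPosition.exists_genericPlane_dotProduct_ne_zero (hv : GeneralPosition v)
    {i j : Fin 6} (hij : i ≠ j) : ∃ f, genericPlane v i ⬝ᵥ constLine v j f ≠ 0 :=
  (hv.exists_not_dvd_genericPlane_dotProduct (X_prime (i := (0 : Fin 4))) hij).imp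
    fun _ hf h => hf (h ▸ dvd_zero _)

theorem GeneralPosition.isRelPrime_genericPlane_dotProduct (hv : GeneralPosition v) {i j : Fin 6}
    (hij : i ≠ j) :
    IsRelPrime (genericPlane v i ⬝ᵥ constLine v j 0) (genericPlane v i ⬝ᵥ constLine v j 1) := by
  refine WfDvdMonoid.isRelPrime_of_no_irreducible_factors (fun h => ?_) fun ϖ hϖ h₀ h₁ => ?_
  · obtain ⟨f, hf⟩ := hv.exists_genericPlane_dotProduct_ne_zero hij
    fin_cases f
    exacts [hf h.1, hf h.2]
  · obtain ⟨f, hf⟩ := hv.exists_not_dvd_genericPlane_dotProduct hϖ.prime hij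
    fin_cases f
    exacts [hf h₀, hf h₁]

theorem GeneralPosition.exists_mixedSum_eq_smul (hv : GeneralPosition v) (i : Fin 2) :
    ∃ H, ∀ f, mixedSum (constLine v) X i f =
      (genericPlane v (baseLine i) ⬝ᵥ constLine v (baseLine (i + 1)) f) • H := by
  have hne := baseLine_ne_baseLine_add_one i
  refine exists_smul_eq_of_isRelPrime (hv.isRelPrime_genericPlane_dotProduct hne) ?_
    (smul_mixedSum_comm i)
  obtain ⟨f, hf⟩ := hv.exists_genericPlane_dotProduct_ne_zero hne
  fin_cases f
  exacts [Or.inl hf, Or.inr hf]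

theorem isHomogeneous_baseProj_mulVec_constLine (i r : Fin 2) (m : Fin 6) (c : Fin 2) :
    ((baseProj (constLine v) i *ᵥ constLine v m c) r).IsHomogeneous 0 :=
  (congrFun (map_lineProj_mulVec C _ _ (v m c)) r) ▸ isHomogeneous_C _ _

theorem isHomogeneous_kernelVector (b : (Fin 2 × Fin 2) × Fin 2) :
    (kernelVector (constLine v) X b).IsHomogeneous 7 := by
  rw [kernelVector, adjugate_apply]
  refine isHomogeneous_det (d := fun a => if a = ((1, 1), 1) then 0 else 1) fun a j => ?_
  by_cases ha : a = ((1, 1), 1)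
  · rw [ha, updateRow_self, if_pos rfl, Pi.single_apply]
    split_ifs
    exacts [isHomogeneous_one _ _, isHomogeneous_zero _ _ _]
  · rw [updateRow_ne ha, if_neg ha]
    exact (isHomogeneous_baseProj_mulVec_constLine _ _ _ _).mul
      (isHomogeneous_dotProduct (e := 0) (isHomogeneous_genericPlane _)
        fun _ => isHomogeneous_C _ _)

theorem isHomogeneous_mixedSum (i f r : Fin 2) :
    (mixedSum (constLine v) X i f r).IsHomogeneous 8 := by
  rw [mixedSum_apply]
  refine IsHomogeneous.sum _ _ _ fun e _ => IsHomogeneous.mul (m := 1) (n := 7) ?_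
    (IsHomogeneous.sum _ _ _ fun c _ => IsHomogeneous.mul (m := 0) (n := 7) ?_
      (isHomogeneous_kernelVector _))
  · exact isHomogeneous_dotProduct (e := 0) (isHomogeneous_genericPlane _)
      fun _ => isHomogeneous_C _ _
  · exact isHomogeneous_baseProj_mulVec_constLine _ _ _ _

end GenericPoint

end BaseCoordinates

section BaseCoordinatesOrder

variable {K : Type*} [Field K] {v : Fin 6 → Fin 2 → Fin 4 → K} {o : Fin 6} {e : Fin 2 → Fin 4 → K}

theorem pow_single_mul_pow_sub_single {A : Type*} [Monoid A] (x : A) (o i : Fin 6) :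
    x ^ (Pi.single o 1 : Fin 6 → ℕ) i * x ^ (2 - (Pi.single o 1 : Fin 6 → ℕ) i) = x ^ 2 := by
  rw [← pow_add, Nat.add_sub_cancel']
  rw [Pi.single_apply]
  split_ifs <;> decide

theorem blowup_genericPlane_dotProduct (i : Fin 6) (y : Fin 4 → MvPolynomial (Fin 4) K) :
    blowup (v o) e (genericPlane v i ⬝ᵥ y) = Polynomial.X ^ (Pi.single o 1 : Fin 6 → ℕ) i *
      (strictPlane v o e i ⬝ᵥ (blowup (v o) e).toRingHom ∘ y) := by
  refine (RingHom.map_dotProduct (blowup (v o) e).toRingHom _ _).trans ?_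
  have hplane : (blowup (v o) e).toRingHom ∘ genericPlane v i = _ := blowup_comp_genericPlane i
  rw [hplane, smul_dotProduct, smul_eq_mul]

theorem eval_baseProj_mulVec_X (x : Fin 4 → K) (i r : Fin 2) :
    eval x ((baseProj (constLine v) i *ᵥ X) r) = (baseProj v i *ᵥ x) r := by
  refine (congrFun (map_lineProj_mulVec (eval x) _ _ X) r).trans ?_
  simp [baseProj, constLine, Function.comp_def]

namespace GeneralPosition

theorem not_X_dvd_blowup_baseProj_mulVec_X (hv : GeneralPosition v) {i : Fin 2}
    (he : ∀ c c', e c ⬝ᵥ v (baseLine i) c' = if c = c' then 1 else 0) :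
    ¬Polynomial.X ∣ blowup (v (baseLine i)) e ((baseProj (constLine v) i *ᵥ X) 0) := by
  rw [Polynomial.X_dvd_iff]
  intro h
  have heval := eval_coeff_zero_blowup he ((baseProj (constLine v) i *ᵥ X) 0)
  have hpt : v (baseLine i) 0 = linePt (v (baseLine i)) ![1, 0] := by simp [linePt]
  rw [h, map_zero, eval_baseProj_mulVec_X, hpt, baseProj, lineProj_mulVec_linePt_self] at heval
  exact hv.lineBracket_ne_zero _ _ (baseLine_ne_baseLine_add_one i) (by simpa using heval.symm)

theorem X_pow_dvd_blowup_kernelVector (hv : GeneralPosition v)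
    (he : ∀ c c', e c ⬝ᵥ v o c' = if c = c' then 1 else 0) (m : Fin 2 × Fin 2) (c : Fin 2) :
    Polynomial.X ^ (2 - (Pi.single o 1 : Fin 6 → ℕ) (otherLine m)) ∣
      blowup (v o) e (kernelVector (constLine v) X (m, c)) := by
  change _ ∣ (blowup (v o) e).toRingHom _
  rw [map_kernelVector]
  refine pow_dvd_kernelVector Polynomial.prime_X (o := o) (fun k => ?_) (fun i hi => ?_) m c
  · have hplane := congrFun (blowup_comp_genericPlane (v := v) (o := o) (e := e) o) k
    rw [Pi.single_eq_same, pow_one] at hplane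
    rw [← map_joinPlane]
    exact hplane ▸ dvd_mul_right _ _
  · subst hi
    rw [baseProj, ← map_lineProj_mulVec]
    exact hv.not_X_dvd_blowup_baseProj_mulVec_X he

theorem X_sq_dvd_blowup_mixedSum (hv : GeneralPosition v)
    (he : ∀ c c', e c ⬝ᵥ v o c' = if c = c' then 1 else 0) (i f r : Fin 2) :
    Polynomial.X ^ 2 ∣ blowup (v o) e (mixedSum (constLine v) X i f r) := by
  rw [mixedSum_apply, map_sum]
  refine Finset.dvd_sum fun m _ => ?_
  rw [map_mul, ← pow_single_mul_pow_sub_single _ o (otherLine m)]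
  refine mul_dvd_mul ?_ ?_
  · have hplane := blowup_genericPlane_dotProduct (v := v) (o := o) (e := e) (otherLine m)
      (constLine v (baseLine (i + 1)) f)
    exact hplane ▸ dvd_mul_right _ _
  · rw [map_sum]
    refine Finset.dvd_sum fun c _ => ?_
    rw [map_mul]
    exact (hv.X_pow_dvd_blowup_kernelVector he m c).mul_left _

theorem exists_not_X_dvd_strictPlane_dotProduct (hv : GeneralPosition v)
    (he : ∀ c c', e c ⬝ᵥ v o c' = if c = c' then 1 else 0) {i j : Fin 6} (hij : i ≠ j) :
    ∃ f, ¬Polynomial.X ∣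
      strictPlane v o e i ⬝ᵥ (blowup (v o) e).toRingHom ∘ constLine v j f := by
  have hnd := hv.nondegenerate_strictPlane he
  have hbracket : ¬Polynomial.X ∣
      lineBracket (fun c => (blowup (v o) e).toRingHom ∘ constLine v i c)
        ((blowup (v o) e).toRingHom ∘ constLine v j 0)
        ((blowup (v o) e).toRingHom ∘ constLine v j 1) := by
    rw [Polynomial.X_dvd_iff, ← Polynomial.constantCoeff_apply, map_lineBracket]
    exact hnd.lineBracket_ne_zero i j hij
  have hplane : ¬∀ k, Polynomial.X ∣ strictPlane v o e i k := fun h =>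
    hnd.plane_ne_zero i (funext fun k => Polynomial.X_dvd_iff.1 (h k))
  refine exists_not_dvd_dotProduct Polynomial.prime_X
    (w' := fun c => (blowup (v o) e).toRingHom ∘ constLine v j c) hbracket hplane fun c => ?_
  have hzero := blowup_genericPlane_dotProduct (v := v) (o := o) (e := e) i (constLine v i c)
  rw [genericPlane_dotProduct, map_zero] at hzero
  exact (mul_eq_zero.1 hzero.symm).resolve_left (pow_ne_zero _ Polynomial.X_ne_zero)

theorem X_pow_dvd_blowup_of_mixedSum_eq_smul (hv : GeneralPosition v)
    (he : ∀ c c', e c ⬝ᵥ v o c' = if c = c' then 1 else 0) {i : Fin 2}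
    {H : Fin 2 → MvPolynomial (Fin 4) K}
    (hH : ∀ f, mixedSum (constLine v) X i f =
      (genericPlane v (baseLine i) ⬝ᵥ constLine v (baseLine (i + 1)) f) • H) (r : Fin 2) :
    Polynomial.X ^ (2 - (Pi.single o 1 : Fin 6 → ℕ) (baseLine i)) ∣ blowup (v o) e (H r) := by
  obtain ⟨f, hf⟩ := hv.exists_not_X_dvd_strictPlane_dotProduct he (baseLine_ne_baseLine_add_one i)
  have hsq := hv.X_sq_dvd_blowup_mixedSum he i f r
  rw [congrFun (hH f) r, Pi.smul_apply, smul_eq_mul, map_mul, blowup_genericPlane_dotProduct] at hsq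
  rw [← pow_single_mul_pow_sub_single _ o (baseLine i), mul_assoc,
    mul_dvd_mul_iff_left (pow_ne_zero _ Polynomial.X_ne_zero)] at hsq
  simpa using Polynomial.prime_X.pow_dvd_of_dvd_mul_left _ hf hsq

end GeneralPosition

end BaseCoordinatesOrder

section ToddCoordinates

variable {K : Type*} [Field K] {v : Fin 6 → Fin 2 → Fin 4 → K}

/-- Coordinates on the six lines assembled from coordinates on the base lines and the ones on the
other lines given by `kernelVector`. -/
def toddCoords (v : Fin 6 → Fin 2 → Fin 4 → K) (H : Fin 2 → Fin 2 → MvPolynomial (Fin 4) K) :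
    Fin 6 → Fin 2 → MvPolynomial (Fin 4) K :=
  Fin.append H fun k c => kernelVector (constLine v) X (finProdFinEquiv.symm k, c)

theorem toddCoords_baseLine (H : Fin 2 → Fin 2 → MvPolynomial (Fin 4) K) (i : Fin 2) :
    toddCoords v H (baseLine i) = H i :=
  Fin.append_left _ _ _

theorem toddCoords_otherLine (H : Fin 2 → Fin 2 → MvPolynomial (Fin 4) K) (e : Fin 2 × Fin 2) :
    toddCoords v H (otherLine e) = fun c => kernelVector (constLine v) X (e, c) := by
  rw [toddCoords, otherLine, Fin.append_right, Equiv.symm_apply_apply]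

theorem sum_smul_baseProj_mulVec_toddCoords {H : Fin 2 → Fin 2 → MvPolynomial (Fin 4) K} (i : Fin 2)
    (hH : ∀ f, mixedSum (constLine v) X i f =
      -((genericPlane v (baseLine i) ⬝ᵥ constLine v (baseLine (i + 1)) f) •
        lineBracket (constLine v (baseLine i)) (constLine v (baseLine (i + 1)) 0)
          (constLine v (baseLine (i + 1)) 1) • H i)) (j f : Fin 2) :
    ∑ m, (genericPlane v m ⬝ᵥ constLine v (baseLine j) f) •
      (baseProj (constLine v) i *ᵥ linePt (constLine v m) (toddCoords v H m)) = 0 := by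
  have hother (e : Fin 2 × Fin 2) :
      linePt (constLine v (otherLine e)) (toddCoords v H (otherLine e)) =
        otherPt (constLine v) X e := by
    rw [toddCoords_otherLine, otherPt]
  rw [sum_eq_add_sum_otherLine _ i]
  simp only [hother]
  have hnext : baseProj (constLine v) i *ᵥ
      linePt (constLine v (baseLine (i + 1))) (toddCoords v H (baseLine (i + 1))) = 0 :=
    lineProj_mulVec_linePt _ _ _
  rw [hnext, smul_zero, add_zero]
  obtain rfl | rfl : j = i ∨ j = i + 1 :=
    (by decide : ∀ i j : Fin 2, j = i ∨ j = i + 1) i j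
  · rw [genericPlane_dotProduct, zero_smul, zero_add]
    exact sum_smul_baseProj_mulVec_otherPt j f
  · rw [toddCoords_baseLine, baseProj, lineProj_mulVec_linePt_self, add_comm,
      ← eq_neg_iff_add_eq_zero]
    exact hH f

namespace GeneralPosition

theorem isHomogeneous_of_mixedSum_eq_smul (hv : GeneralPosition v) {i : Fin 2}
    {H : Fin 2 → MvPolynomial (Fin 4) K}
    (hH : ∀ f, mixedSum (constLine v) X i f =
      (genericPlane v (baseLine i) ⬝ᵥ constLine v (baseLine (i + 1)) f) • H) (r : Fin 2) :
    (H r).IsHomogeneous 7 := by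
  obtain ⟨f, hf⟩ := hv.exists_genericPlane_dotProduct_ne_zero (baseLine_ne_baseLine_add_one i)
  have hsum := isHomogeneous_mixedSum (v := v) i f r
  rw [hH f] at hsum
  exact isHomogeneous_of_mul_left (m := 1) (isHomogeneous_dotProduct (e := 0)
    (isHomogeneous_genericPlane _) fun _ => isHomogeneous_C _ _) hf hsum

theorem exists_toddCoordinates (hv : GeneralPosition v) :
    ∃ H, ToddCoordinates v (toddCoords v H) := by
  choose H hH using hv.exists_mixedSum_eq_smul
  set D : Fin 2 → K := fun i =>
    lineBracket (v (baseLine i)) (v (baseLine (i + 1)) 0) (v (baseLine (i + 1)) 1)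
  have hD (i : Fin 2) : (C (D i) * -C (D i)⁻¹ : MvPolynomial (Fin 4) K) = -1 := by
    rw [mul_neg, ← C_mul, mul_inv_cancel₀ (hv.lineBracket_ne_zero _ _
      (baseLine_ne_baseLine_add_one i)), C_1]
  have hbracket (i : Fin 2) : lineBracket (constLine v (baseLine i))
      (constLine v (baseLine (i + 1)) 0) (constLine v (baseLine (i + 1)) 1) = C (D i) :=
    (map_lineBracket C _ _ _).symm
  have hrel (i) := sum_smul_baseProj_mulVec_toddCoords (v := v)
    (H := fun i => (-C (D i)⁻¹ : MvPolynomial (Fin 4) K) • H i) i fun f => by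
      rw [hbracket, smul_smul (C (D i)), hD, neg_one_smul, smul_neg, neg_neg, hH]
  refine ⟨fun i => (-C (D i)⁻¹ : MvPolynomial (Fin 4) K) • H i, ?_, fun m c => ?_,
    fun o e he m c => ?_⟩
  · refine sum_vecMulVec_eq_zero_of_lineProj (w := constLine v (baseLine 0))
      (w' := constLine v (baseLine 1)) ?_ (fun u hu c => ?_) fun u hu c => ?_
    · exact (hbracket 0).trans_ne (C_ne_zero.2 (hv.lineBracket_ne_zero _ _ (by decide)))
    all_goals
      obtain ⟨j, rfl⟩ : ∃ j, u = constLine v (baseLine j) := by simpa [Fin.exists_fin_two] using hu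
    exacts [hrel 0 j c, hrel 1 j c]
  · rcases eq_baseLine_or_eq_otherLine m with ⟨i, rfl⟩ | ⟨e, rfl⟩
    · rw [toddCoords_baseLine, Pi.smul_apply, smul_eq_mul, ← zero_add 7]
      exact (isHomogeneous_C _ _).neg.mul (hv.isHomogeneous_of_mixedSum_eq_smul (hH i) c)
    · rw [toddCoords_otherLine]
      exact isHomogeneous_kernelVector _
  · rcases eq_baseLine_or_eq_otherLine m with ⟨i, rfl⟩ | ⟨e, rfl⟩
    · rw [toddCoords_baseLine, Pi.smul_apply, smul_eq_mul, map_mul]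
      exact (hv.X_pow_dvd_blowup_of_mixedSum_eq_smul he (hH i) c).mul_left _
    · rw [toddCoords_otherLine]
      exact hv.X_pow_dvd_blowup_kernelVector he _ _

end GeneralPosition

end ToddCoordinates

section KernelPlane

variable {B B' : Type*} [CommRing B] [CommRing B']

theorem adjugate_mul_comm_of_mulVec_eq_zero {n : Type*} [Fintype n] [DecidableEq n]
    {M : Matrix n n B} {w : n → B} (hw : M *ᵥ w = 0) (a b b' : n) :
    M.adjugate b a * w b' = w b * M.adjugate b' a := by
  set N := M.updateRow a (Pi.single b 1) with hN
  have hNw : N *ᵥ w = w b • Pi.single a 1 := by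
    rw [hN, updateRow_mulVec, hw, single_one_dotProduct]
    funext i
    by_cases hi : i = a <;> simp [hi]
  have hadj : N.adjugate *ᵥ (N *ᵥ w) = N.det • w := by
    rw [mulVec_mulVec, adjugate_mul, smul_mulVec, one_mulVec]
  rw [hNw, mulVec_smul, mulVec_single_one] at hadj
  have h := congrFun hadj b'
  simp only [Pi.smul_apply, col_apply, smul_eq_mul, adjugate_apply, hN, updateRow_idem] at h
  simpa only [adjugate_apply] using h.symm

/-- The plane through the points `otherPt` of the lines `2, 3, 4`. At the generic point of `P³`
it is a multiple of the Todd transformation, by a factor which is a form. -/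
def kernelPlane (v : Fin 6 → Fin 2 → Fin 4 → B) (x : Fin 4 → B) : Fin 4 → B :=
  cross3 (otherPt v x (0, 0)) (otherPt v x (0, 1)) (otherPt v x (1, 0))

theorem map_otherPt (f : B →+* B') (v : Fin 6 → Fin 2 → Fin 4 → B) (x : Fin 4 → B)
    (e : Fin 2 × Fin 2) : f ∘ otherPt v x e = otherPt (fun i c => f ∘ v i c) (f ∘ x) e := by
  have hvec : (f ∘ fun c => kernelVector v x (e, c)) = _ :=
    funext fun c => map_kernelVector f (e, c)
  rw [otherPt, map_linePt, hvec, otherPt]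

theorem map_kernelPlane (f : B →+* B') (v : Fin 6 → Fin 2 → Fin 4 → B) (x : Fin 4 → B) :
    f ∘ kernelPlane v x = kernelPlane (fun i c => f ∘ v i c) (f ∘ x) := by
  simp only [kernelPlane, map_cross3, map_otherPt]

theorem smul_kernelPlane {v : Fin 6 → Fin 2 → Fin 4 → B} {x : Fin 4 → B}
    {w : (Fin 2 × Fin 2) × Fin 2 → B} (hw : relationMatrix v x *ᵥ w = 0)
    (b : (Fin 2 × Fin 2) × Fin 2) :
    w b ^ 3 • kernelPlane v x = kernelVector v x b ^ 3 •
      cross3 (linePt (v (otherLine (0, 0))) fun c => w ((0, 0), c))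
        (linePt (v (otherLine (0, 1))) fun c => w ((0, 1), c))
        (linePt (v (otherLine (1, 0))) fun c => w ((1, 0), c)) := by
  have hpt (e : Fin 2 × Fin 2) : w b • otherPt v x e =
      kernelVector v x b • linePt (v (otherLine e)) fun c => w (e, c) := by
    rw [otherPt, ← linePt_smul, ← linePt_smul]
    exact congrArg _ (funext fun c => (adjugate_mul_comm_of_mulVec_eq_zero hw _ b (e, c)).symm)
  have hcube (y : B) : y ^ 3 = y * y * y := by ring
  rw [hcube, hcube, kernelPlane, ← cross3_smul, ← cross3_smul, hpt, hpt, hpt]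

end KernelPlane

section Degenerate

/-- Six lines over an arbitrary ring for which the Todd transformation degenerates to a quadratic
Cremona transformation. -/
def degenerateLines (B : Type*) [CommRing B] : Fin 6 → Fin 2 → Fin 4 → B :=
  ![![![1, 0, 0, 0], ![0, 1, 0, 0]], ![![0, 0, 1, 0], ![0, 0, 0, 1]],
    ![![1, 0, 1, 0], ![0, 1, 0, 0]], ![![1, 0, 1, 0], ![0, 1, 0, 1]],
    ![![1, 0, 0, -1], ![0, 1, -1, 0]], ![![1, 0, 0, 1], ![0, 1, 1, 0]]]

variable {B B' : Type*} [CommRing B] [CommRing B']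

theorem map_degenerateLines (f : B →+* B') :
    (fun i c => f ∘ degenerateLines B i c) = degenerateLines B' := by
  funext i c k
  fin_cases i <;> fin_cases c <;> fin_cases k <;> simp [degenerateLines]

theorem baseProj_degenerateLines_mulVec (i : Fin 2) (y : Fin 4 → B) :
    baseProj (degenerateLines B) i *ᵥ y = ![![y 0, y 1], ![y 2, y 3]] i := by
  rw [baseProj, lineProj_mulVec]
  funext r
  fin_cases i <;> fin_cases r <;> simp [baseLine, degenerateLines, bracket_eq]

theorem dotProduct_degenerateLines_baseLine (i f : Fin 2) (q : Fin 4 → B) :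
    q ⬝ᵥ degenerateLines B (baseLine i) f = ![![q 0, q 1], ![q 2, q 3]] i f := by
  fin_cases i <;> fin_cases f <;>
    simp [baseLine, degenerateLines, dotProduct, Fin.sum_univ_four]

theorem degenerateLines_otherLine (e : Fin 2 × Fin 2) : degenerateLines B (otherLine e) =
    ![![![![1, 0, 1, 0], ![0, 1, 0, 0]], ![![1, 0, 1, 0], ![0, 1, 0, 1]]],
      ![![![1, 0, 0, -1], ![0, 1, -1, 0]], ![![1, 0, 0, 1], ![0, 1, 1, 0]]]] e.1 e.2 := by
  obtain ⟨i, j⟩ := e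
  fin_cases i <;> fin_cases j <;> rfl

theorem joinPlane_degenerateLines_otherLine (e : Fin 2 × Fin 2) (x : Fin 4 → B) :
    joinPlane (degenerateLines B (otherLine e)) x =
    ![![![x 3, 0, -x 3, x 2 - x 0], ![x 3 - x 1, x 0 - x 2, x 1 - x 3, x 2 - x 0]],
      ![![x 1 + x 2, -(x 0 + x 3), -(x 0 + x 3), x 1 + x 2],
        ![x 1 - x 2, x 3 - x 0, x 0 - x 3, x 2 - x 1]]] e.1 e.2 := by
  funext k
  rw [degenerateLines_otherLine]
  obtain ⟨i, j⟩ := e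
  fin_cases i <;> fin_cases j <;> fin_cases k <;>
    simp [joinPlane, cross3, bracket_eq, sub_eq_add_neg, add_comm]

theorem relationMatrix_degenerateLines_apply (x : Fin 4 → B) (a b : (Fin 2 × Fin 2) × Fin 2) :
    relationMatrix (degenerateLines B) x a b =
      let y := degenerateLines B (otherLine b.1) b.2
      let p := joinPlane (degenerateLines B (otherLine b.1)) x
      ![![y 0, y 1], ![y 2, y 3]] a.1.1 a.1.2 * ![![p 0, p 1], ![p 2, p 3]] a.1.1 a.2 := by
  rw [relationMatrix, of_apply, baseProj_degenerateLines_mulVec,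
    dotProduct_degenerateLines_baseLine]

/-- A vector in the kernel of `relationMatrix` for `degenerateLines`, found by elimination. -/
def degenerateKernel (x : Fin 4 → B) : (Fin 2 × Fin 2) × Fin 2 → B :=
  let h := x 0 - x 2
  let k := x 1 - x 3
  let d := x 0 * x 2 - x 1 * x 3
  fun p => ![
    ![![2 * x 3 * d * (k ^ 2 - h ^ 2), 2 * h * d * (k ^ 2 - h ^ 2)],
      ![2 * x 3 ^ 2 * k * d, -2 * x 3 ^ 2 * h * d]],
    ![![x 3 ^ 2 * h * (x 0 - x 1) * (h + k),
        x 3 * h * (x 0 * h * (h - x 3) + x 1 * x 3 * h - x 1 * k * (x 0 - x 3))],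
      ![x 3 ^ 2 * h * (x 1 * (k + x 2) - x 0 * (h + x 3)),
        x 3 * h * (x 1 * k * (x 0 + x 3) - x 0 * h * (h + x 3) - x 1 * x 3 * h)]]] p.1.1 p.1.2 p.2

theorem relationMatrix_mulVec_degenerateKernel (x : Fin 4 → B) :
    relationMatrix (degenerateLines B) x *ᵥ degenerateKernel x = 0 := by
  funext ⟨⟨i, r⟩, f⟩
  simp only [mulVec, dotProduct, Fintype.sum_prod_type, Fin.sum_univ_two,
    relationMatrix_degenerateLines_apply, joinPlane_degenerateLines_otherLine]
  simp only [degenerateLines_otherLine, degenerateKernel]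
  fin_cases i <;> fin_cases r <;> fin_cases f <;> simp <;> ring

theorem kernelVector_degenerateLines_ne_zero :
    kernelVector (degenerateLines ℤ) ![-2, -1, -1, -1] ((0, 0), 0) ≠ 0 := by
  rw [kernelVector, adjugate_apply]
  intro h
  obtain ⟨w, hw, hNw⟩ := exists_mulVec_eq_zero_iff.2 h
  refine hw ?_
  rw [updateRow_mulVec] at hNw
  have hpivot := congrFun hNw ((1, 1), 1)
  rw [Function.update_self, single_one_dotProduct, Pi.zero_apply] at hpivot
  have hrow (a) (ha : a ≠ ((1, 1), 1)) :
      (relationMatrix (degenerateLines ℤ) ![-2, -1, -1, -1] *ᵥ w) a = 0 := by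
    rw [← Function.update_of_ne ha _ (_ *ᵥ w), hNw, Pi.zero_apply]
  simp only [Prod.forall, Fin.forall_fin_two, mulVec, dotProduct, Fintype.sum_prod_type,
    Fin.sum_univ_two, relationMatrix_degenerateLines_apply,
    joinPlane_degenerateLines_otherLine] at hrow
  simp only [funext_iff, Prod.forall, Fin.forall_fin_two, Pi.zero_apply]
  simp [degenerateLines_otherLine] at hrow
  omega

end Degenerate

section DegenerateDominance

variable {B : Type*} [CommRing B]

/-- The quadratic Cremona transformation to which the Todd transformation degenerates. -/
def cremona (x : Fin 4 → B) : Fin 4 → B :=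
  ![x 0 ^ 2 - x 0 * x 2 + x 1 * x 3, -(x 0 * x 3), -(x 1 * x 3), x 0 * x 1]

/-- The inverse of `cremona`, up to a common factor of the coordinates. -/
def cremonaInv (x : Fin 4 → B) : Fin 4 → B :=
  ![x 1 * x 3, x 2 * x 3, x 1 * x 3 - x 2 ^ 2 - x 2 * x 0, -(x 1 * x 2)]

theorem cremona_cremonaInv (x : Fin 4 → B) :
    cremona (cremonaInv x) = (x 1 * x 2 * x 3) • x := by
  funext k
  fin_cases k <;> simp [cremona, cremonaInv] <;> ring

/-- The point of the line `otherLine e` with coordinates given by `degenerateKernel`. -/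
def degeneratePt (x : Fin 4 → B) (e : Fin 2 × Fin 2) : Fin 4 → B :=
  linePt (degenerateLines B (otherLine e)) fun c => degenerateKernel x (e, c)

theorem cremona_dotProduct_degeneratePt (x : Fin 4 → B) (e : Fin 2 × Fin 2) :
    cremona x ⬝ᵥ degeneratePt x e = 0 := by
  simp only [degeneratePt, degenerateLines_otherLine, degenerateKernel, cremona, linePt,
    dotProduct, Fin.sum_univ_four]
  obtain ⟨i, j⟩ := e
  fin_cases i <;> fin_cases j <;> simp <;> ring

theorem smul_kernelPlane_degenerateLines (x : Fin 4 → B) :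
    degenerateKernel x ((0, 0), 0) ^ 3 • kernelPlane (degenerateLines B) x =
      kernelVector (degenerateLines B) x ((0, 0), 0) ^ 3 •
        cross3 (degeneratePt x (0, 0)) (degeneratePt x (0, 1)) (degeneratePt x (1, 0)) :=
  smul_kernelPlane (relationMatrix_mulVec_degenerateKernel x) _

theorem smul_cremona_eq (x : Fin 4 → B) {a b c : Fin 2 × Fin 2} (k : Fin 4) :
    cross3 (degeneratePt x a) (degeneratePt x b) (degeneratePt x c) k • cremona x =
      cremona x k • cross3 (degeneratePt x a) (degeneratePt x b) (degeneratePt x c) := by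
  funext l
  simp only [Pi.smul_apply, smul_eq_mul]
  rw [mul_comm (cremona x k)]
  exact cross3_mul_comm_of_dotProduct_eq_zero (cremona_dotProduct_degeneratePt x a)
    (cremona_dotProduct_degeneratePt x b) (cremona_dotProduct_degeneratePt x c) k l

variable {K : Type*} [Field K]

theorem constLine_degenerateLines :
    constLine (degenerateLines K) = degenerateLines (MvPolynomial (Fin 4) K) :=
  map_degenerateLines C

theorem aeval_eq_zero_of_smul_eq_smul {F : MvPolynomial (Fin 4) K} {a : ℕ}
    (hF : F.IsHomogeneous a) {c d : MvPolynomial (Fin 4) K} {Y Z : Fin 4 → MvPolynomial (Fin 4) K}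
    (hd : d ≠ 0) (hYZ : c • Y = d • Z) (hY : aeval Y F = 0) : aeval Z F = 0 := by
  have h : d ^ a * aeval Z F = 0 := by
    rw [← aeval_smul_of_isHomogeneous hF, ← hYZ, aeval_smul_of_isHomogeneous hF, hY, mul_zero]
  exact (mul_eq_zero.1 h).resolve_left (pow_ne_zero _ hd)

theorem eq_zero_of_aeval_cremona_eq_zero {F : MvPolynomial (Fin 4) K} {a : ℕ}
    (hF : F.IsHomogeneous a)
    (h : aeval (cremona (X : Fin 4 → MvPolynomial (Fin 4) K)) F = 0) : F = 0 := by
  have hcomp : (fun k => aeval (cremonaInv (X : Fin 4 → MvPolynomial (Fin 4) K))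
      (cremona (X : Fin 4 → MvPolynomial (Fin 4) K) k)) =
      (X 1 * X 2 * X 3 : MvPolynomial (Fin 4) K) • X := by
    rw [← cremona_cremonaInv]
    funext k
    fin_cases k <;> simp [cremona]
  have hinv := congrArg (aeval (cremonaInv (X : Fin 4 → MvPolynomial (Fin 4) K))) h
  rw [comp_aeval_apply, map_zero, hcomp] at hinv
  have hX : aeval X F = 0 :=
    aeval_eq_zero_of_smul_eq_smul hF
      (mul_ne_zero (mul_ne_zero (X_ne_zero _) (X_ne_zero _)) (X_ne_zero _)) (one_smul _ _) hinv
  rwa [aeval_X_left_apply] at hX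

theorem kernelVector_degenerateLines_X_ne_zero [CharZero K] :
    kernelVector (degenerateLines (MvPolynomial (Fin 4) K)) X ((0, 0), 0) ≠ 0 := by
  intro h
  set x : Fin 4 → K := Int.castRingHom K ∘ ![-2, -1, -1, -1] with hx
  have hX : eval x ∘ X = x := funext fun k => eval_X k
  have heval := congrArg (eval x) h
  rw [map_kernelVector, map_degenerateLines, ← map_degenerateLines (Int.castRingHom K), hX, hx,
    ← map_kernelVector, map_zero] at heval
  exact kernelVector_degenerateLines_ne_zero (Int.cast_eq_zero.1 heval)

theorem cross3_degeneratePt_ne_zero [CharZero K] :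
    cross3 (degeneratePt (X : Fin 4 → MvPolynomial (Fin 4) K) (0, 0)) (degeneratePt X (0, 1))
      (degeneratePt X (1, 0)) 0 ≠ 0 := by
  intro h
  have heval := congrArg (eval (Int.castRingHom K ∘ ![-2, -1, -1, -1])) h
  simp [cross3, degeneratePt, linePt, bracket_eq, degenerateLines_otherLine, degenerateKernel]
    at heval
  norm_num at heval

theorem eq_zero_of_aeval_kernelPlane_degenerateLines_eq_zero [CharZero K]
    {F : MvPolynomial (Fin 4) K} {a : ℕ} (hF : F.IsHomogeneous a)
    (h : aeval (kernelPlane (constLine (degenerateLines K)) X) F = 0) : F = 0 := by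
  rw [constLine_degenerateLines] at h
  have hcross := aeval_eq_zero_of_smul_eq_smul hF
    (pow_ne_zero 3 kernelVector_degenerateLines_X_ne_zero)
    (smul_kernelPlane_degenerateLines X) h
  exact eq_zero_of_aeval_cremona_eq_zero hF (aeval_eq_zero_of_smul_eq_smul hF
    cross3_degeneratePt_ne_zero (smul_cremona_eq X 0).symm hcross)

end DegenerateDominance

section Generic

variable {K σ τ : Type*} [Field K]

/-- The extension of a linear functional on `K[τ]` to `K[σ][τ]`, coefficientwise in `σ`. -/
def extendFunctional (φ : MvPolynomial τ K →ₗ[K] K) :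
    MvPolynomial τ (MvPolynomial σ K) →ₗ[MvPolynomial σ K] MvPolynomial σ K :=
  (basisMonomials τ (MvPolynomial σ K)).constr (MvPolynomial σ K) fun m => C (φ (monomial m 1))

theorem eval_extendFunctional (φ : MvPolynomial τ K →ₗ[K] K) (p : σ → K)
    (G : MvPolynomial τ (MvPolynomial σ K)) :
    eval p (extendFunctional φ G) = φ (map (eval p) G) := by
  induction G using MvPolynomial.induction_on' with
  | monomial m c =>
    have hmonomial : extendFunctional φ (monomial m c) = c * C (φ (monomial m 1)) := by
      have hbasis : monomial m c = c • basisMonomials τ (MvPolynomial σ K) m := by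
        rw [coe_basisMonomials, smul_monomial, smul_eq_mul, mul_one]
      rw [hbasis, map_smul, extendFunctional, Module.Basis.constr_basis, smul_eq_mul]
    rw [hmonomial, map_monomial, map_mul, eval_C, ← smul_eq_mul, ← map_smul, smul_monomial,
      smul_eq_mul, mul_one]
  | add G G' hG hG' => simp only [map_add, hG, hG']

theorem exists_ne_zero_forall_linearIndependent {n : Type*} [Finite n]
    (G : n → MvPolynomial τ (MvPolynomial σ K)) {p₀ : σ → K}
    (hG : LinearIndependent K fun i => map (eval p₀) (G i)) :
    ∃ P : MvPolynomial σ K, P ≠ 0 ∧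
      ∀ p, eval p P ≠ 0 → LinearIndependent K fun i => map (eval p) (G i) := by
  classical
  cases nonempty_fintype n
  obtain ⟨φ, hφ⟩ := LinearMap.exists_leftInverse_of_injective _
    (LinearMap.ker_eq_bot.2 hG.fintypeLinearCombination_injective)
  let M : Matrix n n (MvPolynomial σ K) :=
    of fun i j => extendFunctional (LinearMap.proj i ∘ₗ φ) (G j)
  have hM (p : σ → K) (i j : n) : (eval p).mapMatrix M i j = φ (map (eval p) (G j)) i :=
    eval_extendFunctional _ p (G j)
  refine ⟨M.det, fun hzero => ?_, fun p hp => Fintype.linearIndependent_iff.2 fun g hg => ?_⟩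
  · have hone : (eval p₀).mapMatrix M = 1 := by
      ext i j
      have hφj := congrFun (LinearMap.congr_fun hφ (Pi.single j 1)) i
      rw [LinearMap.comp_apply, Fintype.linearCombination_apply_single, one_smul] at hφj
      rw [hM, hφj, LinearMap.id_apply, one_apply, Pi.single_apply]
    have hdet := RingHom.map_det (eval p₀) M
    rw [hzero, hone, map_zero, det_one] at hdet
    exact zero_ne_one hdet
  · rw [RingHom.map_det] at hp
    refine congrFun (eq_zero_of_mulVec_eq_zero hp (funext fun i => ?_))
    have hφg := congrFun (congrArg φ hg) i
    rw [map_sum, map_zero, Finset.sum_apply] at hφg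
    simpa only [mulVec, dotProduct, hM, map_smul, Pi.smul_apply, smul_eq_mul, mul_comm] using hφg

variable [Fintype τ] [DecidableEq τ]

theorem aeval_eq_sum_finsuppAntidiag {A : Type*} [CommRing A] [Algebra K A] {F : MvPolynomial τ K}
    {a : ℕ} (hF : F.IsHomogeneous a) (Y : τ → A) :
    aeval Y F = ∑ m : Finset.finsuppAntidiag Finset.univ a, coeff m.1 F • ∏ k, Y k ^ m.1 k := by
  have hsupp : F.support ⊆ Finset.finsuppAntidiag Finset.univ a := fun m hm => by
    rw [Finset.mem_finsuppAntidiag, ← Finsupp.degree_eq_sum]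
    exact ⟨(hF.degree_eq_sum_deg_support hm).symm, Finset.subset_univ _⟩
  rw [Finset.sum_coe_sort _ fun m : τ →₀ ℕ => coeff m F • ∏ k, Y k ^ m k, aeval_def, eval₂_eq']
  simp only [← Algebra.smul_def]
  refine Finset.sum_subset hsupp fun m _ hm => ?_
  rw [notMem_support_iff.1 hm, zero_smul]

theorem linearIndependent_prod_pow_iff {A : Type*} [CommRing A] [Algebra K A] (Y : τ → A) (a : ℕ) :
    (LinearIndependent K fun m : Finset.finsuppAntidiag (Finset.univ : Finset τ) a =>
      ∏ k, Y k ^ m.1 k) ↔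
    ∀ F : MvPolynomial τ K, F.IsHomogeneous a → aeval Y F = 0 → F = 0 := by
  rw [Fintype.linearIndependent_iff]
  refine ⟨fun h F hF hY => ?_, fun h g hg m => ?_⟩
  · have hcoeff := h _ ((aeval_eq_sum_finsuppAntidiag hF Y).symm.trans hY)
    have hX := aeval_eq_sum_finsuppAntidiag hF (X : τ → MvPolynomial τ K)
    rw [aeval_X_left_apply] at hX
    rw [hX]
    exact Finset.sum_eq_zero fun m _ => by rw [hcoeff, zero_smul]
  · let F : MvPolynomial τ K := ∑ m, monomial m.1 (g m)
    have hcoeff (m) : coeff m.1 F = g m := by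
      simp only [F, coeff_sum, coeff_monomial, Subtype.coe_inj, Finset.sum_ite_eq',
        Finset.mem_univ, if_true]
    have hF : F.IsHomogeneous a := IsHomogeneous.sum _ _ _ fun m _ =>
      isHomogeneous_monomial _ ((Finsupp.degree_eq_sum _).trans
        (Finset.mem_finsuppAntidiag.1 m.2).1)
    have hF0 := h F hF <| by
      rw [aeval_eq_sum_finsuppAntidiag hF]
      simpa only [hcoeff] using hg
    rw [← hcoeff, hF0, coeff_zero]

end Generic

section GenericLines

variable {B B' : Type*} [CommRing B] [CommRing B']

/-- A form in the coordinates of six lines. General position is its nonvanishing for all orderings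
of the lines. -/
def generalPositionFactor (v : Fin 6 → Fin 2 → Fin 4 → B) : B :=
  lineBracket (v 0) (v 1 0) (v 1 1) * quadric (v 0) (v 1) (v 2) (v 3 0) *
    transversalForm (v 0) (v 1) (v 2) (v 3) (v 4)

theorem map_generalPositionFactor (f : B →+* B') (v : Fin 6 → Fin 2 → Fin 4 → B) :
    f (generalPositionFactor v) = generalPositionFactor fun i c => f ∘ v i c := by
  simp only [generalPositionFactor, map_mul, map_lineBracket, map_quadric, map_transversalForm]

/-- Six lines at which `generalPositionFactor` does not vanish over any nontrivial ring. -/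
def testLines (B : Type*) [CommRing B] : Fin 6 → Fin 2 → Fin 4 → B :=
  ![![![1, 0, 0, 0], ![0, 1, 0, 0]], ![![0, 0, 1, 0], ![0, 0, 0, 1]],
    ![![1, 0, 0, 1], ![0, -1, -1, 0]], ![![1, 0, 1, 0], ![0, 1, 0, 0]],
    ![![1, 0, 0, 0], ![0, 1, 0, 1]], 0]

theorem generalPositionFactor_testLines : generalPositionFactor (testLines B) = 1 := by
  have hline : lineBracket (testLines B 0) (testLines B 1 0) (testLines B 1 1) = 1 := by
    simp [testLines, lineBracket, bracket_eq]
  have hquadric :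
      quadric (testLines B 0) (testLines B 1) (testLines B 2) (testLines B 3 0) = 1 := by
    simp only [quadric, meetBracket, joinPlane_dotProduct, lineBracket]
    simp [testLines, bracket_eq]
  have htransversal : transversalForm (testLines B 0) (testLines B 1) (testLines B 2)
      (testLines B 3) (testLines B 4) = 1 := by
    simp [testLines, transversalForm, cross3, incidence, lineBracket, bracket_eq]
  rw [generalPositionFactor, hline, hquadric, htransversal, one_mul, one_mul]

/-- The form in the coordinates of six lines whose nonvanishing is general position. -/
def generalPositionForm (v : Fin 6 → Fin 2 → Fin 4 → B) : B :=
  ∏ σ : Equiv.Perm (Fin 6), generalPositionFactor (v ∘ σ)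

theorem map_generalPositionForm (f : B →+* B') (v : Fin 6 → Fin 2 → Fin 4 → B) :
    f (generalPositionForm v) = generalPositionForm fun i c => f ∘ v i c := by
  simp only [generalPositionForm, map_prod, map_generalPositionFactor]
  rfl

variable {K : Type*} [Field K]

theorem GeneralPosition.of_generalPositionForm_ne_zero {v : Fin 6 → Fin 2 → Fin 4 → K}
    (hv : generalPositionForm v ≠ 0) : GeneralPosition v := by
  simp only [generalPositionForm, generalPositionFactor, Finset.prod_ne_zero_iff, mul_ne_zero_iff,
    Finset.mem_univ, true_imp_iff, Function.comp_apply] at hv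
  refine ⟨fun i j hij => ?_, fun σ => (hv σ).1.2, fun σ => (hv σ).2⟩
  obtain ⟨σ, rfl, rfl⟩ := MulAction.is_two_pretransitive_iff.1
    (Equiv.Perm.isMultiplyPretransitive (Fin 6) 2) (zero_ne_one (α := Fin 6)) hij
  exact (hv σ).1.1

/-- The coordinates of six lines as a point of a 48-dimensional affine space. -/
abbrev lineCoords (v : Fin 6 → Fin 2 → Fin 4 → K) : Fin 6 × Fin 2 × Fin 4 → K :=
  fun q => v q.1 q.2.1 q.2.2

/-- Six lines with indeterminate coordinates. -/
def genericLines (K : Type*) [Field K] :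
    Fin 6 → Fin 2 → Fin 4 → MvPolynomial (Fin 6 × Fin 2 × Fin 4) K :=
  fun i c k => X (i, c, k)

theorem eval_comp_genericLines (v : Fin 6 → Fin 2 → Fin 4 → K) :
    (fun i c => eval (lineCoords v) ∘ genericLines K i c) = v := by
  funext i c k
  exact eval_X (i, c, k)

theorem eval_generalPositionForm_genericLines (v : Fin 6 → Fin 2 → Fin 4 → K) :
    eval (lineCoords v) (generalPositionForm (genericLines K)) = generalPositionForm v := by
  rw [map_generalPositionForm, eval_comp_genericLines]

theorem generalPositionForm_genericLines_ne_zero : generalPositionForm (genericLines K) ≠ 0 := by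
  refine Finset.prod_ne_zero_iff.2 fun σ _ h => ?_
  have hσ : (fun i c => eval (lineCoords (testLines K ∘ σ.symm)) ∘ (genericLines K ∘ σ) i c) =
      testLines K := by
    funext i
    refine (congrFun (eval_comp_genericLines (testLines K ∘ σ.symm)) (σ i)).trans ?_
    rw [Function.comp_apply, σ.symm_apply_apply]
  have heval := map_generalPositionFactor (eval (lineCoords (testLines K ∘ σ.symm)))
    (genericLines K ∘ σ)
  rw [h, map_zero, hσ, generalPositionFactor_testLines] at heval
  exact zero_ne_one heval

theorem map_eval_kernelPlane_genericLines (v : Fin 6 → Fin 2 → Fin 4 → K) :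
    map (eval (lineCoords v)) ∘ kernelPlane (fun i c => C ∘ genericLines K i c) X =
      kernelPlane (constLine v) X := by
  have hline : (fun i c => map (eval (lineCoords v)) ∘ C ∘ genericLines K i c) = constLine v := by
    funext i c k
    exact (map_C _ _).trans (congrArg C (eval_X (i, c, k)))
  have hX : map (eval (lineCoords v)) ∘ X = (X : Fin 4 → MvPolynomial (Fin 4) K) :=
    funext fun k => map_X _ k
  rw [map_kernelPlane, hline, hX]

theorem exists_ne_zero_forall_eq_zero_of_aeval_kernelPlane_eq_zero [CharZero K] (a : ℕ) :
    ∃ P : MvPolynomial (Fin 6 × Fin 2 × Fin 4) K, P ≠ 0 ∧ ∀ v, eval (lineCoords v) P ≠ 0 →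
      ∀ F : MvPolynomial (Fin 4) K, F.IsHomogeneous a →
        aeval (kernelPlane (constLine v) X) F = 0 → F = 0 := by
  let G (m : Finset.finsuppAntidiag (Finset.univ : Finset (Fin 4)) a) :
      MvPolynomial (Fin 4) (MvPolynomial (Fin 6 × Fin 2 × Fin 4) K) :=
    ∏ k, kernelPlane (fun i c => C ∘ genericLines K i c) X k ^ m.1 k
  have hG (v) : (LinearIndependent K fun m => map (eval (lineCoords v)) (G m)) ↔
      ∀ F : MvPolynomial (Fin 4) K, F.IsHomogeneous a →
        aeval (kernelPlane (constLine v) X) F = 0 → F = 0 := by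
    rw [← linearIndependent_prod_pow_iff, ← map_eval_kernelPlane_genericLines]
    simp only [G, map_prod, map_pow, Function.comp_apply]
  obtain ⟨P, hP, hdom⟩ := exists_ne_zero_forall_linearIndependent G
    ((hG (degenerateLines K)).2 fun F hF =>
      eq_zero_of_aeval_kernelPlane_degenerateLines_eq_zero hF)
  exact ⟨P, hP, fun v hv => (hG v).1 (hdom _ hv)⟩

end GenericLines

section Conclusion

variable {K : Type*} [Field K] {v : Fin 6 → Fin 2 → Fin 4 → K}

theorem IsToddMap.aeval_kernelPlane_eq_zero {H : Fin 2 → Fin 2 → MvPolynomial (Fin 4) K}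
    {T : Fin 4 → MvPolynomial (Fin 4) K} {E : Fin 6 → MvPolynomial (Fin 4) K}
    (h : IsToddMap (constLine v) (genericPlane v) (toddCoords v H) T E)
    {F : MvPolynomial (Fin 4) K} {a : ℕ} (hF : F.IsHomogeneous a) (hT : aeval T F = 0) :
    aeval (kernelPlane (constLine v) X) F = 0 := by
  have hpt (e : Fin 2 × Fin 2) : linePt (constLine v (otherLine e)) (toddCoords v H (otherLine e)) =
      otherPt (constLine v) X e := by
    rw [toddCoords_otherLine, otherPt]
  have hcross : cross3 (linePt (constLine v 2) (toddCoords v H 2))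
      (linePt (constLine v 3) (toddCoords v H 3)) (linePt (constLine v 4) (toddCoords v H 4)) =
      kernelPlane (constLine v) X := by
    rw [kernelPlane, ← hpt, ← hpt, ← hpt]
    rfl
  have hplane := h.meetBracket_smul (finRotate 6 ^ 2)
  rw [map_pow, Int.units_sq, one_smul, ← one_smul (MvPolynomial (Fin 4) K) (cross3 _ _ _)]
    at hplane
  rw [← hcross]
  exact aeval_eq_zero_of_smul_eq_smul hF one_ne_zero hplane hT

theorem GeneralPosition.linearIndependent (hv : GeneralPosition v) (i : Fin 6) :
    LinearIndependent K ![v i 0, v i 1] := by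
  obtain ⟨j, hj⟩ := exists_ne i
  refine LinearIndependent.pair_iff.2 fun s t hst => ?_
  have hzero := (eq_zero_of_linePt_add_linePt_eq_zero (hv.lineBracket_ne_zero i j hj.symm)
    (s := ![s, t]) (t := 0) (by rw [linePt_zero, add_zero]; exact hst)).1
  exact ⟨congrFun hzero 0, congrFun hzero 1⟩

theorem GeneralPosition.span_inf_span_eq_bot (hv : GeneralPosition v) {i j : Fin 6} (hij : i ≠ j) :
    Submodule.span K {v i 0, v i 1} ⊓ Submodule.span K {v j 0, v j 1} = ⊥ := by
  refine (Submodule.eq_bot_iff _).2 fun x ⟨hi, hj⟩ => ?_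
  obtain ⟨s, t, rfl⟩ := Submodule.mem_span_pair.1 hi
  obtain ⟨p, q, hpq⟩ := Submodule.mem_span_pair.1 hj
  have hzero := (eq_zero_of_linePt_add_linePt_eq_zero (hv.lineBracket_ne_zero i j hij)
    (s := ![s, t]) (t := -![p, q]) (by
      change s • v i 0 + t • v i 1 + (-p • v j 0 + -q • v j 1) = 0
      rw [← hpq]; module)).1
  rw [show s = 0 from congrFun hzero 0, show t = 0 from congrFun hzero 1, zero_smul, zero_smul,
    add_zero]

theorem GeneralPosition.choose_le_finrank_linSys {v : Fin 6 → Fin 2 → C4} (hv : GeneralPosition v)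
    {a : ℕ} (ha : 4 ≤ a) (hdom : ∀ F : R3, F.IsHomogeneous a →
      aeval (kernelPlane (constLine v) X) F = 0 → F = 0) :
    (a + 3).choose 3 - 6 * (a + 1) ≤ Module.finrank ℂ
      (linSys (19 * a - 72) (fun i : Fin 6 => Submodule.span ℂ {v i 0, v i 1})
        fun _ => 5 * a - 19) := by
  obtain ⟨H, ht⟩ := hv.exists_toddCoordinates
  obtain ⟨T, E, h⟩ := hv.exists_isToddMap ht.relation
  exact ht.choose_le_finrank_linSys hv h ha fun F hF hT =>
    hdom F hF (h.aeval_kernelPlane_eq_zero hF hT)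

end Conclusion

end ToddTransformation

open ToddTransformation

/-- For every `a ≥ 4` and six general lines in `P^3`, the system of degree
`19a - 72` forms with multiplicity `5a - 19` along each of the six lines has
dimension at least `binom(a+3,3) - 6(a+1)` (obtained by applying the Todd
transformation to the nonspecial system of degree-`a` surfaces through the six
lines; for large `a` this yields unexpected systems). -/
theorem stmt_19 (a : ℕ) (ha : 4 ≤ a) :
    GeneralLines 6 (fun L =>
      (a + 3).choose 3 - 6 * (a + 1) ≤
        Module.finrank ℂ
          ↥(linSys (19 * a - 72) L (fun _ => 5 * a - 19))) := by
  obtain ⟨P, hP, hdom⟩ := exists_ne_zero_forall_eq_zero_of_aeval_kernelPlane_eq_zero (K := ℂ) a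
  refine ⟨generalPositionForm (genericLines ℂ) * P,
    mul_ne_zero generalPositionForm_genericLines_ne_zero hP, fun v h => ?_⟩
  obtain ⟨hpos, hPv⟩ := mul_ne_zero_iff.1 ((map_mul (eval (lineCoords v)) _ _).symm.trans_ne h)
  rw [eval_generalPositionForm_genericLines] at hpos
  have hv := GeneralPosition.of_generalPositionForm_ne_zero hpos
  exact ⟨hv.linearIndependent, fun i j => hv.span_inf_span_eq_bot,
    hv.choose_le_finrank_linSys ha (hdom v hPv)⟩
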